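/- (Posterior concentration for nonparametric Gaussian regression.) Let a ≥ 1, d ∈ ℕ, β > 0, K ≥ 1, F ≥ 1, σ_0² > 0 and ν ∈ [0,1). Suppose (X_i, Y_i), i = 1, …, n, are i.i.d. with X ∼ P_X supported on X ⊆ [−a,a]^d and Y | X ∼ N(f_0(X), σ_0²), where f_0 ∈ H_d^β(K) and ‖f_0‖_∞ ≤ F. Consider the Bayesian model Y_i ∼ N(T_F ∘ f_{θ,ρν}(X_i), σ²) where f_{θ,ρν} is a Leaky-ReLU DNN with architecture (L_n, (d, r_n, …, r_n, 1)), L_n = ⌈C_L log n⌉ and r_n = ⌈C_r n^{d/(2(2β+d))}⌉ for the constants C_L, C_r of the bounded-parameter approximation theorem, with independent priors Π_θ on ℝ^{T_n} satisfying Assumption 1 and Π_{σ²} satisfying Assumption 2. Then for ε_n = n^{−β/(2β+d)} (log n)^γ with γ > 2 and any sequence M_n → ∞, the posterior mass Π_n( (θ, σ²) : ‖T_F ∘ f_{θ,ρν} − f_0‖_{2,P_X} + |σ² − σ_0²| > M_n ε_n | D^{(n)} ) converges to 0 in probability under the law P_0^n of the training data. -/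

import Mathlib

open MeasureTheory ProbabilityTheory Filter
open scoped ENNReal NNReal

noncomputable section

/-- Leaky-ReLU activation. -/
def lrelu (ν x : ℝ) : ℝ := max x (ν * x)

/-- A fully connected Leaky-ReLU network with input dimension `d` and hidden width `r`:
a first affine layer `ℝ^d → ℝ^r`, a list of inner affine layers `ℝ^r → ℝ^r`, and an
output affine layer `ℝ^r → ℝ`.  Each affine layer except the last is followed by the
componentwise Leaky-ReLU activation.  The number of hidden layers (the depth) is
`hid.length + 1`. -/
structure LNet (d r : ℕ) where
  W0 : Fin r → Fin d → ℝ
  b0 : Fin r → ℝ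
  hid : List ((Fin r → Fin r → ℝ) × (Fin r → ℝ))
  Wout : Fin r → ℝ
  bout : ℝ

/-- Evaluation of a Leaky-ReLU network. -/
def LNet.eval (ν : ℝ) {d r : ℕ} (net : LNet d r) (x : Fin d → ℝ) : ℝ :=
  let h := net.hid.foldl
    (fun (h : Fin r → ℝ) p => fun i => lrelu ν ((∑ j, p.1 i j * h j) + p.2 i))
    (fun i => lrelu ν ((∑ j, net.W0 i j * x j) + net.b0 i))
  (∑ i, net.Wout i * h i) + net.bout

/-- All weights and biases of the network are bounded by `B` in absolute value. -/
def LNet.bounded {d r : ℕ} (net : LNet d r) (B : ℝ) : Prop :=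
  (∀ i j, |net.W0 i j| ≤ B) ∧ (∀ i, |net.b0 i| ≤ B) ∧
  (∀ p ∈ net.hid, (∀ i j, |p.1 i j| ≤ B) ∧ (∀ i, |p.2 i| ≤ B)) ∧
  (∀ i, |net.Wout i| ≤ B) ∧ |net.bout| ≤ B

/-- Membership in the class `F_{ρν}^{DNN}(L, r, B)` of Leaky-ReLU networks with
architecture `(L, (d, r, …, r, 1))` and all parameters bounded by `B`. -/
def memDNN (ν : ℝ) (d L r : ℕ) (B : ℝ) (f : (Fin d → ℝ) → ℝ) : Prop :=
  ∃ net : LNet d r, net.hid.length + 1 = L ∧ net.bounded B ∧ ∀ x, f x = net.eval ν x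

/-- The cube `[−a,a]^d`. -/
def cube (a : ℝ) (d : ℕ) : Set (Fin d → ℝ) := {x | ∀ i, x i ∈ Set.Icc (-a) a}

/-- Partial derivative of `f : ℝ^d → ℝ` in coordinate `i`. -/
def pder {d : ℕ} (i : Fin d) (f : (Fin d → ℝ) → ℝ) : (Fin d → ℝ) → ℝ :=
  fun x => fderiv ℝ f x (Pi.single i 1)

/-- Multi-index partial derivative `∂^α f = ∂_1^{α 1} ⋯ ∂_d^{α d} f`. -/
def pderm {d : ℕ} (α : Fin d → ℕ) (f : (Fin d → ℝ) → ℝ) : (Fin d → ℝ) → ℝ :=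
  (List.finRange d).foldr (fun i g => (pder i)^[α i] g) f

/-- Membership in the Hölder ball `H_d^β(K)` on `[−a,a]^d`: `f` is `⌊β⌋`-times
continuously differentiable and there are bounds `S α` on `|∂^α f|` over the cube for all
multi-indices with `|α|₁ < β`, and Hölder constants `H α` for `∂^α f` (with exponent
`β − ⌊β⌋`, with respect to the sup-norm) for all multi-indices with `|α|₁ = ⌊β⌋`, whose
total sum is at most `K`. -/
def memHolder (a : ℝ) (d : ℕ) (β K : ℝ) (f : (Fin d → ℝ) → ℝ) : Prop :=
  ContDiff ℝ (⌊β⌋₊ : ℕ∞) f ∧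
  ∃ S H : (Fin d → Fin (⌊β⌋₊ + 1)) → ℝ,
    (∀ α : Fin d → Fin (⌊β⌋₊ + 1), ((∑ i, (α i : ℕ) : ℕ) : ℝ) < β →
      ∀ x ∈ cube a d, |pderm (fun i => (α i : ℕ)) f x| ≤ S α) ∧
    (∀ α : Fin d → Fin (⌊β⌋₊ + 1), (∑ i, (α i : ℕ)) = ⌊β⌋₊ →
      ∀ x₁ ∈ cube a d, ∀ x₂ ∈ cube a d, x₁ ≠ x₂ →
        |pderm (fun i => (α i : ℕ)) f x₁ - pderm (fun i => (α i : ℕ)) f x₂| ≤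
          H α * ‖x₁ - x₂‖ ^ (β - (⌊β⌋₊ : ℝ))) ∧
    (∑ α ∈ Finset.univ.filter
        (fun α : Fin d → Fin (⌊β⌋₊ + 1) => ((∑ i, (α i : ℕ) : ℕ) : ℝ) < β), S α) +
      (∑ α ∈ Finset.univ.filter
        (fun α : Fin d → Fin (⌊β⌋₊ + 1) => (∑ i, (α i : ℕ)) = ⌊β⌋₊), H α) ≤ K

/-- Index type for the parameters `θ` of a DNN with architecture `(L, (d, r, …, r, 1))`:
first-layer weights and biases, the `L−1` inner-layer weight matrices and bias vectors,
and the output-layer weights and bias.  Its cardinality is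
`T = (d+1)r + (L−1)(r+1)r + (r+1)`. -/
abbrev ParamIdx (d r L : ℕ) : Type :=
  (Fin r × Fin d) ⊕ Fin r ⊕ (Fin (L - 1) × Fin r × Fin r) ⊕ (Fin (L - 1) × Fin r) ⊕
    Fin r ⊕ Unit

/-- The Leaky-ReLU network with architecture `(L, (d, r, …, r, 1))` determined by the
parameter vector `θ`. -/
def netOfParams (ν : ℝ) (d r L : ℕ) (θ : ParamIdx d r L → ℝ) (x : Fin d → ℝ) : ℝ :=
  let h0 : Fin r → ℝ := fun i =>
    lrelu ν ((∑ j, θ (Sum.inl (i, j)) * x j) + θ (Sum.inr (Sum.inl i)))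
  let h : Fin r → ℝ := (List.finRange (L - 1)).foldl
    (fun h l => fun i =>
      lrelu ν ((∑ j, θ (Sum.inr (Sum.inr (Sum.inl (l, i, j)))) * h j) +
        θ (Sum.inr (Sum.inr (Sum.inr (Sum.inl (l, i))))))) h0
  (∑ i, θ (Sum.inr (Sum.inr (Sum.inr (Sum.inr (Sum.inl i))))) * h i) +
    θ (Sum.inr (Sum.inr (Sum.inr (Sum.inr (Sum.inr ())))))

/-- Truncation operator `T_F(x) = min(max(x, −F), F)`. -/
def trunc (F x : ℝ) : ℝ := min (max x (-F)) F

/-- The Gaussian density with mean `m` and variance `s`, evaluated at `y`. -/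
def gpdf (m s y : ℝ) : ℝ :=
  (Real.sqrt (2 * Real.pi * s))⁻¹ * Real.exp (-((y - m) ^ 2) / (2 * s))

/-- The joint law of `(X, Y)` where `X ∼ P_X` and `Y | X ∼ N(f₀(X), v)`. -/
def gaussRegLaw (d : ℕ) (PX : Measure (Fin d → ℝ)) (f₀ : (Fin d → ℝ) → ℝ) (v : ℝ≥0) :
    Measure ((Fin d → ℝ) × ℝ) :=
  PX.bind fun x => (gaussianReal (f₀ x) v).map fun y => (x, y)

/-- Posterior mass of the set `A` under prior `prior` and likelihood `lik`. -/
def postMass {α : Type*} [MeasurableSpace α] (prior : Measure α) (lik : α → ℝ)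
    (A : Set α) : ℝ≥0∞ :=
  (∫⁻ p in A, ENNReal.ofReal (lik p) ∂prior) / ∫⁻ p, ENNReal.ofReal (lik p) ∂prior

/-- The `L²(P_X)` distance `‖g − h‖_{2,P_X}`. -/
def l2dist (d : ℕ) (PX : Measure (Fin d → ℝ)) (g h : (Fin d → ℝ) → ℝ) : ℝ :=
  Real.sqrt (∫ x, (g x - h x) ^ 2 ∂PX)

/-- The Gaussian regression likelihood of `(θ, σ²)` given the data `D`. -/
def gaussLik (ν F : ℝ) (d r L : ℕ) {n : ℕ} (D : Fin n → (Fin d → ℝ) × ℝ)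
    (p : (ParamIdx d r L → ℝ) × ℝ) : ℝ :=
  ∏ i, gpdf (trunc F (netOfParams ν d r L p.1 (D i).1)) p.2 (D i).2

/-- The depth `L_n = ⌈C_L log n⌉` of the Bayesian model. -/
def Ldepth (CL : ℝ) (n : ℕ) : ℕ := ⌈CL * Real.log n⌉₊

/-- The width `r_n = ⌈C_r n^{d/(2(2β+d))}⌉` of the Bayesian model. -/
def rwidth (Cr β : ℝ) (d n : ℕ) : ℕ :=
  ⌈Cr * (n : ℝ) ^ ((d : ℝ) / (2 * (2 * β + d)))⌉₊

/-!
For fixed inputs, the outputs of a Leaky-ReLU network are piecewise polynomial functions of its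
parameters. Warren's bound on the number of sign patterns of polynomials therefore limits the number
of parameters whose truncated networks are pairwise separated at finitely many points, and random
points turn this into a bound on the `L²(P_X)` covering numbers of all truncated networks,
`exp (C n^{d/(2β+d)} (log n)³)`, although the prior does not restrict the size of the parameters.
Consequently there are tests of the truth against all parameters at distance more than `ε` with
errors `exp (-c n ε²)`. On the other hand, networks are Lipschitz in their parameters, and a network
that approximates `f₀` at the minimax rate can be padded to the architecture of the model; around
it, the lower bounds on the prior densities give mass at least `exp (-C n^{d/(2β+d)} (log n)³)` to
an `n^{-β/(2β+d)}`-neighbourhood of the truth. Dividing the two bounds, the posterior concentrates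
at every rate `ε` with `n ε² ≫ n^{d/(2β+d)} (log n)³`.
-/

/-! ### Sign patterns of polynomials -/

section SignPatterns

open MvPolynomial

variable {σ ι S 𝕜 : Type*} [Field 𝕜]

lemma finrank_restrictDegree [Fintype σ] (R : ℕ) :
    Module.finrank 𝕜 (restrictDegree σ 𝕜 R) = (R + 1) ^ Fintype.card σ := by
  let e : {f : σ →₀ ℕ | ∀ j, f j ≤ R} ≃ (σ → Fin (R + 1)) :=
    { toFun := fun f j => ⟨f.1 j, Nat.lt_succ_of_le (f.2 j)⟩
      invFun := fun b => ⟨Finsupp.equivFunOnFinite.symm fun j => b j, fun j => (b j).is_le⟩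
      left_inv := fun f => by ext; simp
      right_inv := fun b => by ext; simp }
  refine (Module.finrank_eq_nat_card_basis (basisRestrictSupport 𝕜 _)).trans ?_
  simp [Nat.card_congr e, Nat.card_fun]

lemma linearIndependent_of_eval_eq_zero {I : Type*} (x : I → σ → 𝕜)
    (φ : I → MvPolynomial σ 𝕜) (hdiag : ∀ i, eval (x i) (φ i) ≠ 0)
    (hoff : ∀ i j, i ≠ j → eval (x i) (φ j) = 0) : LinearIndependent 𝕜 φ := by
  refine linearIndependent_iff'.2 fun s c hc i hi => ?_
  have h := congrArg (eval (x i)) hc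
  simp only [map_sum, smul_eval, map_zero] at h
  rw [Finset.sum_eq_single_of_mem i hi fun j _ hj => by rw [hoff i j hj.symm, mul_zero]] at h
  exact (mul_eq_zero.1 h).resolve_right (hdiag i)

lemma card_le_of_eval_eq_zero {I : Type*} [Fintype σ] [Fintype I] (R : ℕ) (x : I → σ → 𝕜)
    (φ : I → MvPolynomial σ 𝕜) (hdeg : ∀ i, (φ i).totalDegree ≤ R)
    (hdiag : ∀ i, eval (x i) (φ i) ≠ 0) (hoff : ∀ i j, i ≠ j → eval (x i) (φ j) = 0) :
    Fintype.card I ≤ (R + 1) ^ Fintype.card σ := by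
  have hmem : ∀ i, φ i ∈ restrictDegree σ 𝕜 R := fun i =>
    restrictTotalDegree_le_restrictDegree _ _ R ((mem_restrictTotalDegree _ _ _).2 (hdeg i))
  have hli : LinearIndependent 𝕜 fun i => (⟨φ i, hmem i⟩ : restrictDegree σ 𝕜 R) :=
    .of_comp (restrictDegree σ 𝕜 R).subtype (linearIndependent_of_eval_eq_zero x φ hdiag hoff)
  exact hli.fintype_card_le_finrank.trans (finrank_restrictDegree R).le

lemma exists_totalDegree_le_eval_eq_zero (Z : Finset (σ → 𝕜)) (y : σ → 𝕜) (hy : y ∉ Z) :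
    ∃ φ : MvPolynomial σ 𝕜, φ.totalDegree ≤ Z.card ∧ eval y φ ≠ 0 ∧ ∀ z ∈ Z, eval z φ = 0 := by
  classical
  have hlin : ∀ z ∈ Z, ∃ ℓ : MvPolynomial σ 𝕜,
      ℓ.totalDegree ≤ 1 ∧ eval y ℓ ≠ 0 ∧ eval z ℓ = 0 := fun z hz => by
    obtain ⟨j, hj⟩ := Function.ne_iff.1 (show y ≠ z from fun h => hy (h ▸ hz))
    refine ⟨X j - C (z j), (totalDegree_sub_C_le _ _).trans (by simp), ?_, by simp⟩
    simpa [sub_eq_zero] using hj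
  choose! ℓ hdeg hℓy hℓz using hlin
  refine ⟨∏ z ∈ Z, ℓ z, ?_, ?_, fun z hz => ?_⟩
  · exact (totalDegree_finsetProd _ _).trans (by simpa using Finset.sum_le_card_nsmul _ _ 1 hdeg)
  · rw [map_prod]
    exact Finset.prod_ne_zero_iff.2 hℓy
  · rw [map_prod]
    exact Finset.prod_eq_zero hz (hℓz z hz)

/-- The homogenization `∏ᵢ ∏_{c ∈ A, c ≠ vᵢ} (Hᵢ - c G)` of the Lagrange interpolation polynomial
at the point `v` of the grid `A × ⋯ × A`, composed with the rational map `H / G`. -/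
def gridLagrange [Fintype σ] [DecidableEq 𝕜] (A : Finset 𝕜) (G : MvPolynomial σ 𝕜)
    (H : σ → MvPolynomial σ 𝕜) (v : σ → 𝕜) : MvPolynomial σ 𝕜 :=
  ∏ i, ∏ c ∈ A.erase (v i), (H i - C c * G)

lemma totalDegree_gridLagrange_le [Fintype σ] [DecidableEq 𝕜] {A : Finset 𝕜} {E : ℕ}
    {G : MvPolynomial σ 𝕜} {H : σ → MvPolynomial σ 𝕜} (hG : G.totalDegree ≤ E)
    (hH : ∀ i, (H i).totalDegree ≤ E) {v : σ → 𝕜} (hv : ∀ i, v i ∈ A) :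
    (gridLagrange A G H v).totalDegree ≤ Fintype.card σ * ((A.card - 1) * E) := by
  have hfactor : ∀ i c, (H i - C c * G).totalDegree ≤ E := fun i c =>
    (totalDegree_sub _ _).trans (max_le (hH i) ((totalDegree_mul _ _).trans (by simpa using hG)))
  have hrow : ∀ i, (∏ c ∈ A.erase (v i), (H i - C c * G)).totalDegree ≤ (A.card - 1) * E :=
    fun i => (totalDegree_finsetProd _ _).trans <| by
      simpa [Finset.card_erase_of_mem (hv i)] using
        Finset.sum_le_card_nsmul (A.erase (v i)) _ E fun c _ => hfactor i c
  exact (totalDegree_finsetProd _ _).trans <| by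
    simpa using Finset.sum_le_card_nsmul Finset.univ _ _ fun i _ => hrow i

lemma eval_gridLagrange_ne_zero_iff [Fintype σ] [DecidableEq 𝕜] {A : Finset 𝕜}
    {G : MvPolynomial σ 𝕜} {H : σ → MvPolynomial σ 𝕜} {v w x : σ → 𝕜} (hw : ∀ i, w i ∈ A)
    (hG : eval x G ≠ 0) (hH : ∀ i, eval x (H i) = w i * eval x G) :
    eval x (gridLagrange A G H v) ≠ 0 ↔ w = v := by
  have hfactor : ∀ i c, eval x (H i - C c * G) = (w i - c) * eval x G := fun i c => by
    simp [hH, sub_mul]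
  simp only [gridLagrange, map_prod, hfactor, Finset.prod_ne_zero_iff, mul_ne_zero_iff, sub_ne_zero,
    Finset.mem_erase, funext_iff]
  refine ⟨fun h i => ?_, ?_⟩
  · by_contra hne
    exact (h i (Finset.mem_univ i) (w i) ⟨hne, hw i⟩).1 rfl
  · rintro h i - c ⟨hc, -⟩
    exact ⟨h i ▸ hc.symm, hG⟩

lemma exists_totalDegree_le_eval_eq_zero_of_injective [Fintype S] {x : S → σ → 𝕜}
    (hx : Function.Injective x) (s : S) :
    ∃ φ : MvPolynomial σ 𝕜, φ.totalDegree ≤ Fintype.card S - 1 ∧ eval (x s) φ ≠ 0 ∧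
      ∀ s' ≠ s, eval (x s') φ = 0 := by
  classical
  obtain ⟨φ, hdeg, hne, hzero⟩ := exists_totalDegree_le_eval_eq_zero
    ((Finset.univ.erase s).image x) (x s) (by
      simp only [Finset.mem_image, Finset.mem_erase, not_exists, not_and]
      exact fun s' hs' h => hs'.1 (hx h))
  refine ⟨φ, hdeg.trans (Finset.card_image_le.trans_eq ?_), hne, fun s' hs' => hzero _ ?_⟩
  · rw [Finset.card_erase_of_mem (Finset.mem_univ s), Finset.card_univ]
  · exact Finset.mem_image_of_mem _ (Finset.mem_erase.2 ⟨hs', Finset.mem_univ s'⟩)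

/- Take a grid `A × ⋯ × A` with `#A = #S =: B` and `T := #σ`: the `B * B ^ T` points of the fibres
over the grid carry a dual family of polynomials of degree less than `B * (T * E + 1)`, whence
`B * B ^ T ≤ (B * (T * E + 1)) ^ T`. -/
lemma card_fibre_le [Infinite 𝕜] [Fintype σ] [Fintype S] {E : ℕ}
    {G : MvPolynomial σ 𝕜} {H : σ → MvPolynomial σ 𝕜} (hG : G.totalDegree ≤ E)
    (hH : ∀ i, (H i).totalDegree ≤ E)
    (hfibre : ∀ v : σ → 𝕜, ∃ x : S → σ → 𝕜, Function.Injective x ∧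
      ∀ s, eval (x s) G ≠ 0 ∧ ∀ i, eval (x s) (H i) = v i * eval (x s) G) :
    Fintype.card S ≤ (Fintype.card σ * E + 1) ^ Fintype.card σ := by
  classical
  rcases isEmpty_or_nonempty S with hS | hS
  · simp
  set B := Fintype.card S
  set T := Fintype.card σ
  have hB : 0 < B := Fintype.card_pos
  obtain ⟨A, hA⟩ := Infinite.exists_subset_card_eq 𝕜 B
  choose x hinj hx using hfibre
  let pt : S × (σ → A) → σ → 𝕜 := fun q => x (fun i => q.2 i) q.1
  choose φ hφdeg hφdiag hφoff using fun q : S × (σ → A) =>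
    exists_totalDegree_le_eval_eq_zero_of_injective (hinj fun i => q.2 i) q.1
  have hgrid : ∀ q q' : S × (σ → A),
      eval (pt q) (gridLagrange A G H fun i => q'.2 i) ≠ 0 ↔ q.2 = q'.2 := fun q q' => by
    rw [eval_gridLagrange_ne_zero_iff (fun i => (q.2 i).2) (hx _ _).1 (hx _ _).2]
    simp only [funext_iff, Subtype.ext_iff]
  have hcard := card_le_of_eval_eq_zero (T * ((B - 1) * E) + (B - 1)) pt
    (fun q => gridLagrange A G H (fun i => q.2 i) * φ q)
    (fun q => (totalDegree_mul _ _).trans <| add_le_add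
      (hA ▸ totalDegree_gridLagrange_le hG hH fun i => (q.2 i).2) (hφdeg q))
    (fun q => by
      rw [map_mul]
      exact mul_ne_zero ((hgrid q q).2 rfl) (hφdiag q))
    (fun q q' hne => by
      rw [map_mul, mul_eq_zero]
      by_cases hb : q.2 = q'.2
      · refine .inr ?_
        have := hφoff q' q.1 fun hs => hne (Prod.ext hs hb)
        rwa [← hb] at this
      · exact .inl (not_not.1 fun h => hb ((hgrid q q').1 h)))
  have hdeg : T * ((B - 1) * E) + (B - 1) + 1 ≤ B * (T * E + 1) := by
    obtain ⟨B', hB'⟩ := Nat.exists_eq_succ_of_ne_zero hB.ne'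
    rw [hB', Nat.succ_sub_one]
    nlinarith [Nat.zero_le (T * E)]
  have hpow : B ^ T * B ≤ B ^ T * (T * E + 1) ^ T := calc
    B ^ T * B = Fintype.card (S × (σ → A)) := by simp [hA, B, T, mul_comm]
    _ ≤ (T * ((B - 1) * E) + (B - 1) + 1) ^ T := hcard
    _ ≤ (B * (T * E + 1)) ^ T := Nat.pow_le_pow_left hdeg T
    _ = B ^ T * (T * E + 1) ^ T := mul_pow _ _ _
  exact Nat.le_of_mul_le_mul_left hpow (by positivity)

lemma totalDegree_pderiv_le (i : σ) (p : MvPolynomial σ 𝕜) :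
    (pderiv i p).totalDegree ≤ p.totalDegree := by
  refine Finset.sup_le fun m hm => ?_
  have hcoeff : coeff (m + Finsupp.single i 1) p ≠ 0 := fun h =>
    mem_support_iff.1 hm (by rw [coeff_pderiv, h, zero_mul])
  refine le_trans ?_ (le_totalDegree (mem_support_iff.2 hcoeff))
  rw [Finsupp.sum_add_index' (by simp) (by simp)]
  exact Nat.le_add_right _ _

lemma hasDerivAt_eval_update {𝕜 : Type*} [NontriviallyNormedField 𝕜] [DecidableEq σ]
    (x : σ → 𝕜) (i : σ) (p : MvPolynomial σ 𝕜) (t : 𝕜) :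
    HasDerivAt (fun t => eval (Function.update x i t) p)
      (eval (Function.update x i t) (pderiv i p)) t := by
  induction p using MvPolynomial.induction_on with
  | C a => simpa using hasDerivAt_const t a
  | add p q hp hq => simpa using hp.fun_add hq
  | mul_X p j hp =>
    have hX : HasDerivAt (fun t => Function.update x i t j)
        (eval (Function.update x i t) (pderiv i (X j))) t := by
      rcases eq_or_ne j i with rfl | h
      · simpa using hasDerivAt_id' t
      · simpa [h, pderiv_X_of_ne h] using hasDerivAt_const t (x j)
    simpa [pderiv_mul, add_comm, mul_comm] using hp.fun_mul hX

/- Maximize `|∏ i, p i| * exp (-∑ j, v j * x j)` over the closed cell of `z`: the maximizer is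
interior because the product vanishes on the boundary, and it is a critical point. -/
lemma exists_pderiv_prod_eq_mul [Finite σ] [Fintype ι] (p : ι → MvPolynomial σ ℝ) (z : σ → ℝ)
    (hz : ∀ i, eval z (p i) ≠ 0)
    (hcell : IsCompact {x | ∀ i, 0 ≤ eval z (p i) * eval x (p i)}) (v : σ → ℝ) :
    ∃ x, (∀ i, 0 < eval z (p i) * eval x (p i)) ∧
      ∀ j, eval x (pderiv j (∏ i, p i)) = v j * eval x (∏ i, p i) := by
  classical
  have := Fintype.ofFinite σ
  set G := ∏ i, p i
  let h : (σ → ℝ) → ℝ := fun x => eval z G * eval x G * Real.exp (-∑ j, v j * x j)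
  have hprod : ∀ x, eval z G * eval x G = ∏ i, eval z (p i) * eval x (p i) := fun x => by
    simp [G, map_prod, Finset.prod_mul_distrib]
  have hh : Continuous h := by
    have := continuous_eval G
    fun_prop
  obtain ⟨x, hx, hmax⟩ := hcell.exists_isMaxOn ⟨z, fun i => mul_self_nonneg _⟩ hh.continuousOn
  have hGz : eval z G ≠ 0 := by
    simpa [G, map_prod, Finset.prod_ne_zero_iff] using hz
  have hhx : 0 < h x :=
    (mul_pos (mul_self_pos.2 hGz) (Real.exp_pos _)).trans_le (hmax fun i => mul_self_nonneg _)
  have hpos : ∀ i, 0 < eval z (p i) * eval x (p i) := by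
    have hne : ∏ i, eval z (p i) * eval x (p i) ≠ 0 := fun h0 => by
      simp [h, hprod, h0] at hhx
    exact fun i => (hx i).lt_of_ne' (Finset.prod_ne_zero_iff.1 hne i (Finset.mem_univ i))
  refine ⟨x, hpos, fun j => ?_⟩
  have hinterior : ∀ᶠ y in nhds x, ∀ i, 0 ≤ eval z (p i) * eval y (p i) :=
    eventually_all.2 fun i => ((continuous_const.mul (continuous_eval (p i))).tendsto x
      |>.eventually_const_lt (hpos i)).mono fun y hy => hy.le
  have hline : Tendsto (Function.update x j) (nhds (x j)) (nhds x) := by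
    have hupdate : Continuous (Function.update x j) := continuous_const.update j continuous_id
    simpa using hupdate.tendsto (x j)
  have hlocal : IsLocalMax (fun t => h (Function.update x j t)) (x j) :=
    (hline.eventually hinterior).mono fun t ht => by simpa using hmax ht
  have hexponent : HasDerivAt (fun t => -∑ i, v i * Function.update x j t i) (-v j) (x j) := by
    have := hasDerivAt_eval_update x j (∑ i, C (v i) * X i) (x j)
    simpa [pderiv_X, Pi.single_apply] using this.fun_neg
  have hderiv := hlocal.hasDerivAt_eq_zero
    (((hasDerivAt_eval_update x j G (x j)).const_mul (eval z G)).mul hexponent.exp)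
  simp only [Function.update_eq_self] at hderiv
  have hfactor : eval z G * Real.exp (-∑ j, v j * x j) *
      (eval x (pderiv j G) - v j * eval x G) = 0 := by linear_combination hderiv
  exact sub_eq_zero.1 <|
    (mul_eq_zero.1 hfactor).resolve_left (mul_ne_zero hGz (Real.exp_ne_zero _))

/-- Warren's bound on the number of sign patterns of `N` polynomials of degree at most `D` in `T`
real variables. -/
def warrenBound (T N D : ℕ) : ℕ := (T * (N * D + 2) + 1) ^ T

lemma warrenBound_mono {T N N' D D' : ℕ} (hN : N ≤ N') (hD : D ≤ D') :
    warrenBound T N D ≤ warrenBound T N' D' := by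
  unfold warrenBound
  gcongr

lemma isCompact_setOf_sum_sq_le [Fintype σ] (R : ℝ) :
    IsCompact {x : σ → ℝ | ∑ j, x j ^ 2 ≤ R} := by
  refine (isCompact_closedBall 0 √R).of_isClosed_subset
    (isClosed_le (by fun_prop) continuous_const) fun x hx => ?_
  rw [mem_closedBall_zero_iff, pi_norm_le_iff_of_nonneg (Real.sqrt_nonneg R)]
  exact fun j => Real.abs_le_sqrt <|
    (Finset.single_le_sum (f := fun j => x j ^ 2) (fun _ _ => sq_nonneg _)
      (Finset.mem_univ j)).trans hx

/- Adjoining the polynomial `R - ∑ j, x j ^ 2` makes all the cells compact. -/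
lemma card_le_warrenBound [Fintype σ] [Fintype ι] [Fintype S] {D : ℕ} (p : ι → MvPolynomial σ ℝ)
    (hD : ∀ i, (p i).totalDegree ≤ D) (z : S → σ → ℝ) (hne : ∀ s i, eval (z s) (p i) ≠ 0)
    (hsep : ∀ s s', s ≠ s' → ∃ i, eval (z s) (p i) * eval (z s') (p i) < 0) :
    Fintype.card S ≤ warrenBound (Fintype.card σ) (Fintype.card ι) D := by
  set R : ℝ := 1 + ∑ s, ∑ j, z s j ^ 2
  have hR : ∀ s, 0 < R - ∑ j, z s j ^ 2 := fun s => by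
    have := Finset.single_le_sum (f := fun s => ∑ j, z s j ^ 2)
      (fun _ _ => Finset.sum_nonneg fun _ _ => sq_nonneg _) (Finset.mem_univ s)
    linarith
  let b : MvPolynomial σ ℝ := C R - ∑ j, X j ^ 2
  have hb : ∀ x, eval x b = R - ∑ j, x j ^ 2 := fun x => by simp [b]
  let q : Option ι → MvPolynomial σ ℝ := fun i => i.elim b p
  have hdeg : (∏ i, q i).totalDegree ≤ Fintype.card ι * D + 2 := by
    rw [Fintype.prod_option, add_comm]
    refine (totalDegree_mul _ _).trans (add_le_add ?_ ?_)
    · refine (totalDegree_sub _ _).trans (max_le (by simp) ?_)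
      refine totalDegree_finsetSum_le fun j _ => (totalDegree_pow _ _).trans ?_
      simp
    · refine (totalDegree_finsetProd _ _).trans ?_
      simpa [q] using Finset.sum_le_card_nsmul Finset.univ _ D fun i _ => hD i
  refine card_fibre_le (S := S) hdeg (fun j => (totalDegree_pderiv_le j _).trans hdeg) fun v => ?_
  have hcritical : ∀ s, ∃ x, (∀ i, 0 < eval (z s) (q i) * eval x (q i)) ∧
      ∀ j, eval x (pderiv j (∏ i, q i)) = v j * eval x (∏ i, q i) := fun s => by
    refine exists_pderiv_prod_eq_mul q (z s) ?_ ?_ v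
    · rintro (_ | i)
      · exact (hb (z s) ▸ hR s).ne'
      · exact hne s i
    · refine (isCompact_setOf_sum_sq_le R).of_isClosed_subset ?_ fun x hx => ?_
      · simp only [Set.ofPred_forall]
        exact isClosed_iInter fun i =>
          isClosed_le continuous_const (continuous_const.mul (continuous_eval _))
      · have := nonneg_of_mul_nonneg_right (hx none) (hb (z s) ▸ hR s)
        exact sub_nonneg.1 (hb x ▸ this)
  choose x hsign hx using hcritical
  refine ⟨x, fun s s' hss => ?_, fun s => ⟨?_, hx s⟩⟩
  · by_contra hne'
    obtain ⟨i, hi⟩ := hsep s s' hne'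
    have hs : 0 < eval (z s) (p i) * eval (x s) (p i) := hsign s (some i)
    have hs' : 0 < eval (z s') (p i) * eval (x s) (p i) := hss ▸ hsign s' (some i)
    nlinarith [mul_pos hs hs', mul_nonneg (neg_nonneg.2 hi.le) (sq_nonneg (eval (x s) (p i)))]
  · rw [map_prod]
    exact Finset.prod_ne_zero_iff.2 fun i _ => right_ne_zero_of_mul (hsign s i).ne'

/- Shifting the polynomials by a small constant turns weak sign conditions into strict ones. -/
lemma card_range_nonneg_eval_le [Fintype σ] [Fintype ι] {D : ℕ} (p : ι → MvPolynomial σ ℝ)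
    (hD : ∀ i, (p i).totalDegree ≤ D) :
    Nat.card (Set.range fun (θ : σ → ℝ) i => 0 ≤ eval θ (p i)) ≤
      warrenBound (Fintype.card σ) (Fintype.card ι) D := by
  classical
  set S := Set.range fun (θ : σ → ℝ) i => 0 ≤ eval θ (p i)
  have := Fintype.ofFinite S
  choose z hz using fun s : S => s.2
  have hshift : ∀ᶠ τ in nhdsWithin (0 : ℝ) (Set.Ioi 0), ∀ s i,
      eval (z s) (p i) < 0 → eval (z s) (p i) + τ < 0 := by
    refine eventually_all.2 fun s => eventually_all.2 fun i => ?_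
    by_cases h : eval (z s) (p i) < 0
    · filter_upwards [Ioo_mem_nhdsGT (neg_pos.2 h)] with τ hτ _
      linarith [hτ.2]
    · exact .of_forall fun _ h' => absurd h' h
  obtain ⟨τ, hneg, hτ : 0 < τ⟩ := (hshift.and self_mem_nhdsWithin).exists
  have hpos : ∀ s i, 0 ≤ eval (z s) (p i) → 0 < eval (z s) (p i) + τ := fun s i h => by positivity
  rw [Nat.card_eq_fintype_card]
  refine card_le_warrenBound (fun i => p i + C τ) (fun i => ?_) z (fun s i => ?_)
    fun s s' hss => ?_
  · exact (totalDegree_add _ _).trans (max_le (hD i) (by simp))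
  · rw [map_add, eval_C]
    rcases lt_or_ge (eval (z s) (p i)) 0 with h | h
    exacts [(hneg s i h).ne, (hpos s i h).ne']
  · obtain ⟨i, hi⟩ := Function.ne_iff.1 fun h =>
      hss (Subtype.ext (((hz s).symm.trans h).trans (hz s')))
    simp only [map_add, eval_C]
    refine ⟨i, ?_⟩
    rcases lt_or_ge (eval (z s) (p i)) 0 with h | h <;>
      rcases lt_or_ge (eval (z s') (p i)) 0 with h' | h'
    · exact absurd (propext (iff_of_false h.not_ge h'.not_ge)) hi
    · exact mul_neg_of_neg_of_pos (hneg s i h) (hpos s' i h')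
    · exact mul_neg_of_pos_of_neg (hpos s i h) (hneg s' i h')
    · exact absurd (propext (iff_of_true h h')) hi

end SignPatterns

/-! ### Networks as piecewise polynomials in their parameters -/

section PiecewisePolynomial

open MvPolynomial

/-- The family `u` is piecewise polynomial: at every point it coincides with one of at most `K`
families of polynomials, all of total degree at most `D`. -/
def IsPiecewisePolynomial {σ J : Type*} (u : J → (σ → ℝ) → ℝ) (K D : ℕ) : Prop :=
  ∃ Ps : Finset (J → MvPolynomial σ ℝ), Ps.card ≤ K ∧ (∀ p ∈ Ps, ∀ j, (p j).totalDegree ≤ D) ∧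
    ∀ θ, ∃ p ∈ Ps, ∀ j, u j θ = eval θ (p j)

namespace IsPiecewisePolynomial

variable {σ J J' α : Type*} {u : J → (σ → ℝ) → ℝ} {K K' D D' : ℕ}

lemma mono (h : IsPiecewisePolynomial u K D) (hK : K ≤ K') (hD : D ≤ D') :
    IsPiecewisePolynomial u K' D' := by
  obtain ⟨Ps, hcard, hdeg, hu⟩ := h
  exact ⟨Ps, hcard.trans hK, fun p hp j => (hdeg p hp j).trans hD, hu⟩

lemma const (x : J → ℝ) : IsPiecewisePolynomial (fun j (_ : σ → ℝ) => x j) 1 0 :=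
  ⟨{fun j => C (x j)}, by simp, by simp, by simp⟩

lemma map (h : IsPiecewisePolynomial u K D) {v : J' → (σ → ℝ) → ℝ}
    (f : (J → MvPolynomial σ ℝ) → J' → MvPolynomial σ ℝ)
    (hf : ∀ p, (∀ j, (p j).totalDegree ≤ D) → ∀ j, (f p j).totalDegree ≤ D')
    (hv : ∀ p θ, (∀ j, u j θ = eval θ (p j)) → ∀ j, v j θ = eval θ (f p j)) :
    IsPiecewisePolynomial v K D' := by
  classical
  obtain ⟨Ps, hcard, hdeg, hu⟩ := h
  refine ⟨Ps.image f, Finset.card_image_le.trans hcard, ?_, fun θ => ?_⟩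
  · exact Finset.forall_mem_image.2 fun p hp => hf p (hdeg p hp)
  · obtain ⟨p, hp, hpu⟩ := hu θ
    exact ⟨f p, Finset.mem_image_of_mem f hp, hv p θ hpu⟩

lemma add_const (h : IsPiecewisePolynomial u K D) (g : J' → J) (t : J' → ℝ) :
    IsPiecewisePolynomial (fun j θ => u (g j) θ + t j) K D := by
  refine h.map (fun p j => p (g j) + C (t j)) (fun p hp j => ?_) fun p θ hp j => by simp [hp]
  exact (totalDegree_add _ _).trans (max_le (hp _) (by simp))

lemma affine [Fintype α] (h : IsPiecewisePolynomial u K D) (w : J' → α → σ) (b : J' → σ)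
    (g : J' → α → J) :
    IsPiecewisePolynomial (fun j θ => (∑ a, θ (w j a) * u (g j a) θ) + θ (b j)) K (D + 1) := by
  refine h.map (fun p j => (∑ a, X (w j a) * p (g j a)) + X (b j)) (fun p hp j => ?_)
    fun p θ hp j => by simp [hp]
  refine (totalDegree_add _ _).trans (max_le (totalDegree_finsetSum_le fun a _ => ?_) (by simp))
  refine (totalDegree_mul _ _).trans ?_
  rw [totalDegree_X, add_comm]
  exact Nat.add_le_add_right (hp _) 1

lemma card_range_nonneg_le [Fintype σ] [Fintype J] (h : IsPiecewisePolynomial u K D) :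
    Nat.card (Set.range fun θ j => 0 ≤ u j θ) ≤
      K * warrenBound (Fintype.card σ) (Fintype.card J) D := by
  classical
  obtain ⟨Ps, hcard, hdeg, hu⟩ := h
  have hsub : (Set.range fun θ j => 0 ≤ u j θ) ⊆
      (Ps.biUnion fun p => (Set.range fun θ j => 0 ≤ eval θ (p j)).toFinite.toFinset :) := by
    rintro _ ⟨θ, rfl⟩
    obtain ⟨p, hp, hpu⟩ := hu θ
    simp only [Finset.coe_biUnion, Set.Finite.coe_toFinset, Set.mem_iUnion]
    exact ⟨p, hp, θ, by simp [hpu]⟩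
  refine (Set.ncard_le_ncard hsub (Finset.finite_toSet _)).trans ?_
  rw [Set.ncard_coe_finset]
  refine (Finset.card_biUnion_le_card_mul _ _ _ fun p hp => ?_).trans
    (Nat.mul_le_mul_right _ hcard)
  rw [← Set.ncard_eq_toFinset_card]
  exact card_range_nonneg_eval_le p (hdeg p hp)

/- On each piece the sign pattern decides which branch of the activation is active. -/
lemma leakyReLU [Fintype σ] [Fintype J] (h : IsPiecewisePolynomial u K D) {ν : ℝ} (hν : ν ≤ 1) :
    IsPiecewisePolynomial (fun j θ => lrelu ν (u j θ))
      (K * warrenBound (Fintype.card σ) (Fintype.card J) D) D := by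
  classical
  obtain ⟨Ps, hcard, hdeg, hu⟩ := h
  let branch : (J → MvPolynomial σ ℝ) → (J → Prop) → J → MvPolynomial σ ℝ :=
    fun p s j => if s j then p j else C ν * p j
  let signs : (J → MvPolynomial σ ℝ) → Finset (J → Prop) :=
    fun p => (Set.range fun θ j => 0 ≤ eval θ (p j)).toFinite.toFinset
  refine ⟨Ps.biUnion fun p => (signs p).image (branch p), ?_, ?_, fun θ => ?_⟩
  · refine (Finset.card_biUnion_le_card_mul _ _ _ fun p hp => ?_).trans
      (Nat.mul_le_mul_right _ hcard)
    refine Finset.card_image_le.trans ?_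
    rw [← Set.ncard_eq_toFinset_card]
    exact card_range_nonneg_eval_le p (hdeg p hp)
  · simp only [Finset.mem_biUnion, Finset.mem_image]
    rintro _ ⟨p, hp, s, -, rfl⟩ j
    by_cases hs : s j
    · simpa [branch, hs] using hdeg p hp j
    · simpa [branch, hs] using (totalDegree_mul (C ν) (p j)).trans (by simpa using hdeg p hp j)
  · obtain ⟨p, hp, hpu⟩ := hu θ
    refine ⟨branch p fun j => 0 ≤ eval θ (p j), ?_, fun j => ?_⟩
    · exact Finset.mem_biUnion.2 ⟨p, hp, Finset.mem_image_of_mem _ (by simp [signs])⟩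
    · simp only [hpu, lrelu]
      by_cases hs : 0 ≤ eval θ (p j)
      · simpa [branch, hs] using mul_le_of_le_one_left hs hν
      · simpa [branch, hs] using le_mul_of_le_one_left (not_le.1 hs).le hν

lemma foldl_leakyReLU {ι Λ : Type*} [Fintype σ] [Fintype ι] [Fintype α] {ν : ℝ} (hν : ν ≤ 1)
    (w : Λ → α → α → σ) (b : Λ → α → σ) (ls : List Λ) (H : ι → (σ → ℝ) → α → ℝ)
    (h : IsPiecewisePolynomial (fun (q : ι × α) θ => H q.1 θ q.2) K D) (hD : D + ls.length ≤ D') :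
    IsPiecewisePolynomial (fun (q : ι × α) θ => ls.foldl
        (fun h l i => lrelu ν ((∑ j, θ (w l i j) * h j) + θ (b l i))) (H q.1 θ) q.2)
      (K * warrenBound (Fintype.card σ) (Fintype.card ι * Fintype.card α) D' ^ ls.length)
      (D + ls.length) := by
  induction ls generalizing H K D with
  | nil => simpa using h
  | cons l ls ih =>
    rw [List.length_cons] at hD ⊢
    have hlayer := (h.affine (J' := ι × α) (fun q j => w l q.2 j) (fun q => b l q.2)
      (fun q j => (q.1, j))).leakyReLU hν
    have hstep := ih (K := K * warrenBound (Fintype.card σ) (Fintype.card ι * Fintype.card α) D')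
      (D := D + 1) (fun k θ i => lrelu ν ((∑ j, θ (w l i j) * H k θ j) + θ (b l i)))
      (hlayer.mono (Nat.mul_le_mul_left _
        (warrenBound_mono (Fintype.card_prod _ _).le (by lia))) le_rfl) (by lia)
    exact hstep.mono (by rw [pow_succ', mul_assoc]) (by lia)

end IsPiecewisePolynomial

variable {ν F η : ℝ} {d r L : ℕ} {ι : Type*} [Fintype ι]

lemma isPiecewisePolynomial_netOfParams (hν : ν ≤ 1) (hL : 1 ≤ L) (x : ι → Fin d → ℝ) :
    IsPiecewisePolynomial (fun i (θ : ParamIdx d r L → ℝ) => netOfParams ν d r L θ (x i))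
      (warrenBound (Fintype.card (ParamIdx d r L)) (Fintype.card ι * r) L ^ L) (L + 1) := by
  have hinput : IsPiecewisePolynomial
      (fun (q : ι × Fin d) (_ : ParamIdx d r L → ℝ) => x q.1 q.2) 1 0 := .const _
  have hfirst := (hinput.affine (J' := ι × Fin r) (fun q j => .inl (q.2, j))
    (fun q => .inr (.inl q.2)) (fun q j => (q.1, j))).leakyReLU hν
  have hhidden := IsPiecewisePolynomial.foldl_leakyReLU (D' := L) hν
    (fun l i j => (.inr (.inr (.inl (l, i, j))) : ParamIdx d r L))
    (fun l i => .inr (.inr (.inr (.inl (l, i))))) (List.finRange (L - 1))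
    (fun k θ i => lrelu ν ((∑ j, θ (.inl (i, j)) * x k j) + θ (.inr (.inl i)))) hfirst
    (by simp; lia)
  have houtput := hhidden.affine (J' := ι) (fun _ i => .inr (.inr (.inr (.inr (.inl i)))))
    (fun _ => .inr (.inr (.inr (.inr (.inr ()))))) (fun k i => (k, i))
  refine houtput.mono ?_ (by simp; lia)
  obtain ⟨L, rfl⟩ := Nat.exists_eq_add_of_le' hL
  simp only [List.length_finRange, Nat.add_sub_cancel, Fintype.card_prod, Fintype.card_fin, one_mul]
  rw [pow_succ']
  exact Nat.mul_le_mul_right _ (warrenBound_mono le_rfl (by lia))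

lemma le_trunc_iff {y t : ℝ} (h : -F < t) (h' : t ≤ F) : t ≤ trunc F y ↔ t ≤ y := by
  simp [trunc, h', h.not_ge]

lemma trunc_mem_Icc (hF : 0 ≤ F) (y : ℝ) : trunc F y ∈ Set.Icc (-F) F :=
  ⟨le_min (le_max_right _ _) (by linarith), min_le_right _ _⟩

/- A grid of mesh `η` in `[-F, F]` would separate the two truncated values. -/
lemma trunc_le_trunc_add (hF : 0 ≤ F) (hη : 0 < η) {J : ℕ} (hJ : 2 * F ≤ J * η) {y y' : ℝ}
    (h : ∀ j : Fin J, 0 ≤ y' + (F - j * η) → 0 ≤ y + (F - j * η)) :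
    trunc F y' ≤ trunc F y + η := by
  by_contra! hlt
  have hlow := (trunc_mem_Icc hF y).1
  have hhigh := (trunc_mem_Icc hF y').2
  set j := ⌊(trunc F y + F) / η⌋₊ + 1
  have hj : trunc F y + F < j * η := by
    rw [← div_lt_iff₀ hη]
    exact_mod_cast Nat.lt_floor_add_one _
  have hj' : j * η ≤ trunc F y + F + η := by
    have := (le_div_iff₀ hη).1 (Nat.floor_le (div_nonneg (by linarith) hη.le) :
      (⌊(trunc F y + F) / η⌋₊ : ℝ) ≤ _)
    push_cast [j]
    linarith
  have hjJ : j < J := by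
    have : (j : ℝ) * η < J * η := by linarith
    exact_mod_cast lt_of_mul_lt_mul_right this hη.le
  have htrunc : ∀ y, -F + j * η ≤ trunc F y ↔ -F + j * η ≤ y := fun y =>
    le_trunc_iff (by linarith) (by linarith)
  have hy' : -F + j * η ≤ y' := (htrunc y').1 (by linarith)
  have hy : -F + j * η ≤ y := by linarith [h ⟨j, hjJ⟩ (by change 0 ≤ y' + (F - j * η); linarith)]
  linarith [(htrunc y).2 hy]

/- A separated set embeds into the sign patterns of the network values on a grid of mesh `η`. -/
lemma card_le_of_trunc_netOfParams_separated (hν : ν ≤ 1) (hF : 0 ≤ F) (hη : 0 < η) {J : ℕ}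
    (hJ : 2 * F ≤ J * η) (hL : 1 ≤ L) (x : ι → Fin d → ℝ) (S : Finset (ParamIdx d r L → ℝ))
    (hS : (S : Set (ParamIdx d r L → ℝ)).Pairwise fun θ θ' => ∃ i,
      η < |trunc F (netOfParams ν d r L θ (x i)) - trunc F (netOfParams ν d r L θ' (x i))|) :
    S.card ≤ warrenBound (Fintype.card (ParamIdx d r L)) (Fintype.card ι * (r + J)) (L + 1) ^
      (L + 1) := by
  let pattern : (ParamIdx d r L → ℝ) → ι × Fin J → Prop :=
    fun θ q => 0 ≤ netOfParams ν d r L θ (x q.1) + (F - q.2 * η)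
  have hinj : Set.InjOn pattern S := fun θ hθ θ' hθ' heq => by
    by_contra hne
    obtain ⟨i, hi⟩ := hS hθ hθ' hne
    have hiff : ∀ j : Fin J, 0 ≤ netOfParams ν d r L θ (x i) + (F - j * η) ↔
        0 ≤ netOfParams ν d r L θ' (x i) + (F - j * η) := fun j => iff_of_eq (congrFun heq (i, j))
    refine hi.not_ge (abs_sub_le_iff.2 ⟨?_, ?_⟩)
    · linarith [trunc_le_trunc_add hF hη hJ fun j => (hiff j).1]
    · linarith [trunc_le_trunc_add hF hη hJ fun j => (hiff j).2]
  have hpattern := ((isPiecewisePolynomial_netOfParams (r := r) hν hL x).add_const Prod.fst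
    fun q : ι × Fin J => F - q.2 * η).card_range_nonneg_le
  calc S.card = (pattern '' S).ncard := by rw [hinj.ncard_image, Set.ncard_coe_finset]
    _ ≤ (Set.range pattern).ncard := Set.ncard_le_ncard (Set.image_subset_range _ _)
    _ ≤ _ := hpattern
    _ ≤ _ := by
      rw [pow_succ, Fintype.card_prod, Fintype.card_fin]
      exact Nat.mul_le_mul
        (Nat.pow_le_pow_left (warrenBound_mono (Nat.mul_le_mul_left _ (by lia)) (by lia)) L)
        (warrenBound_mono (Nat.mul_le_mul_left _ (by lia)) le_rfl)

end PiecewisePolynomial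

/-! ### From finite samples to integral distances -/

section RandomPacking

variable {Θ Ω : Type*} [MeasurableSpace Ω] {P : Measure Ω} [IsProbabilityMeasure P]

lemma measureReal_abs_le_half_le {f : Ω → ℝ} (hf : Measurable f) {b η : ℝ} (hb : 0 < b)
    (hfb : ∀ x, |f x| ≤ b) (hη : η ^ 2 ≤ ∫ x, f x ^ 2 ∂P) :
    P.real {x | |f x| ≤ η / 2} ≤ 1 - 3 * η ^ 2 / (4 * b ^ 2) := by
  set A := {x | |f x| ≤ η / 2}
  have hA : MeasurableSet A := measurableSet_le (by fun_prop) measurable_const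
  have hle : ∀ x, f x ^ 2 ≤ η ^ 2 / 4 + Aᶜ.indicator (fun _ => b ^ 2) x := fun x => by
    rw [← sq_abs]
    by_cases hx : x ∈ A
    · have : |f x| ^ 2 ≤ (η / 2) ^ 2 := pow_le_pow_left₀ (abs_nonneg _) hx 2
      simp only [Set.indicator_of_notMem (Set.notMem_compl_iff.2 hx)]
      linarith
    · rw [Set.indicator_of_mem (Set.mem_compl hx)]
      nlinarith [pow_le_pow_left₀ (abs_nonneg _) (hfb x) 2, sq_nonneg η]
  have hintegral : Integrable (Aᶜ.indicator fun _ => b ^ 2) P :=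
    (integrable_const _).indicator hA.compl
  have hsecond : ∫ x, f x ^ 2 ∂P ≤ η ^ 2 / 4 + P.real Aᶜ * b ^ 2 := calc
    _ ≤ ∫ x, (η ^ 2 / 4 + Aᶜ.indicator (fun _ => b ^ 2) x) ∂P :=
      integral_mono_of_nonneg (.of_forall fun x => sq_nonneg _) ((integrable_const _).add hintegral)
        (.of_forall hle)
    _ = _ := by
      rw [integral_add (integrable_const _) hintegral, integral_indicator hA.compl]
      simp
  rw [probReal_compl_eq_one_sub hA] at hsecond
  have : 3 * η ^ 2 / (4 * b ^ 2) ≤ 1 - P.real A := by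
    rw [div_le_iff₀ (by positivity)]
    linarith
  linarith

/- `m` random points fail to separate a given pair with probability at most `exp (-q * m)`. -/
lemma exists_forall_pairwise_separated {g : Θ → Ω → ℝ} (hg : ∀ θ, Measurable (g θ)) {b η : ℝ}
    (hb : 0 < b) (hgb : ∀ θ θ' x, |g θ x - g θ' x| ≤ b) (m : ℕ) (S : Finset Θ)
    (hS : (S : Set Θ).Pairwise fun s t => η ^ 2 ≤ ∫ x, (g s x - g t x) ^ 2 ∂P)
    (hm : 2 * Real.log S.card < 3 * η ^ 2 / (4 * b ^ 2) * m) :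
    ∃ x : Fin m → Ω, (S : Set Θ).Pairwise fun s t => ∃ i, η / 2 < |g s (x i) - g t (x i)| := by
  classical
  set q := 3 * η ^ 2 / (4 * b ^ 2)
  let bad : Θ × Θ → Set (Fin m → Ω) := fun p => {x | ∀ i, |g p.1 (x i) - g p.2 (x i)| ≤ η / 2}
  let Q := Measure.pi fun _ : Fin m => P
  have hbad : ∀ p ∈ S.offDiag, Q.real (bad p) ≤ Real.exp (-(q * m)) := fun p hp => by
    obtain ⟨hs, ht, hne⟩ := Finset.mem_offDiag.1 hp
    have hone := measureReal_abs_le_half_le ((hg p.1).sub (hg p.2)) hb (hgb p.1 p.2) (hS hs ht hne)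
    have hpi : bad p = Set.univ.pi fun _ => {x | |(g p.1 - g p.2) x| ≤ η / 2} := by
      ext x
      simp [bad]
    rw [hpi, measureReal_def, Measure.pi_pi, ENNReal.toReal_prod, Finset.prod_const,
      Finset.card_univ, Fintype.card_fin]
    calc _ ≤ Real.exp (-q) ^ m := pow_le_pow_left₀ ENNReal.toReal_nonneg
          (hone.trans (by linarith [Real.add_one_le_exp (-q)])) m
      _ = _ := by rw [← Real.exp_nat_mul]; ring_nf
  have hunion : Q.real (⋃ p ∈ S.offDiag, bad p) < 1 := by
    rcases S.eq_empty_or_nonempty with rfl | hne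
    · simp
    have hcard : (S.offDiag.card : ℝ) ≤ (S.card : ℝ) ^ 2 := by
      rw [Finset.offDiag_card, sq]
      exact_mod_cast Nat.sub_le _ _
    calc _ ≤ ∑ p ∈ S.offDiag, Q.real (bad p) := measureReal_biUnion_finset_le _ _
      _ ≤ S.offDiag.card • Real.exp (-(q * m)) := Finset.sum_le_card_nsmul _ _ _ hbad
      _ ≤ (S.card : ℝ) ^ 2 * Real.exp (-(q * m)) := by rw [nsmul_eq_mul]; gcongr
      _ = Real.exp (2 * Real.log S.card - q * m) := by
        rw [sub_eq_add_neg, Real.exp_add, two_mul, Real.exp_add, ← sq,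
          Real.exp_log (Nat.cast_pos.2 hne.card_pos)]
      _ < 1 := by rw [Real.exp_lt_one_iff]; linarith
  obtain ⟨x, hx⟩ : ∃ x, x ∉ ⋃ p ∈ S.offDiag, bad p := by
    by_contra! h
    rw [Set.eq_univ_of_forall h, probReal_univ] at hunion
    exact hunion.false
  refine ⟨x, fun s hs t ht hne => ?_⟩
  by_contra! h
  exact hx (Set.mem_biUnion (x := (s, t)) (Finset.mem_offDiag.2 ⟨hs, ht, hne⟩) h)

lemma exists_finset_card_le_forall_exists_not {R : Θ → Θ → Prop} [Std.Symm R]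
    (hirrefl : ∀ θ, ¬ R θ θ) {N : ℕ} (hN : ∀ S : Finset Θ, (S : Set Θ).Pairwise R → S.card ≤ N) :
    ∃ S : Finset Θ, S.card ≤ N ∧ ∀ θ, ∃ s ∈ S, ¬ R θ s := by
  classical
  let sizes : Set ℕ := {k | ∃ S : Finset Θ, (S : Set Θ).Pairwise R ∧ S.card = k}
  have hbdd : BddAbove sizes :=
    ⟨N, by rintro _ ⟨S, hS, rfl⟩; exact hN S hS⟩
  obtain ⟨S, hS, hcard⟩ : sSup sizes ∈ sizes := Nat.sSup_mem ⟨0, ∅, by simp, rfl⟩ hbdd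
  refine ⟨S, hN S hS, fun θ => ?_⟩
  by_contra! hθ
  have hnotMem : θ ∉ S := fun h => hirrefl θ (hθ θ h)
  have hinsert : (insert θ S : Finset Θ).card ≤ S.card := hcard ▸ le_csSup hbdd ⟨insert θ S, by
    rw [Finset.coe_insert]
    exact hS.insert_of_symm fun s hs _ => hθ s hs, rfl⟩
  rw [Finset.card_insert_of_notMem hnotMem] at hinsert
  exact absurd hinsert (Nat.not_succ_le_self _)

lemma exists_finset_integral_sq_sub_le {g : Θ → Ω → ℝ} (hg : ∀ θ, Measurable (g θ)) {b η : ℝ}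
    (hb : 0 < b) (hgb : ∀ θ θ' x, |g θ x - g θ' x| ≤ b) {m N : ℕ}
    (hN : ∀ (x : Fin m → Ω) (S : Finset Θ), (S : Set Θ).Pairwise
      (fun s t => ∃ i, η / 2 < |g s (x i) - g t (x i)|) → S.card ≤ N)
    (hm : 2 * Real.log (N + 1) < 3 * η ^ 2 / (4 * b ^ 2) * m) :
    ∃ S : Finset Θ, S.card ≤ N ∧ ∀ θ, ∃ s ∈ S, ∫ x, (g θ x - g s x) ^ 2 ∂P ≤ η ^ 2 := by
  let R : Θ → Θ → Prop := fun s t => η ^ 2 < ∫ x, (g s x - g t x) ^ 2 ∂P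
  have hsymm : Std.Symm R := ⟨fun s t h => by simpa only [R, sub_sq_comm (g t _)] using h⟩
  suffices ∃ S : Finset Θ, S.card ≤ N ∧ ∀ θ, ∃ s ∈ S, ¬ R θ s by simpa only [R, not_lt] using this
  refine exists_finset_card_le_forall_exists_not (fun θ => by simpa [R] using sq_nonneg η)
    fun S hS => ?_
  by_contra! hcard
  obtain ⟨S', hS', hcard'⟩ := Finset.exists_subset_card_eq (Nat.succ_le_of_lt hcard)
  have hpairwise := (hS.mono (Finset.coe_subset.2 hS')).imp fun _ _ => le_of_lt
  obtain ⟨x, hx⟩ := exists_forall_pairwise_separated (P := P) hg hb hgb m S' hpairwise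
    (by rw [hcard']; exact_mod_cast hm)
  exact Nat.not_succ_le_self N (hcard' ▸ hN x S' hx)

end RandomPacking

/-! ### Gaussian exponential moments -/

section GaussianMoments

variable {s s' : ℝ}

lemma gpdf_eq_gaussianPDFReal (m y : ℝ) (hs : 0 ≤ s) :
    gpdf m s y = gaussianPDFReal m s.toNNReal y := by
  simp [gpdf, gaussianPDFReal, Real.coe_toNNReal _ hs]

lemma gpdf_pos (m y : ℝ) (hs : 0 < s) : 0 < gpdf m s y := by
  unfold gpdf
  positivity

lemma gpdf_nonneg (m s y : ℝ) : 0 ≤ gpdf m s y := by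
  unfold gpdf
  positivity

lemma measurable_gpdf : Measurable fun q : ℝ × ℝ × ℝ => gpdf q.1 q.2.1 q.2.2 := by
  unfold gpdf
  fun_prop

lemma lintegral_gaussianReal_eq_lintegral_gpdf_mul (m : ℝ) (hs : 0 < s) (w : ℝ → ℝ≥0∞) :
    ∫⁻ y, w y ∂(gaussianReal m s.toNNReal) = ∫⁻ y, ENNReal.ofReal (gpdf m s y) * w y := by
  have hs0 : s.toNNReal ≠ 0 := by simpa using hs
  rw [gaussianReal_of_var_ne_zero _ hs0,
    lintegral_withDensity_eq_lintegral_mul_non_measurable _ (measurable_gaussianPDF _ _)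
      (Eventually.of_forall fun _ => gaussianPDF_lt_top)]
  simp [gaussianPDF, gpdf_eq_gaussianPDFReal m _ hs.le]

lemma lintegral_gpdf_div_gpdf_mul (m m' : ℝ) (hs : 0 < s) (hs' : 0 < s') (w : ℝ → ℝ≥0∞) :
    ∫⁻ y, ENNReal.ofReal (gpdf m' s' y) / ENNReal.ofReal (gpdf m s y) * w y
        ∂(gaussianReal m s.toNNReal) =
      ∫⁻ y, w y ∂(gaussianReal m' s'.toNNReal) := by
  rw [lintegral_gaussianReal_eq_lintegral_gpdf_mul m hs,
    lintegral_gaussianReal_eq_lintegral_gpdf_mul m' hs']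
  refine lintegral_congr fun y => ?_
  rw [← mul_assoc, ENNReal.mul_div_cancel (by simpa using gpdf_pos m y hs) ENNReal.ofReal_ne_top]

lemma lintegral_exp_mul_sub_gaussianReal (m b : ℝ) (hs : 0 ≤ s) :
    ∫⁻ y, ENNReal.ofReal (Real.exp (b * (y - m))) ∂(gaussianReal m s.toNNReal) =
      ENNReal.ofReal (Real.exp (b ^ 2 * s / 2)) := by
  have hsplit : ∀ y, Real.exp (b * (y - m)) = Real.exp (-(b * m)) * Real.exp (b * y) := fun y => by
    rw [← Real.exp_add]
    ring_nf
  have hmgf := congrFun (mgf_id_gaussianReal (μ := m) (v := s.toNNReal)) b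
  simp only [mgf, id, Real.coe_toNNReal _ hs] at hmgf
  rw [← ofReal_integral_eq_lintegral_ofReal _ (Eventually.of_forall fun y => by positivity)]
  · simp_rw [hsplit, integral_const_mul, hmgf, ← Real.exp_add]
    ring_nf
  · simpa only [hsplit] using (integrable_exp_mul_gaussianReal b).const_mul _

lemma gpdf_mul_exp_mul_sq_sub (m p : ℝ) {a : ℝ} (hs : 0 < s) (ha : 0 < 1 - 2 * a * s) (y : ℝ) :
    gpdf m s y * Real.exp (a * (y - p) ^ 2) =
      (√(1 - 2 * a * s))⁻¹ * Real.exp (a * (m - p) ^ 2 / (1 - 2 * a * s)) *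
        gpdf ((m - 2 * a * s * p) / (1 - 2 * a * s)) (s / (1 - 2 * a * s)) y := by
  obtain ⟨q, hq⟩ : ∃ q, 2 * a * s = 1 - q := ⟨1 - 2 * a * s, by ring⟩
  rw [hq, sub_sub_cancel] at ha
  have haq : a = (1 - q) / (2 * s) := by
    rw [← hq]
    field_simp
  rw [hq, sub_sub_cancel]
  have hexp : -((y - m) ^ 2) / (2 * s) + a * (y - p) ^ 2 =
      a * (m - p) ^ 2 / q + -((y - (m - (1 - q) * p) / q) ^ 2) / (2 * (s / q)) := by
    rw [haq]
    field_simp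
    ring
  have hsqrt : √(2 * Real.pi * (s / q)) = √(2 * Real.pi * s) / √q := by
    rw [← mul_div_assoc, Real.sqrt_div (by positivity)]
  rw [gpdf, gpdf, hsqrt, mul_assoc, ← Real.exp_add, hexp, Real.exp_add]
  have : 0 < √q := Real.sqrt_pos.2 ha
  field_simp

lemma lintegral_exp_mul_sq_sub_gaussianReal (m p : ℝ) {a : ℝ} (hs : 0 < s)
    (ha : 0 < 1 - 2 * a * s) :
    ∫⁻ y, ENNReal.ofReal (Real.exp (a * (y - p) ^ 2)) ∂(gaussianReal m s.toNNReal) =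
      ENNReal.ofReal ((√(1 - 2 * a * s))⁻¹ * Real.exp (a * (m - p) ^ 2 / (1 - 2 * a * s))) := by
  have hs' : 0 < s / (1 - 2 * a * s) := by positivity
  rw [lintegral_gaussianReal_eq_lintegral_gpdf_mul m hs]
  simp_rw [← ENNReal.ofReal_mul (gpdf_nonneg m s _), gpdf_mul_exp_mul_sq_sub m p hs ha]
  simp_rw [ENNReal.ofReal_mul (show 0 ≤ (√(1 - 2 * a * s))⁻¹ *
    Real.exp (a * (m - p) ^ 2 / (1 - 2 * a * s)) by positivity)]
  rw [lintegral_const_mul' _ _ ENNReal.ofReal_ne_top]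
  have hone := lintegral_gaussianReal_eq_lintegral_gpdf_mul
    ((m - 2 * a * s * p) / (1 - 2 * a * s)) hs' 1
  simp only [Pi.one_apply, mul_one, lintegral_const, measure_univ] at hone
  rw [← hone, mul_one]

lemma inv_sqrt_eq_exp_neg_half_log {x : ℝ} (hx : 0 < x) : (√x)⁻¹ = Real.exp (-Real.log x / 2) := by
  rw [Real.sqrt_eq_rpow, ← Real.rpow_neg hx.le, Real.rpow_def_of_pos hx]
  ring_nf

lemma inv_sqrt_one_sub_le {x : ℝ} (hx : x ≤ 1 / 2) :
    (√(1 - x))⁻¹ ≤ Real.exp (x / 2 + x ^ 2) := by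
  have hpos : 0 < 1 - x := by linarith
  have hinv : (1 - x)⁻¹ ≤ 1 + x + 2 * x ^ 2 := by
    rw [inv_le_iff_one_le_mul₀ hpos]
    nlinarith [mul_nonneg (sq_nonneg x) (by linarith : (0 : ℝ) ≤ 1 - 2 * x)]
  rw [inv_sqrt_eq_exp_neg_half_log hpos, Real.exp_le_exp]
  linarith [Real.one_sub_inv_le_log_of_pos hpos]

lemma inv_sqrt_one_add_le {x : ℝ} (h0 : 0 ≤ x) :
    (√(1 + x))⁻¹ ≤ Real.exp (-x / 2 + x ^ 2 / 2) := by
  have hpos : 0 < 1 + x := by linarith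
  have hinv : (1 + x)⁻¹ ≤ 1 - x + x ^ 2 := by
    rw [inv_le_iff_one_le_mul₀ hpos]
    nlinarith [mul_nonneg (sq_nonneg x) h0]
  rw [inv_sqrt_eq_exp_neg_half_log hpos, Real.exp_le_exp]
  linarith [Real.one_sub_inv_le_log_of_pos hpos]

lemma lintegral_exp_neg_mul_sq_sub_le (m p : ℝ) {a x : ℝ} (hs : 0 < s) (hx : 0 ≤ x)
    (hxa : x ≤ a * s) :
    ∫⁻ y, ENNReal.ofReal (Real.exp (-a * (y - p) ^ 2)) ∂(gaussianReal m s.toNNReal) ≤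
      ENNReal.ofReal (Real.exp (-x + 2 * x ^ 2)) := by
  have ha : 0 ≤ a := by
    by_contra! h
    nlinarith
  have hq : 0 < 1 - 2 * -a * s := by linarith
  rw [lintegral_exp_mul_sq_sub_gaussianReal m p hs hq]
  refine ENNReal.ofReal_le_ofReal ?_
  have hexp : Real.exp (-a * (m - p) ^ 2 / (1 - 2 * -a * s)) ≤ 1 :=
    Real.exp_le_one_iff.2 (div_nonpos_of_nonpos_of_nonneg (by nlinarith [sq_nonneg (m - p)]) hq.le)
  calc (√(1 - 2 * -a * s))⁻¹ * Real.exp (-a * (m - p) ^ 2 / (1 - 2 * -a * s))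
      ≤ (√(1 - 2 * -a * s))⁻¹ := mul_le_of_le_one_right (by positivity) hexp
    _ ≤ (√(1 + 2 * x))⁻¹ := by
        gcongr
        linarith
    _ ≤ Real.exp (-(2 * x) / 2 + (2 * x) ^ 2 / 2) := inv_sqrt_one_add_le (by linarith)
    _ = Real.exp (-x + 2 * x ^ 2) := by ring_nf

lemma lintegral_exp_mul_sq_sub_le (m p : ℝ) {a x : ℝ} (hs : 0 < s) (ha : 0 ≤ a)
    (hax : a * s ≤ x) (hx : x ≤ 1 / 4) :
    ∫⁻ y, ENNReal.ofReal (Real.exp (a * (y - p) ^ 2)) ∂(gaussianReal m s.toNNReal) ≤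
      ENNReal.ofReal (Real.exp (x + 4 * x ^ 2 + 2 * (a * (m - p) ^ 2))) := by
  have : 0 ≤ a * s := by positivity
  have : 1 / 2 ≤ 1 - 2 * a * s := by linarith
  rw [lintegral_exp_mul_sq_sub_gaussianReal m p hs (by linarith)]
  refine ENNReal.ofReal_le_ofReal ?_
  have hexp : a * (m - p) ^ 2 / (1 - 2 * a * s) ≤ 2 * (a * (m - p) ^ 2) := by
    rw [div_le_iff₀ (by linarith)]
    nlinarith [mul_nonneg ha (sq_nonneg (m - p))]
  calc (√(1 - 2 * a * s))⁻¹ * Real.exp (a * (m - p) ^ 2 / (1 - 2 * a * s))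
      ≤ (√(1 - 2 * x))⁻¹ * Real.exp (2 * (a * (m - p) ^ 2)) := by
        have : 0 < √(1 - 2 * x) := Real.sqrt_pos.2 (by linarith)
        gcongr ?_⁻¹ * Real.exp ?_
        exact Real.sqrt_le_sqrt (by linarith)
    _ ≤ Real.exp (2 * x / 2 + (2 * x) ^ 2) * Real.exp (2 * (a * (m - p) ^ 2)) := by
        gcongr
        exact inv_sqrt_one_sub_le (by linarith)
    _ = Real.exp (x + 4 * x ^ 2 + 2 * (a * (m - p) ^ 2)) := by
        rw [← Real.exp_add]
        ring_nf

lemma gpdf_mul_gpdf_div_gpdf (m m' : ℝ) (hs : 0 < s) (hs' : 0 < s') (y : ℝ) :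
    gpdf m s y * (gpdf m s y / gpdf m' s' y) =
      √(s' / (2 * s)) * (gpdf m (s / 2) y * Real.exp (1 / (2 * s') * (y - m') ^ 2)) := by
  have hsqrt : √(s' / (2 * s)) =
      √(2 * Real.pi * (s / 2)) * √(2 * Real.pi * s') / √(2 * Real.pi * s) ^ 2 := by
    rw [Real.sq_sqrt (by positivity), ← Real.sqrt_mul (by positivity)]
    rw [eq_div_iff (by positivity), ← Real.sqrt_sq (show 0 ≤ 2 * Real.pi * s by positivity),
      ← Real.sqrt_mul (by positivity)]
    congr 1
    field_simp
  have hexp : Real.exp (-((y - m) ^ 2) / (2 * (s / 2))) =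
      Real.exp (-((y - m) ^ 2) / (2 * s)) ^ 2 := by
    rw [← Real.exp_nat_mul]
    congr 1
    field_simp
    norm_num
  have hexp' : Real.exp (1 / (2 * s') * (y - m') ^ 2) =
      (Real.exp (-((y - m') ^ 2) / (2 * s')))⁻¹ := by
    rw [← Real.exp_neg]
    ring_nf
  rw [gpdf, gpdf, gpdf, hsqrt, hexp, hexp']
  field_simp

lemma sqrt_half_mul_inv_sqrt_le {u : ℝ} (hu : 1 ≤ u) :
    √(u / 2) * (√(1 - 1 / (2 * u)))⁻¹ ≤ Real.exp ((u - 1) ^ 2 / 2) := by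
  have hu' : 0 < 2 * u - 1 := by linarith
  have hexp : Real.exp ((u - 1) ^ 2 / 2) = √(Real.exp ((u - 1) ^ 2)) := by
    rw [← Real.exp_half]
  rw [← Real.sqrt_inv, ← Real.sqrt_mul (by positivity), hexp]
  refine Real.sqrt_le_sqrt ((?_ : _ ≤ (u - 1) ^ 2 + 1).trans (Real.add_one_le_exp _))
  have heq : u / 2 * (1 - 1 / (2 * u))⁻¹ = u ^ 2 / (2 * u - 1) := by
    field_simp
  rw [heq, div_le_iff₀ hu']
  nlinarith [mul_nonneg (sq_nonneg (u - 1)) (by linarith : 0 ≤ 2 * u - 2)]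

lemma lintegral_gpdf_div_gpdf_gaussianReal_le (m m' : ℝ) (hs : 0 < s) (hss' : s ≤ s') :
    ∫⁻ y, ENNReal.ofReal (gpdf m s y) / ENNReal.ofReal (gpdf m' s' y)
        ∂(gaussianReal m s.toNNReal) ≤
      ENNReal.ofReal (Real.exp ((s' / s - 1) ^ 2 / 2 + (m - m') ^ 2 / s)) := by
  have hs' : 0 < s' := hs.trans_le hss'
  have hu : 1 ≤ s' / s := (one_le_div₀ hs).2 hss'
  have hcurv : 1 - 2 * (1 / (2 * s')) * (s / 2) = 1 - 1 / (2 * (s' / s)) := by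
    field_simp
  have hcurv_ge : 1 / 2 ≤ 1 - 1 / (2 * (s' / s)) := by
    have : 1 / (2 * (s' / s)) ≤ 1 / 2 := by
      gcongr
      linarith
    linarith
  rw [lintegral_gaussianReal_eq_lintegral_gpdf_mul m hs]
  simp_rw [← ENNReal.ofReal_div_of_pos (gpdf_pos m' _ hs'),
    ← ENNReal.ofReal_mul (gpdf_nonneg m s _), gpdf_mul_gpdf_div_gpdf m m' hs hs',
    ENNReal.ofReal_mul (Real.sqrt_nonneg _), ENNReal.ofReal_mul (gpdf_nonneg m _ _)]
  rw [lintegral_const_mul' _ _ ENNReal.ofReal_ne_top,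
    ← lintegral_gaussianReal_eq_lintegral_gpdf_mul m (half_pos hs),
    lintegral_exp_mul_sq_sub_gaussianReal m m' (half_pos hs) (by rw [hcurv]; linarith), hcurv,
    ← ENNReal.ofReal_mul (by positivity), ← mul_assoc]
  refine ENNReal.ofReal_le_ofReal ?_
  rw [Real.exp_add, show s' / (2 * s) = s' / s / 2 by field_simp]
  gcongr ?_ * Real.exp ?_
  · exact sqrt_half_mul_inv_sqrt_le hu
  · rw [div_le_iff₀ (by linarith), one_div_mul_eq_div]
    calc (m - m') ^ 2 / (2 * s') ≤ (m - m') ^ 2 / (2 * s) := by gcongr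
      _ = (m - m') ^ 2 / s * (1 / 2) := by field_simp
      _ ≤ _ := by gcongr

end GaussianMoments

/-! ### Exponential tests -/

section Chernoff

variable {X : Type*} [MeasurableSpace X] {μ : Measure X} [IsProbabilityMeasure μ] {n : ℕ}

lemma lintegral_pi_prod {h : X → ℝ≥0∞} (hh : Measurable h) :
    ∫⁻ D, ∏ i, h (D i) ∂(Measure.pi fun _ : Fin n => μ) = (∫⁻ x, h x ∂μ) ^ n := by
  have hindep : iIndepFun (fun (i : Fin n) (D : Fin n → X) => h (D i))
      (Measure.pi fun _ : Fin n => μ) :=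
    iIndepFun_pi (X := fun _ => h) fun _ => hh.aemeasurable
  rw [lintegral_prod_eq_prod_lintegral_of_indepFun Finset.univ _ hindep
    fun i => hh.comp (measurable_pi_apply i)]
  have heval (i : Fin n) : ∫⁻ D, h (D i) ∂(Measure.pi fun _ : Fin n => μ) = ∫⁻ x, h x ∂μ :=
    (measurePreserving_eval (fun _ : Fin n => μ) i).lintegral_comp hh
  simp [heval]

lemma lintegral_pi_prod_le_exp {h : X → ℝ≥0∞} (hh : Measurable h) {E : ℝ}
    (hE : ∫⁻ x, h x ∂μ ≤ ENNReal.ofReal (Real.exp (-E))) :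
    ∫⁻ D, ∏ i, h (D i) ∂(Measure.pi fun _ : Fin n => μ) ≤
      ENNReal.ofReal (Real.exp (-(E * n))) := by
  rw [lintegral_pi_prod hh]
  refine (pow_le_pow_left₀ zero_le hE n).trans_eq ?_
  rw [← ENNReal.ofReal_pow (by positivity), ← Real.exp_nat_mul]
  ring_nf

/-- The rejection region of the test with statistic `t`: the samples `D` for which the sum of
`t` over the observations is positive. -/
def rejectionRegion (n : ℕ) (t : X → ℝ) : Set (Fin n → X) :=
  {D | 0 < ∑ i, t (D i)}

lemma measurableSet_rejectionRegion {t : X → ℝ} (ht : Measurable t) :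
    MeasurableSet (rejectionRegion n t) := by
  refine measurableSet_lt measurable_const ?_
  fun_prop

lemma pi_rejectionRegion_le {t : X → ℝ} (ht : Measurable t) {c E : ℝ} (hc : 0 ≤ c)
    (hE : ∫⁻ z, ENNReal.ofReal (Real.exp (c * t z)) ∂μ ≤ ENNReal.ofReal (Real.exp (-E))) :
    Measure.pi (fun _ : Fin n => μ) (rejectionRegion n t) ≤
      ENNReal.ofReal (Real.exp (-(E * n))) := by
  have hle : ∀ D ∈ rejectionRegion n t,
      1 ≤ ∏ i, ENNReal.ofReal (Real.exp (c * t (D i))) := fun D hD => by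
    rw [← ENNReal.ofReal_prod_of_nonneg fun _ _ => (Real.exp_pos _).le, ← Real.exp_sum,
      ← Finset.mul_sum, ENNReal.one_le_ofReal, Real.one_le_exp_iff]
    exact mul_nonneg hc (le_of_lt hD)
  rw [← lintegral_indicator_one (measurableSet_rejectionRegion ht)]
  exact (lintegral_mono (Set.indicator_le hle)).trans (lintegral_pi_prod_le_exp (by fun_prop) hE)

lemma setLIntegral_compl_prod_le {t : X → ℝ} (ht : Measurable t) {q : X → ℝ≥0∞}
    (hq : Measurable q) {c E : ℝ} (hc : 0 ≤ c)
    (hE : ∫⁻ z, q z * ENNReal.ofReal (Real.exp (-(c * t z))) ∂μ ≤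
      ENNReal.ofReal (Real.exp (-E)))
    {Φ : Set (Fin n → X)} (hΦ : rejectionRegion n t ⊆ Φ) :
    ∫⁻ D in Φᶜ, ∏ i, q (D i) ∂(Measure.pi fun _ : Fin n => μ) ≤
      ENNReal.ofReal (Real.exp (-(E * n))) := by
  have hmeas : Measurable fun z => q z * ENNReal.ofReal (Real.exp (-(c * t z))) := by fun_prop
  have hle : ∀ D ∈ Φᶜ, ∏ i, q (D i) ≤
      ∏ i, q (D i) * ENNReal.ofReal (Real.exp (-(c * t (D i)))) := fun D hD => by
    have hD' : ∑ i, t (D i) ≤ 0 := not_lt.1 fun h => hD (hΦ h)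
    rw [Finset.prod_mul_distrib, ← ENNReal.ofReal_prod_of_nonneg fun _ _ => (Real.exp_pos _).le,
      ← Real.exp_sum, Finset.sum_neg_distrib, ← Finset.mul_sum]
    refine le_mul_of_one_le_right zero_le ?_
    rw [ENNReal.one_le_ofReal, Real.one_le_exp_iff]
    exact neg_nonneg.2 (mul_nonpos_of_nonneg_of_nonpos hc hD')
  refine (setLIntegral_mono ?_ hle).trans
    ((setLIntegral_le_lintegral _ _).trans (lintegral_pi_prod_le_exp hmeas hE))
  exact Finset.measurable_fun_prod _ fun i _ => hmeas.comp (measurable_pi_apply i)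

end Chernoff

section ExponentialMoments

variable {Ω : Type*} [MeasurableSpace Ω] {P : Measure Ω}

lemma lintegral_exp_le_of_eq_const_add {w w' : Ω → ℝ} {c E E' : ℝ} (hw : ∀ x, w x = c + w' x)
    (h : ∫⁻ x, ENNReal.ofReal (Real.exp (w' x)) ∂P ≤ ENNReal.ofReal (Real.exp E'))
    (hE : c + E' ≤ E) :
    ∫⁻ x, ENNReal.ofReal (Real.exp (w x)) ∂P ≤ ENNReal.ofReal (Real.exp E) := by
  simp_rw [hw, Real.exp_add, ENNReal.ofReal_mul (Real.exp_pos c).le]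
  rw [lintegral_const_mul' _ _ ENNReal.ofReal_ne_top]
  refine (mul_le_mul_right h _).trans ?_
  rw [← ENNReal.ofReal_mul (Real.exp_pos c).le, ← Real.exp_add]
  gcongr

lemma exp_sub_le_one_add_sub {p q Q T : ℝ} (hp : 0 ≤ p) (hpT : p ≤ T) (hq : 0 ≤ q) (hqQ : q ≤ Q) :
    Real.exp (q - p) ≤ 1 + Real.exp Q * q - (1 + T)⁻¹ * p := by
  have hexp_q : Real.exp q ≤ 1 + Real.exp Q * q := by
    have hneg : 1 - q ≤ Real.exp (-q) := by linarith [Real.add_one_le_exp (-q)]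
    have hmul : Real.exp q * (1 - q) ≤ 1 := by
      refine (mul_le_mul_of_nonneg_left hneg (Real.exp_pos q).le).trans_eq ?_
      rw [← Real.exp_add, add_neg_cancel, Real.exp_zero]
    nlinarith [mul_le_mul_of_nonneg_right (Real.exp_le_exp.2 hqQ) hq]
  have hexp_p : Real.exp (-p) ≤ 1 - (1 + T)⁻¹ * p := by
    have hinv : Real.exp (-p) ≤ (1 + p)⁻¹ := by
      rw [Real.exp_neg]
      exact inv_anti₀ (by positivity) (by linarith [Real.add_one_le_exp p])
    have hTp : (1 + T)⁻¹ * p ≤ (1 + p)⁻¹ * p := by gcongr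
    have hsplit : (1 + p)⁻¹ = 1 - (1 + p)⁻¹ * p := by
      field_simp
      ring
    linarith
  have hexp_p' : Real.exp (-p) ≤ 1 := Real.exp_le_one_iff.2 (by linarith)
  have hQq : 0 ≤ Real.exp Q * q := by positivity
  rw [sub_eq_add_neg, Real.exp_add]
  nlinarith [mul_le_mul_of_nonneg_right hexp_q (Real.exp_pos (-p)).le,
    mul_le_mul_of_nonneg_left hexp_p' hQq]

lemma lintegral_exp_sub_le [IsProbabilityMeasure P] {p q : Ω → ℝ} (hpm : Measurable p)
    (hqm : Measurable q) {Q T : ℝ} (hp : ∀ x, 0 ≤ p x) (hpT : ∀ x, p x ≤ T) (hq : ∀ x, 0 ≤ q x)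
    (hqQ : ∀ x, q x ≤ Q) :
    ∫⁻ x, ENNReal.ofReal (Real.exp (q x - p x)) ∂P ≤
      ENNReal.ofReal (Real.exp (Real.exp Q * ∫ x, q x ∂P - (1 + T)⁻¹ * ∫ x, p x ∂P)) := by
  have hpi : Integrable p P := .of_bound hpm.aestronglyMeasurable T
    (.of_forall fun x => by rw [Real.norm_of_nonneg (hp x)]; exact hpT x)
  have hqi : Integrable q P := .of_bound hqm.aestronglyMeasurable Q
    (.of_forall fun x => by rw [Real.norm_of_nonneg (hq x)]; exact hqQ x)
  have hle x : Real.exp (q x - p x) ≤ 1 + Real.exp Q * q x - (1 + T)⁻¹ * p x :=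
    exp_sub_le_one_add_sub (hp x) (hpT x) (hq x) (hqQ x)
  have hintegral : ∫ x, (1 + Real.exp Q * q x - (1 + T)⁻¹ * p x) ∂P =
      1 + Real.exp Q * ∫ x, q x ∂P - (1 + T)⁻¹ * ∫ x, p x ∂P := by
    rw [integral_sub (by fun_prop) (by fun_prop), integral_add (by fun_prop) (by fun_prop),
      integral_const_mul, integral_const_mul]
    simp
  refine (lintegral_mono fun x => ENNReal.ofReal_le_ofReal (hle x)).trans ?_
  rw [← ofReal_integral_eq_lintegral_ofReal (by fun_prop)
    (.of_forall fun x => (Real.exp_pos _).le.trans (hle x)), hintegral]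
  refine ENNReal.ofReal_le_ofReal (le_trans ?_ (Real.add_one_le_exp _))
  linarith

lemma sq_sub_le_of_abs_le {a b F : ℝ} (ha : |a| ≤ F) (hb : |b| ≤ F) : (a - b) ^ 2 ≤ 4 * F ^ 2 := by
  have h := abs_le.1 ((abs_sub a b).trans (add_le_add ha hb))
  nlinarith

lemma sq_sub_div_le_of_abs_le {a b F v : ℝ} (hv : 0 < v) (ha : |a| ≤ F) (hb : |b| ≤ F) :
    (a - b) ^ 2 / v ≤ 4 * (F ^ 2 / v) := by
  rw [← mul_div_assoc]
  have := sq_sub_le_of_abs_le ha hb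
  gcongr

lemma integrable_sq_sub_of_abs_le [IsFiniteMeasure P] {f g : Ω → ℝ} (hf : Measurable f)
    (hg : Measurable g) {F : ℝ} (hfF : ∀ x, |f x| ≤ F) (hgF : ∀ x, |g x| ≤ F) :
    Integrable (fun x => (f x - g x) ^ 2) P :=
  .of_bound (by fun_prop) (4 * F ^ 2) (.of_forall fun x => by
    rw [Real.norm_of_nonneg (sq_nonneg _)]
    exact sq_sub_le_of_abs_le (hfF x) (hgF x))

end ExponentialMoments

section TestStatistics

variable {d : ℕ} {PX : Measure (Fin d → ℝ)} {f₀ f g : (Fin d → ℝ) → ℝ} {v s e F : ℝ}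

lemma lintegral_gaussRegLaw_le (v : ℝ≥0) (h : (Fin d → ℝ) × ℝ → ℝ≥0∞) :
    ∫⁻ z, h z ∂(gaussRegLaw d PX f₀ v) ≤
      ∫⁻ x, ∫⁻ y, h (x, y) ∂(gaussianReal (f₀ x) v) ∂PX :=
  (Measure.lintegral_bind_le _ _ _).trans (lintegral_mono fun _ => lintegral_map_le _ _)

/-- The likelihood ratio at one observation `z` of the model with regression function `f` and
noise variance `s` against the one with regression function `f₀` and noise variance `v`. -/
def likelihoodRatio {X : Type*} (f₀ : X → ℝ) (v : ℝ) (f : X → ℝ) (s : ℝ) (z : X × ℝ) : ℝ≥0∞ :=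
  ENNReal.ofReal (gpdf (f z.1) s z.2) / ENNReal.ofReal (gpdf (f₀ z.1) v z.2)

lemma measurable_likelihoodRatio {X : Type*} [MeasurableSpace X] {f₀ f : X → ℝ}
    (hf₀ : Measurable f₀) (hf : Measurable f) (v s : ℝ) :
    Measurable (likelihoodRatio f₀ v f s) := by
  have hden : Measurable fun z : X × ℝ => (f₀ z.1, v, z.2) := by fun_prop
  have hnum : Measurable fun z : X × ℝ => (f z.1, s, z.2) := by fun_prop
  exact ((measurable_gpdf.comp hnum).ennreal_ofReal).div
    ((measurable_gpdf.comp hden).ennreal_ofReal)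

lemma lintegral_likelihoodRatio_mul_le (hv : 0 < v) (hs : 0 < s)
    (h : (Fin d → ℝ) × ℝ → ℝ≥0∞) :
    ∫⁻ z, likelihoodRatio f₀ v f s z * h z ∂(gaussRegLaw d PX f₀ v.toNNReal) ≤
      ∫⁻ x, ∫⁻ y, h (x, y) ∂(gaussianReal (f x) s.toNNReal) ∂PX := by
  refine (lintegral_gaussRegLaw_le _ _).trans (lintegral_mono fun x => ?_)
  exact (lintegral_gpdf_div_gpdf_mul (f₀ x) (f x) hv hs fun y => h (x, y)).le

/-- The squared residual at the observation `z` of the regression function `f`, in units of the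
variance `v`. -/
def sqResidual {X : Type*} (f : X → ℝ) (v : ℝ) (z : X × ℝ) : ℝ :=
  (z.2 - f z.1) ^ 2 / v

@[fun_prop]
lemma measurable_sqResidual {X : Type*} [MeasurableSpace X] {f : X → ℝ} (hf : Measurable f)
    (v : ℝ) : Measurable (sqResidual f v) := by
  unfold sqResidual
  fun_prop

lemma lintegral_exp_upper_null [IsProbabilityMeasure PX] (hv : 0 < v) (he : 0 ≤ e) (he' : e ≤ 1) :
    ∫⁻ z, ENNReal.ofReal (Real.exp (e / 16 * (sqResidual f₀ v z - (1 + e / 2))))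
        ∂(gaussRegLaw d PX f₀ v.toNNReal) ≤ ENNReal.ofReal (Real.exp (-(e ^ 2 / 64))) := by
  refine (lintegral_gaussRegLaw_le _ _).trans (lintegral_le_const (.of_forall fun x => ?_))
  refine lintegral_exp_le_of_eq_const_add (c := -(e / 16 * (1 + e / 2)))
    (fun y => ?_) (lintegral_exp_mul_sq_sub_le (a := e / 16 / v) (x := e / 16) (f₀ x) (f₀ x) hv
      (by positivity) (by field_simp; rfl) (by linarith)) ?_
  · simp only [sqResidual]
    ring
  · rw [sub_self]
    nlinarith

lemma lintegral_exp_upper_alt [IsProbabilityMeasure PX] (hv : 0 < v) (he : 0 ≤ e) (he' : e ≤ 1)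
    (hs : v * (1 + e) ≤ s) :
    ∫⁻ z, likelihoodRatio f₀ v f s z *
          ENNReal.ofReal (Real.exp (-(e / 32 * (sqResidual f₀ v z - (1 + e / 2)))))
        ∂(gaussRegLaw d PX f₀ v.toNNReal) ≤ ENNReal.ofReal (Real.exp (-(e ^ 2 / 128))) := by
  have hs0 : 0 < s := lt_of_lt_of_le (by positivity) hs
  have hcurv : e / 32 * (1 + e) ≤ e / 32 / v * s :=
    calc e / 32 * (1 + e) = e / 32 / v * (v * (1 + e)) := by field_simp
      _ ≤ e / 32 / v * s := by gcongr
  refine (lintegral_likelihoodRatio_mul_le hv hs0 _).trans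
    (lintegral_le_const (.of_forall fun x => ?_))
  refine lintegral_exp_le_of_eq_const_add (c := e / 32 * (1 + e / 2))
    (fun y => ?_) (lintegral_exp_neg_mul_sq_sub_le (f x) (f₀ x) hs0 (by positivity) hcurv) ?_
  · simp only [sqResidual]
    ring
  · have hsq : (1 + e) ^ 2 ≤ 4 := by nlinarith
    nlinarith [mul_le_mul_of_nonneg_left hsq (sq_nonneg e)]

lemma lintegral_exp_lower_null [IsProbabilityMeasure PX] (hv : 0 < v) (he : 0 ≤ e) :
    ∫⁻ z, ENNReal.ofReal (Real.exp (e / 8 * (1 - e / 2 - sqResidual g v z)))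
        ∂(gaussRegLaw d PX f₀ v.toNNReal) ≤ ENNReal.ofReal (Real.exp (-(e ^ 2 / 32))) := by
  refine (lintegral_gaussRegLaw_le _ _).trans (lintegral_le_const (.of_forall fun x => ?_))
  refine lintegral_exp_le_of_eq_const_add (c := e / 8 * (1 - e / 2))
    (fun y => ?_) (lintegral_exp_neg_mul_sq_sub_le (a := e / 8 / v) (x := e / 8) (f₀ x) (g x) hv
      (by positivity) (by field_simp; rfl)) ?_
  · simp only [sqResidual]
    ring
  · nlinarith

lemma lintegral_exp_lower_alt [IsProbabilityMeasure PX] (hv : 0 < v) (he : 0 ≤ e)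
    (hs0 : 0 < s) (hs : s ≤ v * (1 - e)) (hf : Measurable f) (hg : Measurable g)
    (hfF : ∀ x, |f x| ≤ F) (hgF : ∀ x, |g x| ≤ F)
    (hfg : ∫ x, (f x - g x) ^ 2 ∂PX ≤ v * e / (16 * Real.exp (F ^ 2 / v))) :
    ∫⁻ z, likelihoodRatio f₀ v f s z *
          ENNReal.ofReal (Real.exp (-(e / 32 * (1 - e / 2 - sqResidual g v z))))
        ∂(gaussRegLaw d PX f₀ v.toNNReal) ≤ ENNReal.ofReal (Real.exp (-(e ^ 2 / 128))) := by
  have he' : e < 1 := by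
    by_contra! h
    nlinarith
  have hcurv : e / 32 / v * s ≤ e / 32 * (1 - e) :=
    calc e / 32 / v * s ≤ e / 32 / v * (v * (1 - e)) := by gcongr
      _ = e / 32 * (1 - e) := by field_simp
  have hpt x :
      ∫⁻ y, ENNReal.ofReal (Real.exp (-(e / 32 * (1 - e / 2 - sqResidual g v (x, y)))))
          ∂(gaussianReal (f x) s.toNNReal) ≤
        ENNReal.ofReal (Real.exp (-(3 * e ^ 2 / 256) + e / 16 * ((f x - g x) ^ 2 / v))) := by
    refine lintegral_exp_le_of_eq_const_add (c := -(e / 32 * (1 - e / 2))) (fun y => ?_)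
      (lintegral_exp_mul_sq_sub_le (f x) (g x) hs0 (by positivity) hcurv (by nlinarith)) ?_
    · simp only [sqResidual]
      ring
    · have hsq : (1 - e) ^ 2 ≤ 1 := by nlinarith
      have heq : 2 * (e / 32 / v * (f x - g x) ^ 2) = e / 16 * ((f x - g x) ^ 2 / v) := by ring
      nlinarith [mul_le_mul_of_nonneg_left hsq (sq_nonneg e)]
  refine (lintegral_likelihoodRatio_mul_le hv hs0 _).trans ((lintegral_mono hpt).trans ?_)
  refine lintegral_exp_le_of_eq_const_add (fun x => by rw [sub_zero]) (lintegral_exp_sub_le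
    (p := fun _ => 0) (T := 0) (Q := F ^ 2 / v) measurable_const (by fun_prop) (by simp) (by simp)
    (fun x => by positivity) fun x => ?_) ?_
  · have hle := sq_sub_div_le_of_abs_le hv (hfF x) (hgF x)
    have : 0 ≤ (f x - g x) ^ 2 / v := by positivity
    nlinarith
  · have h : Real.exp (F ^ 2 / v) * (e / 16 * ((∫ x, (f x - g x) ^ 2 ∂PX) / v)) ≤ e ^ 2 / 256 :=
      calc _ ≤ Real.exp (F ^ 2 / v) *
              (e / 16 * (v * e / (16 * Real.exp (F ^ 2 / v)) / v)) := by gcongr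
        _ = e ^ 2 / 256 := by
          field_simp
          ring
    rw [integral_const_mul, integral_div, integral_zero]
    linarith

lemma lintegral_exp_mul_sq_sub_sub_sq_sub (m p q b : ℝ) (hs : 0 ≤ s) :
    ∫⁻ y, ENNReal.ofReal (Real.exp (b * ((y - p) ^ 2 - (y - q) ^ 2)))
        ∂(gaussianReal m s.toNNReal) ≤
      ENNReal.ofReal (Real.exp (b * ((m - p) ^ 2 - (m - q) ^ 2) + 2 * b ^ 2 * (q - p) ^ 2 * s)) :=
  lintegral_exp_le_of_eq_const_add (c := b * ((m - p) ^ 2 - (m - q) ^ 2)) (fun y => by ring)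
    (lintegral_exp_mul_sub_gaussianReal m (2 * b * (q - p)) hs).le (le_of_eq (by ring))

lemma lintegral_exp_mean_null [IsProbabilityMeasure PX] (hv : 0 < v) (hf₀ : Measurable f₀)
    (hg : Measurable g) (hf₀F : ∀ x, |f₀ x| ≤ F) (hgF : ∀ x, |g x| ≤ F) :
    ∫⁻ z, ENNReal.ofReal (Real.exp (1 / 4 * (sqResidual f₀ v z - sqResidual g v z)))
        ∂(gaussRegLaw d PX f₀ v.toNNReal) ≤
      ENNReal.ofReal (Real.exp (-((∫ x, (g x - f₀ x) ^ 2 ∂PX) / (8 * (v + F ^ 2))))) := by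
  have hpt x :
      ∫⁻ y, ENNReal.ofReal (Real.exp (1 / 4 * (sqResidual f₀ v (x, y) - sqResidual g v (x, y))))
          ∂(gaussianReal (f₀ x) v.toNNReal) ≤
        ENNReal.ofReal (Real.exp (0 - 1 / 8 * ((g x - f₀ x) ^ 2 / v))) := by
    refine lintegral_exp_le_of_eq_const_add (c := 0) (fun y => ?_)
      (lintegral_exp_mul_sq_sub_sub_sq_sub (f₀ x) (f₀ x) (g x) (1 / (4 * v)) hv.le)
      (le_of_eq ?_)
    · simp only [sqResidual]
      ring
    · field_simp
      ring
  refine (lintegral_gaussRegLaw_le _ _).trans ((lintegral_mono hpt).trans ?_)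
  refine lintegral_exp_le_of_eq_const_add (fun x => (zero_add _).symm) (lintegral_exp_sub_le
    (q := fun _ => 0) (Q := 0) (T := F ^ 2 / v) (by fun_prop) measurable_const
    (fun x => by positivity) (fun x => ?_) (by simp) (by simp)) ?_
  · have := sq_sub_div_le_of_abs_le hv (hgF x) (hf₀F x)
    have : 0 ≤ F ^ 2 / v := by positivity
    linarith
  · rw [integral_const_mul, integral_div, integral_zero]
    refine le_of_eq ?_
    field_simp
    ring

lemma lintegral_exp_mean_alt_apply {a b k : ℝ} (hv : 0 < v) (hs0 : 0 ≤ s) (hs : s ≤ 2 * v) :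
    ∫⁻ y, ENNReal.ofReal (Real.exp (-(1 / 8 * ((y - b) ^ 2 / v - (y - k) ^ 2 / v))))
        ∂(gaussianReal a s.toNNReal) ≤
      ENNReal.ofReal (Real.exp (1 / 2 * ((a - k) ^ 2 / v) - 1 / 32 * ((k - b) ^ 2 / v))) := by
  refine lintegral_exp_le_of_eq_const_add (c := 0) (fun y => by ring)
    (lintegral_exp_mul_sq_sub_sub_sq_sub a b k (-(1 / (8 * v))) hs0) ?_
  have hvar : 2 * (-(1 / (8 * v))) ^ 2 * (k - b) ^ 2 * s ≤ 1 / 16 * ((k - b) ^ 2 / v) :=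
    calc _ ≤ 2 * (-(1 / (8 * v))) ^ 2 * (k - b) ^ 2 * (2 * v) := by gcongr
      _ = 1 / 16 * ((k - b) ^ 2 / v) := by
        field_simp
        ring
  rw [zero_add]
  refine (add_le_add_right hvar _).trans ?_
  field_simp
  nlinarith [sq_nonneg (k - b + 4 * (a - k))]

lemma lintegral_exp_mean_alt [IsProbabilityMeasure PX] {κ : ℝ} (hv : 0 < v) (hs0 : 0 < s)
    (hs : s ≤ 2 * v) (hf₀ : Measurable f₀) (hf : Measurable f) (hg : Measurable g)
    (hf₀F : ∀ x, |f₀ x| ≤ F) (hfF : ∀ x, |f x| ≤ F) (hgF : ∀ x, |g x| ≤ F)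
    (hκ : κ ≤ ∫ x, (g x - f₀ x) ^ 2 ∂PX)
    (hfg : ∫ x, (f x - g x) ^ 2 ∂PX ≤ κ / (32 * (1 + F ^ 2 / v) * Real.exp (2 * (F ^ 2 / v)))) :
    ∫⁻ z, likelihoodRatio f₀ v f s z *
          ENNReal.ofReal (Real.exp (-(1 / 8 * (sqResidual f₀ v z - sqResidual g v z))))
        ∂(gaussRegLaw d PX f₀ v.toNNReal) ≤
      ENNReal.ofReal (Real.exp (-(κ / (64 * (v + F ^ 2))))) := by
  refine (lintegral_likelihoodRatio_mul_le hv hs0 _).trans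
    ((lintegral_mono fun x => lintegral_exp_mean_alt_apply hv hs0.le hs).trans ?_)
  refine lintegral_exp_le_of_eq_const_add (fun x => (zero_add _).symm) (lintegral_exp_sub_le
    (Q := 2 * (F ^ 2 / v)) (T := F ^ 2 / v) (by fun_prop) (by fun_prop)
    (fun x => by positivity) (fun x => ?_) (fun x => by positivity) (fun x => ?_)) ?_
  · have := sq_sub_div_le_of_abs_le hv (hgF x) (hf₀F x)
    have : 0 ≤ F ^ 2 / v := by positivity
    linarith
  · linarith [sq_sub_div_le_of_abs_le hv (hfF x) (hgF x)]
  · have hloss : Real.exp (2 * (F ^ 2 / v)) * (1 / 2 * ((∫ x, (f x - g x) ^ 2 ∂PX) / v)) ≤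
        κ / (64 * (v + F ^ 2)) :=
      calc _ ≤ Real.exp (2 * (F ^ 2 / v)) * (1 / 2 *
            (κ / (32 * (1 + F ^ 2 / v) * Real.exp (2 * (F ^ 2 / v))) / v)) := by gcongr
        _ = κ / (64 * (v + F ^ 2)) := by
          field_simp
          ring
    have hgain : 2 * (κ / (64 * (v + F ^ 2))) ≤
        (1 + F ^ 2 / v)⁻¹ * (1 / 32 * ((∫ x, (g x - f₀ x) ^ 2 ∂PX) / v)) :=
      calc 2 * (κ / (64 * (v + F ^ 2))) = (1 + F ^ 2 / v)⁻¹ * (1 / 32 * (κ / v)) := by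
            field_simp
            ring
        _ ≤ _ := by gcongr
    rw [integral_const_mul, integral_const_mul, integral_div, integral_div]
    linarith

lemma lintegral_inv_likelihoodRatio_le [IsProbabilityMeasure PX] {b : ℝ} (hv : 0 < v)
    (hvs : v ≤ s) (hfb : ∀ᵐ x ∂PX, (f x - f₀ x) ^ 2 ≤ b) :
    ∫⁻ z, (likelihoodRatio f₀ v f s z)⁻¹ ∂(gaussRegLaw d PX f₀ v.toNNReal) ≤
      ENNReal.ofReal (Real.exp ((s / v - 1) ^ 2 / 2 + b / v)) := by
  refine (lintegral_gaussRegLaw_le _ _).trans (lintegral_le_const (hfb.mono fun x hx => ?_))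
  have hinv y : (likelihoodRatio f₀ v f s (x, y))⁻¹ =
      ENNReal.ofReal (gpdf (f₀ x) v y) / ENNReal.ofReal (gpdf (f x) s y) :=
    ENNReal.inv_div (.inl ENNReal.ofReal_ne_top)
      (.inl (ENNReal.ofReal_pos.2 (gpdf_pos _ _ hv)).ne')
  simp_rw [hinv]
  refine (lintegral_gpdf_div_gpdf_gaussianReal_le (f₀ x) (f x) hv hvs).trans ?_
  rw [← neg_sub (f x), neg_sq]
  gcongr

end TestStatistics

section TestSet

variable {d n : ℕ} {PX : Measure (Fin d → ℝ)} {f₀ : (Fin d → ℝ) → ℝ} {Θ : Type*}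
  {g : Θ → (Fin d → ℝ) → ℝ} {S : Finset Θ} {v F ε : ℝ}

/-- The constant `c` in the error bounds `exp (-c ε² n)` of the test `testSet`. -/
def testExponent (v F : ℝ) : ℝ :=
  min (1 / (512 * v ^ 2)) (1 / (1024 * (v + F ^ 2)))

lemma testExponent_pos (hv : 0 < v) : 0 < testExponent v F := by
  unfold testExponent
  positivity

lemma testExponent_mul_sq_le_variance (hv : 0 < v) :
    testExponent v F * ε ^ 2 ≤ (ε / (2 * v)) ^ 2 / 128 :=
  calc testExponent v F * ε ^ 2 ≤ 1 / (512 * v ^ 2) * ε ^ 2 := by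
        gcongr
        exact min_le_left _ _
    _ = (ε / (2 * v)) ^ 2 / 128 := by
        field_simp
        ring

lemma testExponent_mul_sq_le_mean (hv : 0 < v) :
    testExponent v F * ε ^ 2 ≤ ε ^ 2 / 16 / (64 * (v + F ^ 2)) :=
  calc testExponent v F * ε ^ 2 ≤ 1 / (1024 * (v + F ^ 2)) * ε ^ 2 := by
        gcongr
        exact min_le_right _ _
    _ = ε ^ 2 / 16 / (64 * (v + F ^ 2)) := by
        field_simp
        ring

/-- The test `testSet` at distance `ε` is built from an `L²(P_X)`-net of resolution
`netFraction v F * ε`. -/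
def netFraction (v F : ℝ) : ℝ :=
  (512 * (1 + F ^ 2 / v) * Real.exp (2 * (F ^ 2 / v)))⁻¹

lemma netFraction_pos (hv : 0 < v) : 0 < netFraction v F := by
  unfold netFraction
  positivity

lemma sq_netFraction_mul_le_mean (hv : 0 < v) :
    (netFraction v F * ε) ^ 2 ≤
      ε ^ 2 / 16 / (32 * (1 + F ^ 2 / v) * Real.exp (2 * (F ^ 2 / v))) := by
  have hle : netFraction v F ≤ 1 := by
    refine inv_le_one_of_one_le₀ ?_
    have h1 : 1 ≤ 1 + F ^ 2 / v := le_add_of_nonneg_right (by positivity)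
    have h2 : 1 ≤ Real.exp (2 * (F ^ 2 / v)) := Real.one_le_exp (by positivity)
    nlinarith
  calc (netFraction v F * ε) ^ 2 = netFraction v F * (netFraction v F * ε ^ 2) := by ring
    _ ≤ 1 * (netFraction v F * ε ^ 2) := by
        have := netFraction_pos (F := F) hv
        gcongr
    _ = ε ^ 2 / 16 / (32 * (1 + F ^ 2 / v) * Real.exp (2 * (F ^ 2 / v))) := by
        unfold netFraction
        field_simp
        ring

lemma sq_netFraction_mul_le_sq (hv : 0 < v) : (netFraction v F * ε) ^ 2 ≤ ε ^ 2 / 16 := by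
  refine (sq_netFraction_mul_le_mean hv).trans (div_le_self (by positivity) ?_)
  have h1 : 1 ≤ 1 + F ^ 2 / v := le_add_of_nonneg_right (by positivity)
  have h2 : 1 ≤ Real.exp (2 * (F ^ 2 / v)) := Real.one_le_exp (by positivity)
  nlinarith

lemma sq_netFraction_mul_le_variance (hv : 0 < v) (hε : 0 ≤ ε) (hε1 : ε ≤ 1) :
    (netFraction v F * ε) ^ 2 ≤ v * (ε / (2 * v)) / (16 * Real.exp (F ^ 2 / v)) := by
  refine (sq_netFraction_mul_le_mean hv).trans ?_
  have hexp : Real.exp (F ^ 2 / v) ≤ Real.exp (2 * (F ^ 2 / v)) := by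
    gcongr
    have : 0 ≤ F ^ 2 / v := by positivity
    linarith
  calc ε ^ 2 / 16 / (32 * (1 + F ^ 2 / v) * Real.exp (2 * (F ^ 2 / v)))
      ≤ ε / 16 / (32 * 1 * Real.exp (F ^ 2 / v)) := by
        gcongr
        · nlinarith
        · exact le_add_of_nonneg_right (by positivity)
    _ ≤ ε / 2 / (16 * Real.exp (F ^ 2 / v)) := by gcongr <;> norm_num
    _ = v * (ε / (2 * v)) / (16 * Real.exp (F ^ 2 / v)) := by field_simp

/-- The test of `(f₀, v)` against the pairs `(g θ, s)` at distance more than `ε`, for a net `S` of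
the family `g`. It rejects if the residuals of `f₀` are too large, if for some `j ∈ S` the
residuals of `g j` are too small, or if for some `j ∈ S` far from `f₀` the residuals of `g j` are
smaller than those of `f₀`. -/
def testSet (n : ℕ) (PX : Measure (Fin d → ℝ)) (f₀ : (Fin d → ℝ) → ℝ)
    (g : Θ → (Fin d → ℝ) → ℝ) (S : Finset Θ) (v ε : ℝ) : Set (Fin n → (Fin d → ℝ) × ℝ) :=
  rejectionRegion n (fun z => sqResidual f₀ v z - (1 + ε / (2 * v) / 2)) ∪
    ⋃ j ∈ S, (rejectionRegion n (fun z => 1 - ε / (2 * v) / 2 - sqResidual (g j) v z) ∪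
      ⋃ _ : ε ^ 2 / 16 ≤ ∫ x, (g j x - f₀ x) ^ 2 ∂PX,
        rejectionRegion n (fun z => sqResidual f₀ v z - sqResidual (g j) v z))

lemma ofReal_exp_neg_mul_le {E E' x : ℝ} (h : E ≤ E') (hx : 0 ≤ x) :
    ENNReal.ofReal (Real.exp (-(E' * x))) ≤ ENNReal.ofReal (Real.exp (-(E * x))) := by
  gcongr

lemma measure_union_biUnion_union_le {X ι : Type*} [MeasurableSpace X] (μ : Measure X)
    {S : Finset ι} {A : Set X} {B C : ι → Set X} {x : ℝ≥0∞} (hA : μ A ≤ x)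
    (hB : ∀ j ∈ S, μ (B j) ≤ x) (hC : ∀ j ∈ S, μ (C j) ≤ x) :
    μ (A ∪ ⋃ j ∈ S, (B j ∪ C j)) ≤ (2 * S.card + 1 : ℕ) * x := by
  have hBC : ∀ j ∈ S, μ (B j ∪ C j) ≤ x + x := fun j hj =>
    (measure_union_le _ _).trans (add_le_add (hB j hj) (hC j hj))
  calc μ (A ∪ ⋃ j ∈ S, (B j ∪ C j)) ≤ x + ∑ _ ∈ S, (x + x) :=
        (measure_union_le _ _).trans (add_le_add hA
          ((measure_biUnion_finset_le _ _).trans (Finset.sum_le_sum hBC)))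
    _ = (2 * S.card + 1 : ℕ) * x := by
        simp only [Finset.sum_const, nsmul_eq_mul]
        push_cast
        ring

lemma pi_testSet_le [IsProbabilityMeasure PX]
    [IsProbabilityMeasure (gaussRegLaw d PX f₀ v.toNNReal)] (hv : 0 < v) (hf₀ : Measurable f₀)
    (hf₀F : ∀ x, |f₀ x| ≤ F) (hg : ∀ θ, Measurable (g θ)) (hgF : ∀ θ x, |g θ x| ≤ F)
    (hε : 0 ≤ ε) (hε' : ε ≤ 2 * v) :
    Measure.pi (fun _ : Fin n => gaussRegLaw d PX f₀ v.toNNReal) (testSet n PX f₀ g S v ε) ≤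
      ENNReal.ofReal ((2 * S.card + 1) * Real.exp (-(testExponent v F * ε ^ 2 * n))) := by
  set x := ENNReal.ofReal (Real.exp (-(testExponent v F * ε ^ 2 * n))) with hx
  set Q := Measure.pi fun _ : Fin n => gaussRegLaw d PX f₀ v.toNNReal
  have he : 0 ≤ ε / (2 * v) := by positivity
  have he' : ε / (2 * v) ≤ 1 := (div_le_one (by positivity)).2 hε'
  have hvar := testExponent_mul_sq_le_variance (F := F) (ε := ε) hv
  have hsq_nonneg := sq_nonneg (ε / (2 * v))
  have hupper : Q (rejectionRegion n _) ≤ x :=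
    (pi_rejectionRegion_le (by fun_prop) (by positivity)
      (lintegral_exp_upper_null hv he he')).trans
      (ofReal_exp_neg_mul_le (by linarith) n.cast_nonneg)
  have hlower j : Q (rejectionRegion n _) ≤ x :=
    (pi_rejectionRegion_le (by fun_prop) (by positivity)
      (lintegral_exp_lower_null (g := g j) hv he)).trans
      (ofReal_exp_neg_mul_le (by linarith) n.cast_nonneg)
  have hmean j (hj : ε ^ 2 / 16 ≤ ∫ x, (g j x - f₀ x) ^ 2 ∂PX) :
      Q (rejectionRegion n fun z => sqResidual f₀ v z - sqResidual (g j) v z) ≤ x := by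
    refine (pi_rejectionRegion_le (by fun_prop) (by norm_num) (lintegral_exp_mean_null hv hf₀
      (hg j) hf₀F (hgF j))).trans (ofReal_exp_neg_mul_le
        ((testExponent_mul_sq_le_mean hv).trans ?_) n.cast_nonneg)
    gcongr
    norm_num
  refine (measure_union_biUnion_union_le Q hupper (fun j _ => hlower j) fun j _ => ?_).trans_eq ?_
  · by_cases hj : ε ^ 2 / 16 ≤ ∫ x, (g j x - f₀ x) ^ 2 ∂PX
    · simpa only [hj, Set.iUnion_true] using hmean j hj
    · simp only [hj, Set.iUnion_false, measure_empty, zero_le]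
  · rw [hx, ← ENNReal.ofReal_natCast, ← ENNReal.ofReal_mul (by positivity)]
    push_cast
    rfl

lemma integral_sq_sub_le_two_mul {Ω : Type*} [MeasurableSpace Ω] {P : Measure Ω}
    {f g h : Ω → ℝ} (hfg : Integrable (fun x => (f x - g x) ^ 2) P)
    (hgh : Integrable (fun x => (g x - h x) ^ 2) P) :
    ∫ x, (f x - h x) ^ 2 ∂P ≤
      2 * ∫ x, (f x - g x) ^ 2 ∂P + 2 * ∫ x, (g x - h x) ^ 2 ∂P := by
  rw [← integral_const_mul, ← integral_const_mul,
    ← integral_add (hfg.const_mul _) (hgh.const_mul _)]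
  refine integral_mono_of_nonneg (.of_forall fun x => sq_nonneg _)
    ((hfg.const_mul _).add (hgh.const_mul _)) (.of_forall fun x => ?_)
  linarith [add_sq_le (a := f x - g x) (b := g x - h x),
    congrArg (· ^ 2) (sub_add_sub_cancel (f x) (g x) (h x))]

lemma lt_integral_sq_sub_of_lt_l2dist {f g h : (Fin d → ℝ) → ℝ} {r : ℝ} (hr : 0 ≤ r)
    (hfg : Integrable (fun x => (f x - g x) ^ 2) PX)
    (hgh : Integrable (fun x => (g x - h x) ^ 2) PX)
    (hfg_le : ∫ x, (f x - g x) ^ 2 ∂PX ≤ r ^ 2 / 4) (hfh : r < l2dist d PX f h) :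
    r ^ 2 / 4 ≤ ∫ x, (g x - h x) ^ 2 ∂PX := by
  have hsq : r ^ 2 < ∫ x, (f x - h x) ^ 2 ∂PX := (Real.lt_sqrt hr).1 hfh
  linarith [integral_sq_sub_le_two_mul hfg hgh]

lemma lintegral_compl_testSet_le [IsProbabilityMeasure PX]
    [IsProbabilityMeasure (gaussRegLaw d PX f₀ v.toNNReal)] (hv : 0 < v) (hf₀ : Measurable f₀)
    (hf₀F : ∀ x, |f₀ x| ≤ F) (hg : ∀ θ, Measurable (g θ)) (hgF : ∀ θ x, |g θ x| ≤ F)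
    (hε : 0 ≤ ε) (hε1 : ε ≤ 1) (hε' : ε ≤ 2 * v)
    (hS : ∀ θ, ∃ j ∈ S, ∫ x, (g θ x - g j x) ^ 2 ∂PX ≤ (netFraction v F * ε) ^ 2)
    {θ : Θ} {s : ℝ} (hs : 0 < s) (hθ : ε < l2dist d PX (g θ) f₀ + |s - v|) :
    ∫⁻ D in (testSet n PX f₀ g S v ε)ᶜ, ∏ i, likelihoodRatio f₀ v (g θ) s (D i)
        ∂(Measure.pi fun _ : Fin n => gaussRegLaw d PX f₀ v.toNNReal) ≤
      ENNReal.ofReal (Real.exp (-(testExponent v F * ε ^ 2 * n))) := by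
  have he : 0 ≤ ε / (2 * v) := by positivity
  have he' : ε / (2 * v) ≤ 1 := (div_le_one (by positivity)).2 hε'
  have hev : v * (ε / (2 * v)) = ε / 2 := by field_simp
  have hratio := measurable_likelihoodRatio hf₀ (hg θ) v s
  have hvar := testExponent_mul_sq_le_variance (F := F) (ε := ε) hv
  have hmean := testExponent_mul_sq_le_mean (F := F) (ε := ε) hv
  obtain ⟨j, hj, hjθ⟩ := hS θ
  have hsub : _ ⊆ testSet n PX f₀ g S v ε :=
    (Set.subset_biUnion_of_mem (u := fun j => _ ∪ _) hj).trans Set.subset_union_right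
  rcases le_or_gt (v * (1 + ε / (2 * v))) s with hupper | hupper
  · exact (setLIntegral_compl_prod_le (by fun_prop) hratio (by positivity)
      (lintegral_exp_upper_alt hv he he' hupper) Set.subset_union_left).trans
      (ofReal_exp_neg_mul_le hvar n.cast_nonneg)
  rcases le_or_gt s (v * (1 - ε / (2 * v))) with hlower | hlower
  · exact (setLIntegral_compl_prod_le (by fun_prop) hratio (by positivity)
      (lintegral_exp_lower_alt hv he hs hlower (hg θ) (hg j) (hgF θ) (hgF j)
        (hjθ.trans (sq_netFraction_mul_le_variance hv hε hε1)))
      (Set.subset_union_left.trans hsub)).trans (ofReal_exp_neg_mul_le hvar n.cast_nonneg)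
  have hsv : |s - v| ≤ ε / 2 := abs_le.2 ⟨by linarith, by linarith⟩
  have hκ : ε ^ 2 / 16 ≤ ∫ x, (g j x - f₀ x) ^ 2 ∂PX := by
    have := lt_integral_sq_sub_of_lt_l2dist (r := ε / 2) (by positivity)
      (integrable_sq_sub_of_abs_le (hg θ) (hg j) (hgF θ) (hgF j))
      (integrable_sq_sub_of_abs_le (hg j) hf₀ (hgF j) hf₀F)
      (hjθ.trans ((sq_netFraction_mul_le_sq hv).trans_eq (by ring))) (by linarith)
    linarith
  refine (setLIntegral_compl_prod_le (by fun_prop) hratio (by norm_num)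
    (lintegral_exp_mean_alt hv hs (by nlinarith) hf₀ (hg θ) (hg j) hf₀F (hgF θ) (hgF j) hκ
      (hjθ.trans (sq_netFraction_mul_le_mean hv))) ?_).trans
    (ofReal_exp_neg_mul_le hmean n.cast_nonneg)
  exact (Set.subset_iUnion_of_subset hκ subset_rfl).trans (Set.subset_union_right.trans hsub)

end TestSet

/-! ### Posterior mass -/

section Posterior

variable {Ω α : Type*} [MeasurableSpace Ω] [MeasurableSpace α] {Q : Measure Ω} {Pr : Measure α}
  {R : Ω → α → ℝ≥0∞}

lemma two_le_add_inv (x : ℝ≥0∞) : 2 ≤ x + x⁻¹ := by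
  rcases eq_or_ne x 0 with rfl | hx0
  · simp
  rcases eq_or_ne x ∞ with rfl | hxt
  · simp
  lift x to ℝ≥0 using hxt
  have hx : x ≠ 0 := by exact_mod_cast hx0
  rw [← ENNReal.coe_inv hx]
  norm_cast
  rw [← NNReal.coe_le_coe]
  push_cast
  have : (0 : ℝ) < x := by positivity
  have heq : (x : ℝ) + (x : ℝ)⁻¹ - 2 = (x - 1) ^ 2 / x := by
    field_simp
    ring
  have : (0 : ℝ) ≤ (x - 1) ^ 2 / x := by positivity
  linarith

lemma div_le_lintegral_of_lintegral_inv_le [IsFiniteMeasure Pr] {r : α → ℝ≥0∞}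
    (hr : Measurable r) {B : Set α} {U : ℝ≥0∞} (hU0 : U ≠ 0) (hU : U ≠ ∞)
    (h : ∫⁻ p in B, (r p)⁻¹ ∂Pr ≤ Pr B * U) : Pr B / U ≤ ∫⁻ p, r p ∂Pr := by
  have hpt p : 2 ≤ U * r p + U⁻¹ * (r p)⁻¹ := by
    rw [← ENNReal.mul_inv (.inl hU0) (.inl hU)]
    exact two_le_add_inv _
  have hsum : Pr B + Pr B ≤ U * (∫⁻ p in B, r p ∂Pr) + Pr B :=
    calc Pr B + Pr B = ∫⁻ _ in B, 2 ∂Pr := by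
          rw [setLIntegral_const, two_mul]
      _ ≤ ∫⁻ p in B, (U * r p + U⁻¹ * (r p)⁻¹) ∂Pr := lintegral_mono hpt
      _ = U * (∫⁻ p in B, r p ∂Pr) + U⁻¹ * ∫⁻ p in B, (r p)⁻¹ ∂Pr := by
          rw [lintegral_add_left (hr.const_mul _), lintegral_const_mul _ hr,
            lintegral_const_mul _ (by fun_prop)]
      _ ≤ U * (∫⁻ p in B, r p ∂Pr) + U⁻¹ * (Pr B * U) := by gcongr
      _ = U * (∫⁻ p in B, r p ∂Pr) + Pr B := by
          rw [mul_comm (Pr B), ← mul_assoc, ENNReal.inv_mul_cancel hU0 hU, one_mul]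
  rw [ENNReal.div_le_iff' hU0 hU]
  refine ((ENNReal.add_le_add_iff_right (measure_ne_top Pr B)).1 hsum).trans ?_
  gcongr
  exact Measure.restrict_le_self

lemma measure_lt_lintegral_inv_le [SFinite Q] [IsFiniteMeasure Pr]
    (hR : Measurable (Function.uncurry R)) {B : Set α} (hB : Pr B ≠ 0) {Λ t : ℝ≥0∞}
    (hΛ0 : Λ ≠ 0) (hΛ : Λ ≠ ∞) (ht0 : t ≠ 0) (ht : t ≠ ∞)
    (hBΛ : ∀ p ∈ B, ∫⁻ ω, (R ω p)⁻¹ ∂Q ≤ Λ) :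
    Q {ω | Pr B * (t * Λ) ≤ ∫⁻ p in B, (R ω p)⁻¹ ∂Pr} ≤ t⁻¹ := by
  have hBΛ0 : Λ * Pr B ≠ 0 := mul_ne_zero hΛ0 hB
  have hBΛt : Λ * Pr B ≠ ∞ := ENNReal.mul_ne_top hΛ (measure_ne_top _ _)
  have hR' : Measurable (Function.uncurry fun ω p => (R ω p)⁻¹) := hR.inv
  have hintegral : ∫⁻ ω, ∫⁻ p in B, (R ω p)⁻¹ ∂Pr ∂Q ≤ Λ * Pr B := by
    rw [lintegral_lintegral_swap hR'.aemeasurable, ← setLIntegral_const]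
    exact setLIntegral_mono measurable_const hBΛ
  rw [show Pr B * (t * Λ) = t * (Λ * Pr B) by ring]
  refine (meas_ge_le_lintegral_div hR'.lintegral_prod_right'.aemeasurable
    (mul_ne_zero ht0 hBΛ0) (ENNReal.mul_ne_top ht hBΛt)).trans ?_
  refine (ENNReal.div_le_div_right hintegral _).trans_eq ?_
  rw [ENNReal.div_eq_inv_mul, ENNReal.mul_inv (.inl ht0) (.inl ht), mul_assoc,
    ENNReal.inv_mul_cancel hBΛ0 hBΛt, mul_one]

lemma measure_le_setLIntegral_inter_compl_le [SFinite Q] [IsProbabilityMeasure Pr]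
    (hR : Measurable (Function.uncurry R)) {A : Set α} {Φ : Set Ω} {τ w : ℝ≥0∞}
    (hw0 : w ≠ 0) (hw : w ≠ ∞) (hA : ∀ p ∈ A, ∫⁻ ω in Φᶜ, R ω p ∂Q ≤ τ) :
    Q ({ω | w ≤ ∫⁻ p in A, R ω p ∂Pr} ∩ Φᶜ) ≤ τ / w := by
  have hmeas : Measurable fun ω => ∫⁻ p in A, R ω p ∂Pr := hR.lintegral_prod_right'
  have hintegral : ∫⁻ ω in Φᶜ, ∫⁻ p in A, R ω p ∂Pr ∂Q ≤ τ := by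
    rw [lintegral_lintegral_swap hR.aemeasurable]
    refine (setLIntegral_mono measurable_const hA).trans ?_
    rw [setLIntegral_const]
    exact mul_le_of_le_one_right' prob_le_one
  rw [← Measure.restrict_apply (measurableSet_le measurable_const hmeas)]
  exact (meas_ge_le_lintegral_div hmeas.aemeasurable hw0 hw).trans
    (ENNReal.div_le_div_right hintegral _)

lemma measure_mul_lintegral_le_setLIntegral_le [SFinite Q] [IsProbabilityMeasure Pr]
    (hR : Measurable (Function.uncurry R)) {A B : Set α} (hB : Pr B ≠ 0) {Φ : Set Ω}
    {τ Λ t δ : ℝ≥0∞} (hA : ∀ p ∈ A, ∫⁻ ω in Φᶜ, R ω p ∂Q ≤ τ)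
    (hBΛ : ∀ p ∈ B, ∫⁻ ω, (R ω p)⁻¹ ∂Q ≤ Λ) (hΛ0 : Λ ≠ 0) (hΛ : Λ ≠ ∞) (ht0 : t ≠ 0)
    (ht : t ≠ ∞) (hδ0 : δ ≠ 0) (hδ : δ ≠ ∞) :
    Q {ω | δ * ∫⁻ p, R ω p ∂Pr ≤ ∫⁻ p in A, R ω p ∂Pr} ≤
      Q Φ + t⁻¹ + τ / (δ * (Pr B / (t * Λ))) := by
  have hU0 : t * Λ ≠ 0 := mul_ne_zero ht0 hΛ0
  have hUt : t * Λ ≠ ∞ := ENNReal.mul_ne_top ht hΛ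
  have hw0 : δ * (Pr B / (t * Λ)) ≠ 0 := mul_ne_zero hδ0 (ENNReal.div_pos hB hUt).ne'
  have hwt : δ * (Pr B / (t * Λ)) ≠ ∞ :=
    ENNReal.mul_ne_top hδ (ENNReal.div_ne_top (measure_ne_top _ _) hU0)
  have hsub : {ω | δ * ∫⁻ p, R ω p ∂Pr ≤ ∫⁻ p in A, R ω p ∂Pr} ⊆
      (Φ ∪ {ω | Pr B * (t * Λ) ≤ ∫⁻ p in B, (R ω p)⁻¹ ∂Pr}) ∪
        ({ω | δ * (Pr B / (t * Λ)) ≤ ∫⁻ p in A, R ω p ∂Pr} ∩ Φᶜ) := by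
    intro ω hω
    by_cases hΦ : ω ∈ Φ
    · exact .inl (.inl hΦ)
    rcases le_or_gt (Pr B * (t * Λ)) (∫⁻ p in B, (R ω p)⁻¹ ∂Pr) with hlarge | hsmall
    · exact .inl (.inr hlarge)
    have hevidence := div_le_lintegral_of_lintegral_inv_le
      (hR.comp measurable_prodMk_left) hU0 hUt hsmall.le
    exact .inr ⟨(mul_le_mul_right hevidence δ).trans hω, hΦ⟩
  refine (measure_mono hsub).trans ((measure_union_le _ _).trans (add_le_add ?_
    (measure_le_setLIntegral_inter_compl_le hR hw0 hwt hA)))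
  exact (measure_union_le _ _).trans
    (add_le_add le_rfl (measure_lt_lintegral_inv_le hR hB hΛ0 hΛ ht0 ht hBΛ))

end Posterior

/-! ### Continuity of networks in the parameters -/

section ParameterContinuity

variable {ν : ℝ}

lemma continuous_foldl {A X Λ : Type*} [TopologicalSpace A] [TopologicalSpace X]
    {f : A → X → Λ → X} (hf : ∀ l, Continuous fun p : A × X => f p.1 p.2 l) (ls : List Λ)
    {h : A → X} (hh : Continuous h) : Continuous fun p => ls.foldl (f p) (h p) := by
  induction ls generalizing h with
  | nil => exact hh
  | cons l _ ih => exact ih ((hf l).comp (continuous_id.prodMk hh))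

@[fun_prop]
lemma continuous_lrelu : Continuous (lrelu ν) := by
  unfold lrelu
  fun_prop

lemma continuous_netOfParams (ν : ℝ) (d r L : ℕ) :
    Continuous fun p : (ParamIdx d r L → ℝ) × (Fin d → ℝ) => netOfParams ν d r L p.1 p.2 := by
  have hhidden := continuous_foldl (A := (ParamIdx d r L → ℝ) × (Fin d → ℝ))
    (f := fun p (h : Fin r → ℝ) l i =>
      lrelu ν ((∑ j, p.1 (.inr (.inr (.inl (l, i, j)))) * h j) +
        p.1 (.inr (.inr (.inr (.inl (l, i)))))))
    (fun l => by fun_prop) (List.finRange (L - 1))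
    (h := fun p i => lrelu ν ((∑ j, p.1 (.inl (i, j)) * p.2 j) + p.1 (.inr (.inl i))))
    (by fun_prop)
  simp only [netOfParams]
  fun_prop

lemma lrelu_zero (ν : ℝ) : lrelu ν 0 = 0 := by simp [lrelu]

lemma lrelu_of_nonneg (hν : ν ≤ 1) {x : ℝ} (hx : 0 ≤ x) : lrelu ν x = x :=
  max_eq_left (mul_le_of_le_one_left hx hν)

lemma abs_lrelu_sub_lrelu_le (hν0 : 0 ≤ ν) (hν : ν ≤ 1) (x y : ℝ) :
    |lrelu ν x - lrelu ν y| ≤ |x - y| := by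
  refine (abs_max_sub_max_le_max _ _ _ _).trans (max_le le_rfl ?_)
  rw [← mul_sub, abs_mul, abs_of_nonneg hν0]
  exact mul_le_of_le_one_left (abs_nonneg _) hν

lemma abs_lrelu_le (hν0 : 0 ≤ ν) (hν : ν ≤ 1) (x : ℝ) : |lrelu ν x| ≤ |x| := by
  simpa [lrelu_zero] using abs_lrelu_sub_lrelu_le hν0 hν x 0

lemma abs_sum_mul_add_le {m : ℕ} {w h : Fin m → ℝ} {b B G H : ℝ} (hB : 0 ≤ B)
    (hG : B * (m + 1) ≤ G) (hH : 1 ≤ H) (hw : ∀ j, |w j| ≤ B) (hb : |b| ≤ B)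
    (hh : ∀ j, |h j| ≤ H) : |(∑ j, w j * h j) + b| ≤ G * H := by
  have hsum : |∑ j, w j * h j| ≤ m * (B * H) := by
    refine (Finset.abs_sum_le_sum_abs _ _).trans
      ((Finset.sum_le_card_nsmul _ _ (B * H) fun j _ => ?_).trans_eq (by simp))
    rw [abs_mul]
    exact mul_le_mul (hw j) (hh j) (abs_nonneg _) hB
  calc |(∑ j, w j * h j) + b| ≤ m * (B * H) + B :=
        (abs_add_le _ _).trans (add_le_add hsum hb)
    _ ≤ B * (m + 1) * H := by nlinarith
    _ ≤ G * H := by gcongr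

lemma abs_affine_sub_affine_le {m : ℕ} {w w' h h' : Fin m → ℝ} {b b' B G H ρ k : ℝ} (hB : 1 ≤ B)
    (hρ : 0 ≤ ρ) (hk : 0 ≤ k) (hG : B * (m + 1) ≤ G) (hH : 1 ≤ H) (hw' : ∀ j, |w' j| ≤ B)
    (hww : ∀ j, |w j - w' j| ≤ ρ) (hbb : |b - b'| ≤ ρ) (hh : ∀ j, |h j| ≤ H)
    (hhh : ∀ j, |h j - h' j| ≤ ρ * (k * H)) :
    |((∑ j, w j * h j) + b) - ((∑ j, w' j * h' j) + b')| ≤ ρ * ((k + 1) * (G * H)) := by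
  have hterm j : |w j * h j - w' j * h' j| ≤ ρ * H + B * (ρ * (k * H)) := by
    rw [show w j * h j - w' j * h' j = (w j - w' j) * h j + w' j * (h j - h' j) by ring]
    refine (abs_add_le _ _).trans (add_le_add ?_ ?_) <;> rw [abs_mul]
    · exact mul_le_mul (hww j) (hh j) (abs_nonneg _) hρ
    · exact mul_le_mul (hw' j) (hhh j) (abs_nonneg _) (by linarith)
  have hsum : |∑ j, (w j * h j - w' j * h' j)| ≤ m * (ρ * H + B * (ρ * (k * H))) :=
    (Finset.abs_sum_le_sum_abs _ _).trans
      ((Finset.sum_le_card_nsmul _ _ _ fun j _ => hterm j).trans_eq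
        (by rw [Finset.card_univ, Fintype.card_fin, nsmul_eq_mul]))
  have hρH : ρ ≤ ρ * H := le_mul_of_one_le_right hρ hH
  have hmG : (m : ℝ) + 1 ≤ G := (le_mul_of_one_le_left (by positivity) hB).trans hG
  have hmB : m * B ≤ G := by nlinarith
  rw [add_sub_add_comm, ← Finset.sum_sub_distrib]
  calc _ ≤ m * (ρ * H + B * (ρ * (k * H))) + ρ := (abs_add_le _ _).trans (add_le_add hsum hbb)
    _ ≤ (m + 1) * (ρ * H) + m * B * (ρ * (k * H)) := by linarith
    _ ≤ G * (ρ * H) + G * (ρ * (k * H)) := by gcongr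
    _ = ρ * ((k + 1) * (G * H)) := by ring

lemma abs_foldl_sub_foldl_le {Λ : Type*} {r : ℕ} (hν0 : 0 ≤ ν) (hν : ν ≤ 1) {B G ρ : ℝ}
    (hB : 1 ≤ B) (hρ : 0 ≤ ρ) (hG : B * (r + 1) ≤ G) {W W' : Λ → Fin r → Fin r → ℝ}
    {b b' : Λ → Fin r → ℝ} (hW : ∀ l i j, |W l i j| ≤ B) (hW' : ∀ l i j, |W' l i j| ≤ B)
    (hb : ∀ l i, |b l i| ≤ B) (hWW : ∀ l i j, |W l i j - W' l i j| ≤ ρ)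
    (hbb : ∀ l i, |b l i - b' l i| ≤ ρ) (ls : List Λ) {h h' : Fin r → ℝ} {k H : ℝ}
    (hk : 0 ≤ k) (hH : 1 ≤ H) (hh : ∀ i, |h i| ≤ H) (hhh : ∀ i, |h i - h' i| ≤ ρ * (k * H)) :
    let out := ls.foldl (fun h l i => lrelu ν ((∑ j, W l i j * h j) + b l i)) h
    let out' := ls.foldl (fun h l i => lrelu ν ((∑ j, W' l i j * h j) + b' l i)) h'
    (∀ i, |out i| ≤ G ^ ls.length * H) ∧
      ∀ i, |out i - out' i| ≤ ρ * ((k + ls.length) * (G ^ ls.length * H)) := by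
  induction ls generalizing h h' k H with
  | nil => simpa using ⟨hh, hhh⟩
  | cons l ls ih =>
    have hG1 : 1 ≤ G := by nlinarith [(r.cast_nonneg : (0 : ℝ) ≤ r)]
    have hout i : |lrelu ν ((∑ j, W l i j * h j) + b l i)| ≤ G * H :=
      (abs_lrelu_le hν0 hν _).trans
        (abs_sum_mul_add_le (by linarith) hG hH (hW l i) (hb l i) hh)
    have hdiff i : |lrelu ν ((∑ j, W l i j * h j) + b l i) -
        lrelu ν ((∑ j, W' l i j * h' j) + b' l i)| ≤ ρ * ((k + 1) * (G * H)) :=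
      (abs_lrelu_sub_lrelu_le hν0 hν _ _).trans
        (abs_affine_sub_affine_le hB hρ hk hG hH (hW' l i) (hWW l i) (hbb l i) hh hhh)
    have hrest := ih (by linarith) (one_le_mul_of_one_le_of_one_le hG1 hH) hout hdiff
    simp only [List.foldl_cons, List.length_cons, pow_succ, mul_assoc, Nat.cast_add, Nat.cast_one]
    rw [add_comm (ls.length : ℝ), ← add_assoc]
    exact hrest

/-- A Lipschitz constant of `θ ↦ netOfParams ν d r L θ x`, in the sup norm, over the parameters
bounded by `B` and the inputs `x ∈ [-a, a]^d`. -/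
def paramLipschitz (d r L : ℕ) (B a : ℝ) : ℝ := (L + 1) * ((B * (r + d + 1)) ^ (L + 1) * a)

lemma abs_netOfParams_sub_le (hν0 : 0 ≤ ν) (hν : ν ≤ 1) {d r L : ℕ} (hL : 1 ≤ L) {a B ρ : ℝ}
    (ha : 1 ≤ a) (hB : 1 ≤ B) (hρ : 0 ≤ ρ) {θ θ' : ParamIdx d r L → ℝ} (hθ : ∀ i, |θ i| ≤ B)
    (hθ' : ∀ i, |θ' i| ≤ B) (hθθ' : ∀ i, |θ i - θ' i| ≤ ρ) {x : Fin d → ℝ}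
    (hx : ∀ j, |x j| ≤ a) :
    |netOfParams ν d r L θ x - netOfParams ν d r L θ' x| ≤
      ρ * paramLipschitz d r L B a := by
  obtain ⟨l, rfl⟩ := Nat.exists_eq_add_of_le' hL
  rw [paramLipschitz]
  set G : ℝ := B * (r + d + 1) with hGdef
  have hGr : B * (r + 1) ≤ G := by
    rw [hGdef]
    gcongr
    linarith [(d.cast_nonneg : (0 : ℝ) ≤ d)]
  have hGd : B * (d + 1) ≤ G := by
    rw [hGdef]
    gcongr
    linarith [(r.cast_nonneg : (0 : ℝ) ≤ r)]
  have hG1 : 1 ≤ G := by nlinarith [(r.cast_nonneg : (0 : ℝ) ≤ r)]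
  have hfirst i : |lrelu ν ((∑ j, θ (.inl (i, j)) * x j) + θ (.inr (.inl i)))| ≤ G * a :=
    (abs_lrelu_le hν0 hν _).trans
      (abs_sum_mul_add_le (by linarith) hGd ha (fun j => hθ _) (hθ _) hx)
  have hfirst_sub i : |lrelu ν ((∑ j, θ (.inl (i, j)) * x j) + θ (.inr (.inl i))) -
      lrelu ν ((∑ j, θ' (.inl (i, j)) * x j) + θ' (.inr (.inl i)))| ≤ ρ * ((0 + 1) * (G * a)) :=
    (abs_lrelu_sub_lrelu_le hν0 hν _ _).trans
      (abs_affine_sub_affine_le hB hρ le_rfl hGd ha (fun j => hθ' _) (fun j => hθθ' _) (hθθ' _)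
        hx (by simp))
  obtain ⟨hhidden, hhidden_sub⟩ := abs_foldl_sub_foldl_le hν0 hν hB hρ hGr
    (W := fun l i j => θ (.inr (.inr (.inl (l, i, j)))))
    (W' := fun l i j => θ' (.inr (.inr (.inl (l, i, j)))))
    (b := fun l i => θ (.inr (.inr (.inr (.inl (l, i))))))
    (b' := fun l i => θ' (.inr (.inr (.inr (.inl (l, i))))))
    (fun _ _ _ => hθ _) (fun _ _ _ => hθ' _) (fun _ _ => hθ _) (fun _ _ _ => hθθ' _)
    (fun _ _ => hθθ' _) (List.finRange (l + 1 - 1)) (by norm_num)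
    (one_le_mul_of_one_le_of_one_le hG1 ha) hfirst hfirst_sub
  refine (abs_affine_sub_affine_le hB hρ (by positivity) hGr
    (one_le_mul_of_one_le_of_one_le (one_le_pow₀ hG1) (one_le_mul_of_one_le_of_one_le hG1 ha))
    (fun j => hθ' _) (fun j => hθθ' _) (hθθ' _) hhidden hhidden_sub).trans_eq ?_
  simp only [List.length_finRange, Nat.add_sub_cancel]
  push_cast
  ring

end ParameterContinuity

/-! ### Padding networks to a given architecture -/

section Padding

variable {ν B : ℝ} {d r r₀ L : ℕ}

/-- The parameter vector `θ` of a network with `L` hidden layers. -/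
def LNet.toParams (net : LNet d r) (hlen : net.hid.length = L - 1) : ParamIdx d r L → ℝ
  | .inl (i, j) => net.W0 i j
  | .inr (.inl i) => net.b0 i
  | .inr (.inr (.inl (l, i, j))) => (net.hid.get (l.cast hlen.symm)).1 i j
  | .inr (.inr (.inr (.inl (l, i)))) => (net.hid.get (l.cast hlen.symm)).2 i
  | .inr (.inr (.inr (.inr (.inl i)))) => net.Wout i
  | .inr (.inr (.inr (.inr (.inr ())))) => net.bout

lemma netOfParams_toParams (ν : ℝ) (net : LNet d r) (hlen : net.hid.length = L - 1)
    (x : Fin d → ℝ) : netOfParams ν d r L (net.toParams hlen) x = net.eval ν x := by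
  have hhid : net.hid = (List.finRange (L - 1)).map fun l => net.hid.get (l.cast hlen.symm) :=
    List.ext_get (by simp [hlen]) fun n h₁ h₂ => by simp
  unfold netOfParams LNet.eval
  rw [hhid, List.foldl_map]
  rfl

lemma LNet.bounded.abs_toParams_le {net : LNet d r} (h : net.bounded B)
    (hlen : net.hid.length = L - 1) (i : ParamIdx d r L) : |net.toParams hlen i| ≤ B := by
  obtain ⟨hW0, hb0, hhid, hWout, hbout⟩ := h
  rcases i with ⟨i, j⟩ | i | ⟨l, i, j⟩ | ⟨l, i⟩ | i | _
  · exact hW0 i j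
  · exact hb0 i
  · exact (hhid _ (List.get_mem _ _)).1 i j
  · exact (hhid _ (List.get_mem _ _)).2 i
  · exact hWout i
  · exact hbout

lemma LNet.bounded.mono {net : LNet d r} {B' : ℝ} (h : net.bounded B) (hB : B ≤ B') :
    net.bounded B' :=
  ⟨fun i j => (h.1 i j).trans hB, fun i => (h.2.1 i).trans hB,
    fun p hp => ⟨fun i j => ((h.2.2.1 p hp).1 i j).trans hB,
      fun i => ((h.2.2.1 p hp).2 i).trans hB⟩,
    fun i => (h.2.2.2.1 i).trans hB, h.2.2.2.2.trans hB⟩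

/-- Extension by zero of a vector, or of the family of rows of a matrix, to the index set
`Fin r`. -/
def zeroPad {Y : Type*} [Zero Y] (f : Fin r₀ → Y) : Fin r → Y :=
  fun j => if h : j.1 < r₀ then f ⟨j.1, h⟩ else 0

lemma zeroPad_induction {Y : Type*} [Zero Y] {P : Y → Prop} {f : Fin r₀ → Y} (h0 : P 0)
    (hf : ∀ i, P (f i)) (j : Fin r) : P (zeroPad f j) := by
  unfold zeroPad
  split_ifs
  · exact hf _
  · exact h0

lemma sum_zeroPad_mul_zeroPad (hr : r₀ ≤ r) (f g : Fin r₀ → ℝ) :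
    ∑ j : Fin r, zeroPad f j * zeroPad g j = ∑ j, f j * g j := by
  refine (Fintype.sum_of_injective (Fin.castLE hr) (Fin.castLE_injective hr) _ _ ?_ ?_).symm
  · intro i hi
    have : ¬ i.1 < r₀ := fun h => hi ⟨⟨i.1, h⟩, rfl⟩
    simp [zeroPad, this]
  · simp [zeroPad]

lemma lrelu_layer_zeroPad {m : ℕ} (W : Fin r₀ → Fin m → ℝ) (b : Fin r₀ → ℝ) (x : Fin m → ℝ) :
    (fun i : Fin r => lrelu ν ((∑ j, zeroPad W i j * x j) + zeroPad b i)) =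
      zeroPad fun i => lrelu ν ((∑ j, W i j * x j) + b i) := by
  funext i
  by_cases hi : i.1 < r₀
  · simp [zeroPad, hi]
  · simp [zeroPad, hi, lrelu_zero]

/-- The network of width `r` obtained by adding hidden units with zero weights. -/
def LNet.padWidth (r : ℕ) (net : LNet d r₀) : LNet d r where
  W0 := zeroPad net.W0
  b0 := zeroPad net.b0
  hid := net.hid.map fun p => (zeroPad fun i => zeroPad (p.1 i), zeroPad p.2)
  Wout := zeroPad net.Wout
  bout := net.bout

lemma LNet.bounded.padWidth {net : LNet d r₀} (h : net.bounded B) (hB : 0 ≤ B) :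
    (net.padWidth r).bounded B := by
  obtain ⟨hW0, hb0, hhid, hWout, hbout⟩ := h
  have h0 : |(0 : ℝ)| ≤ B := by rwa [abs_zero]
  refine ⟨zeroPad_induction (P := fun w : Fin d → ℝ => ∀ j, |w j| ≤ B) (fun _ => h0) hW0,
    zeroPad_induction (P := (|·| ≤ B)) h0 hb0, fun p hp => ?_,
    zeroPad_induction (P := (|·| ≤ B)) h0 hWout, hbout⟩
  obtain ⟨q, hq, rfl⟩ := List.mem_map.1 hp
  exact ⟨zeroPad_induction (P := fun w : Fin r → ℝ => ∀ j, |w j| ≤ B) (fun _ => h0)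
      fun i => zeroPad_induction (P := (|·| ≤ B)) h0 ((hhid q hq).1 i),
    zeroPad_induction (P := (|·| ≤ B)) h0 (hhid q hq).2⟩

lemma eval_padWidth (ν : ℝ) (hr : r₀ ≤ r) (net : LNet d r₀) (x : Fin d → ℝ) :
    (net.padWidth r).eval ν x = net.eval ν x := by
  have hlayer (p : (Fin r₀ → Fin r₀ → ℝ) × (Fin r₀ → ℝ)) (h : Fin r₀ → ℝ) :
      (fun i : Fin r => lrelu ν ((∑ j, zeroPad (fun i => (zeroPad (p.1 i) : Fin r → ℝ)) i j *
        zeroPad h j) + zeroPad p.2 i)) =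
      zeroPad fun i => lrelu ν ((∑ j, p.1 i j * h j) + p.2 i) := by
    rw [lrelu_layer_zeroPad]
    simp_rw [sum_zeroPad_mul_zeroPad hr]
  have hfold (l : List ((Fin r₀ → Fin r₀ → ℝ) × (Fin r₀ → ℝ))) (h : Fin r₀ → ℝ) :
      l.foldl (fun (h : Fin r → ℝ) p i =>
        lrelu ν ((∑ j, zeroPad (fun i => (zeroPad (p.1 i) : Fin r → ℝ)) i j * h j) +
          zeroPad p.2 i)) (zeroPad h) =
      zeroPad (l.foldl (fun h p i => lrelu ν ((∑ j, p.1 i j * h j) + p.2 i)) h) := by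
    induction l generalizing h with
    | nil => rfl
    | cons p l ih => rw [List.foldl_cons, List.foldl_cons, hlayer, ih]
  simp only [LNet.eval, LNet.padWidth, List.foldl_map]
  rw [lrelu_layer_zeroPad, hfold, sum_zeroPad_mul_zeroPad hr]

/-- The network with `q + 1` additional hidden layers which computes the same function wherever
that function is at least `-b`. The first new layer computes the output shifted by `b`, which the
activation leaves unchanged where it is nonnegative, and the others copy the unit `i₀`. -/
def LNet.padDepth (i₀ : Fin r) (b : ℝ) (q : ℕ) (net : LNet d r) : LNet d r where
  W0 := net.W0
  b0 := net.b0
  hid := net.hid ++ (fun _ => net.Wout, fun _ => net.bout + b) ::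
    List.replicate q ((fun _ => Pi.single i₀ 1 : Fin r → Fin r → ℝ), (0 : Fin r → ℝ))
  Wout := Pi.single i₀ 1
  bout := -b

lemma LNet.bounded.padDepth (i₀ : Fin r) {b : ℝ} (hB : 0 ≤ B) (hb : 0 ≤ b) (q : ℕ)
    {net : LNet d r} (h : net.bounded B) : (net.padDepth i₀ b q).bounded (B + b + 1) := by
  obtain ⟨hW0, hb0, hhid, hWout, -⟩ := h.mono (by linarith : B ≤ B + b + 1)
  have hsingle (j : Fin r) : |(Pi.single i₀ 1 : Fin r → ℝ) j| ≤ B + b + 1 := by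
    rw [Pi.single_apply]
    split_ifs <;> simp <;> linarith
  refine ⟨hW0, hb0, fun p hp => ?_, hsingle, ?_⟩
  · simp only [LNet.padDepth, List.mem_append, List.mem_cons, List.mem_replicate] at hp
    rcases hp with hp | rfl | ⟨-, rfl⟩
    · exact hhid p hp
    · refine ⟨fun _ => hWout, fun _ => (abs_add_le _ _).trans ?_⟩
      rw [abs_of_nonneg hb]
      linarith [h.2.2.2.2]
    · exact ⟨fun _ => hsingle, fun _ => by simp only [Pi.zero_apply, abs_zero]; linarith⟩
  · simp only [LNet.padDepth, abs_neg, abs_of_nonneg hb]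
    linarith

lemma eval_padDepth (hν : ν ≤ 1) (i₀ : Fin r) {b : ℝ} (q : ℕ) (net : LNet d r) {x : Fin d → ℝ}
    (hx : -b ≤ net.eval ν x) : (net.padDepth i₀ b q).eval ν x = net.eval ν x := by
  have hselect (h : Fin r → ℝ) : ∑ j, (Pi.single i₀ 1 : Fin r → ℝ) j * h j = h i₀ := by
    simp [Pi.single_apply]
  have hcopy (q : ℕ) (h : Fin r → ℝ) (hh : 0 ≤ h i₀) :
      (List.replicate q ((fun _ => Pi.single i₀ 1, 0) : (Fin r → Fin r → ℝ) × (Fin r → ℝ))).foldl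
        (fun h p i => lrelu ν ((∑ j, p.1 i j * h j) + p.2 i)) h i₀ = h i₀ := by
    induction q generalizing h with
    | zero => rfl
    | succ q ih =>
      have hstep : lrelu ν ((∑ j, (Pi.single i₀ 1 : Fin r → ℝ) j * h j) + 0) = h i₀ := by
        rw [hselect, add_zero, lrelu_of_nonneg hν hh]
      rw [List.replicate_succ, List.foldl_cons, ih]
      · exact hstep
      · exact hh.trans_eq hstep.symm
  have hshift : lrelu ν (net.eval ν x + b) = net.eval ν x + b :=
    lrelu_of_nonneg hν (by linarith)
  simp only [LNet.eval, add_assoc] at hshift hx ⊢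
  simp only [LNet.padDepth, List.foldl_append, List.foldl_cons, hselect]
  rw [hcopy q _ (by rw [hshift]; linarith), hshift]
  ring

lemma exists_netOfParams_eq_eval (hν : ν ≤ 1) (hr : r₀ ≤ r) (hr' : 0 < r) {b : ℝ} (hB : 0 ≤ B)
    (hb : 0 ≤ b) {net : LNet d r₀} (hnet : net.bounded B) (hL : net.hid.length + 1 ≤ L) :
    ∃ θ : ParamIdx d r L → ℝ, (∀ i, |θ i| ≤ B + b + 1) ∧
      ∀ x, -b ≤ net.eval ν x → netOfParams ν d r L θ x = net.eval ν x := by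
  have hwidth := hnet.padWidth (r := r) hB
  have hlen : (net.padWidth r).hid.length = net.hid.length := by simp [LNet.padWidth]
  rcases hL.eq_or_lt with hL | hL
  · have hlen' : (net.padWidth r).hid.length = L - 1 := by lia
    refine ⟨(net.padWidth r).toParams hlen', fun i => ?_, fun x _ => ?_⟩
    · exact (hwidth.abs_toParams_le hlen' i).trans (by linarith)
    · rw [netOfParams_toParams, eval_padWidth ν hr]
  · let i₀ : Fin r := ⟨0, hr'⟩
    have hlen' : ((net.padWidth r).padDepth i₀ b (L - net.hid.length - 2)).hid.length = L - 1 := by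
      simp only [LNet.padDepth, List.length_append, List.length_cons, List.length_replicate, hlen]
      lia
    refine ⟨_, (hwidth.padDepth i₀ hB hb _).abs_toParams_le hlen', fun x hx => ?_⟩
    rw [netOfParams_toParams, eval_padDepth hν, eval_padWidth ν hr]
    rwa [eval_padWidth ν hr]

end Padding

/-! ### Posterior concentration from covering numbers and prior mass -/

section PosteriorConcentration

lemma postMass_mono {α : Type*} [MeasurableSpace α] {prior : Measure α} {lik : α → ℝ}
    {A A' : Set α} (h : A ⊆ A') : postMass prior lik A ≤ postMass prior lik A' :=
  ENNReal.div_le_div_right (lintegral_mono_set h) _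

lemma postMass_congr_ae {α : Type*} [MeasurableSpace α] {prior : Measure α} {lik : α → ℝ}
    {A A' : Set α} (h : A =ᵐ[prior] A') : postMass prior lik A = postMass prior lik A' := by
  unfold postMass
  rw [setLIntegral_congr h]

variable {d n : ℕ} {PX : Measure (Fin d → ℝ)} {f₀ : (Fin d → ℝ) → ℝ} {Θ : Type*}
  {g : Θ → (Fin d → ℝ) → ℝ} {v F : ℝ}

/-- The likelihood of `(θ, σ²)` given the data `D` in the Gaussian regression model with
regression functions `g θ`. -/
def regressionLik {X : Type*} (g : Θ → X → ℝ) (D : Fin n → X × ℝ) (p : Θ × ℝ) : ℝ :=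
  ∏ i, gpdf (g p.1 (D i).1) p.2 (D i).2

/-- The parameters `(θ, σ²)` whose regression function is uniformly `τ`-close to `f₀` and whose
variance exceeds `v` by at most the factor `1 + τ`. On this set the `χ²`-divergences of the model
from the law of the data are of order `τ²`. -/
def supNeighborhood (PX : Measure (Fin d → ℝ)) (f₀ : (Fin d → ℝ) → ℝ) (v : ℝ)
    (g : Θ → (Fin d → ℝ) → ℝ) (τ : ℝ) : Set (Θ × ℝ) :=
  {p | ∀ᵐ x ∂PX, |g p.1 x - f₀ x| ≤ τ} ∩ {p | p.2 ∈ Set.Icc v (v * (1 + τ))}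

lemma likelihoodRatio_ne_zero {X : Type*} {f₀ f : X → ℝ} {v s : ℝ} (hs : 0 < s) (z : X × ℝ) :
    likelihoodRatio f₀ v f s z ≠ 0 := by
  simp [likelihoodRatio, ENNReal.div_eq_zero_iff, gpdf_pos (f z.1) z.2 hs]

lemma measurable_prod_likelihoodRatio [MeasurableSpace Θ] (hf₀ : Measurable f₀)
    (hg : Measurable (Function.uncurry g)) (v : ℝ) :
    Measurable fun q : (Fin n → (Fin d → ℝ) × ℝ) × Θ × ℝ =>
      ∏ i, likelihoodRatio f₀ v (g q.2.1) q.2.2 (q.1 i) := by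
  refine Finset.measurable_prod _ fun i _ => ?_
  have : Measurable fun q : (Fin n → (Fin d → ℝ) × ℝ) × Θ × ℝ => g q.2.1 (q.1 i).1 :=
    hg.comp (g := Function.uncurry g)
      (f := fun q : (Fin n → (Fin d → ℝ) × ℝ) × Θ × ℝ => (q.2.1, (q.1 i).1)) (by fun_prop)
  have hnum : Measurable fun q : (Fin n → (Fin d → ℝ) × ℝ) × Θ × ℝ =>
      (g q.2.1 (q.1 i).1, q.2.2, (q.1 i).2) := by fun_prop
  have hden : Measurable fun q : (Fin n → (Fin d → ℝ) × ℝ) × Θ × ℝ =>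
      (f₀ (q.1 i).1, v, (q.1 i).2) := by fun_prop
  exact (measurable_gpdf.comp hnum).ennreal_ofReal.div (measurable_gpdf.comp hden).ennreal_ofReal

lemma ofReal_regressionLik (hv : 0 < v) (D : Fin n → (Fin d → ℝ) × ℝ) (p : Θ × ℝ) :
    ENNReal.ofReal (regressionLik g D p) = (∏ i, ENNReal.ofReal (gpdf (f₀ (D i).1) v (D i).2)) *
      ∏ i, likelihoodRatio f₀ v (g p.1) p.2 (D i) := by
  rw [regressionLik, ENNReal.ofReal_prod_of_nonneg fun i _ => gpdf_nonneg _ _ _,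
    ← Finset.prod_mul_distrib]
  refine Finset.prod_congr rfl fun i _ => ?_
  rw [likelihoodRatio, ENNReal.mul_div_cancel _ ENNReal.ofReal_ne_top]
  simpa using gpdf_pos (f₀ (D i).1) (D i).2 hv

lemma postMass_regressionLik [MeasurableSpace Θ] (hv : 0 < v) (hf₀ : Measurable f₀)
    (hg : Measurable (Function.uncurry g)) (Pr : Measure (Θ × ℝ))
    (D : Fin n → (Fin d → ℝ) × ℝ) (A : Set (Θ × ℝ)) :
    postMass Pr (regressionLik g D) A =
      (∫⁻ p in A, ∏ i, likelihoodRatio f₀ v (g p.1) p.2 (D i) ∂Pr) /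
        ∫⁻ p, ∏ i, likelihoodRatio f₀ v (g p.1) p.2 (D i) ∂Pr := by
  have hR : Measurable fun p : Θ × ℝ => ∏ i, likelihoodRatio f₀ v (g p.1) p.2 (D i) :=
    (measurable_prod_likelihoodRatio hf₀ hg v).comp (f := fun p => (D, p)) (by fun_prop)
  simp_rw [postMass, ofReal_regressionLik (f₀ := f₀) hv D]
  rw [lintegral_const_mul _ hR, lintegral_const_mul _ hR]
  refine ENNReal.mul_div_mul_left _ _ (Finset.prod_ne_zero_iff.2 fun i _ => ?_)
    (ENNReal.prod_ne_top fun i _ => ENNReal.ofReal_ne_top)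
  simpa using gpdf_pos (f₀ (D i).1) (D i).2 hv

lemma lintegral_inv_prod_likelihoodRatio_le [IsProbabilityMeasure PX]
    [IsProbabilityMeasure (gaussRegLaw d PX f₀ v.toNNReal)] (hv : 0 < v) (hf₀ : Measurable f₀)
    (hg : ∀ θ, Measurable (g θ)) {τ : ℝ} {p : Θ × ℝ} (hp : p ∈ supNeighborhood PX f₀ v g τ) :
    ∫⁻ D, (∏ i, likelihoodRatio f₀ v (g p.1) p.2 (D i))⁻¹
        ∂(Measure.pi fun _ : Fin n => gaussRegLaw d PX f₀ v.toNNReal) ≤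
      ENNReal.ofReal (Real.exp ((1 / 2 + 1 / v) * (n * τ ^ 2))) := by
  obtain ⟨hclose, hvs, hs⟩ := hp
  have hclose_sq : ∀ᵐ x ∂PX, (g p.1 x - f₀ x) ^ 2 ≤ τ ^ 2 :=
    Eventually.mono (p := fun x => |g p.1 x - f₀ x| ≤ τ) hclose fun x hx =>
      sq_le_sq' (abs_le.1 hx).1 (abs_le.1 hx).2
  have hratio : (p.2 / v - 1) ^ 2 ≤ τ ^ 2 := by
    have h1 : 1 ≤ p.2 / v := (one_le_div hv).2 hvs
    have h2 : p.2 / v ≤ 1 + τ := (div_le_iff₀' hv).2 hs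
    exact pow_le_pow_left₀ (by linarith) (by linarith) 2
  have hone := lintegral_inv_likelihoodRatio_le hv hvs hclose_sq
  have hexp : (p.2 / v - 1) ^ 2 / 2 + τ ^ 2 / v ≤ -(-((1 / 2 + 1 / v) * τ ^ 2)) := by
    rw [neg_neg, add_mul, one_div_mul_eq_div, one_div_mul_eq_div]
    gcongr
  have hinv (D : Fin n → (Fin d → ℝ) × ℝ) :
      (∏ i, likelihoodRatio f₀ v (g p.1) p.2 (D i))⁻¹ =
        ∏ i, (likelihoodRatio f₀ v (g p.1) p.2 (D i))⁻¹ :=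
    ENNReal.prod_inv_distrib fun _ _ _ _ _ => .inl (likelihoodRatio_ne_zero (hv.trans_le hvs) _)
  simp_rw [hinv]
  refine (lintegral_pi_prod_le_exp (measurable_likelihoodRatio hf₀ (hg p.1) v p.2).inv
    (hone.trans (ENNReal.ofReal_le_ofReal (Real.exp_le_exp.2 hexp)))).trans_eq ?_
  congr 2
  ring

variable [MeasurableSpace Θ] {Pr : Measure (Θ × ℝ)} {S : Finset Θ} {ε τ m : ℝ}

lemma ofReal_exp_div_mul_div_le {T κ Λ m δ : ℝ} (hδ : 0 < δ) {b : ℝ≥0∞}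
    (hb : ENNReal.ofReal (Real.exp (-m)) ≤ b) :
    ENNReal.ofReal (Real.exp (-T)) / (ENNReal.ofReal δ *
        (b / (ENNReal.ofReal (Real.exp κ) * ENNReal.ofReal (Real.exp Λ)))) ≤
      ENNReal.ofReal (1 / δ * Real.exp (-T + (κ + Λ + m))) :=
  calc _ ≤ ENNReal.ofReal (Real.exp (-T)) / (ENNReal.ofReal δ *
          (ENNReal.ofReal (Real.exp (-m)) /
            (ENNReal.ofReal (Real.exp κ) * ENNReal.ofReal (Real.exp Λ)))) := by gcongr
    _ = ENNReal.ofReal (1 / δ * Real.exp (-T + (κ + Λ + m))) := by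
        rw [← ENNReal.ofReal_mul (by positivity), ← ENNReal.ofReal_div_of_pos (by positivity),
          ← ENNReal.ofReal_mul hδ.le, ← ENNReal.ofReal_div_of_pos (by positivity)]
        simp only [Real.exp_add, Real.exp_neg]
        congr 1
        field_simp

lemma pi_lt_postMass_le [IsProbabilityMeasure PX]
    [IsProbabilityMeasure (gaussRegLaw d PX f₀ v.toNNReal)] [IsProbabilityMeasure Pr]
    (hv : 0 < v) (hf₀ : Measurable f₀) (hf₀F : ∀ x, |f₀ x| ≤ F)
    (hg : Measurable (Function.uncurry g)) (hgF : ∀ θ x, |g θ x| ≤ F)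
    (hPr : ∀ᵐ p ∂Pr, 0 < p.2) (hε : 0 ≤ ε) (hε1 : ε ≤ 1) (hε' : ε ≤ 2 * v)
    (hS : ∀ θ, ∃ j ∈ S, ∫ x, (g θ x - g j x) ^ 2 ∂PX ≤ (netFraction v F * ε) ^ 2)
    (hm : ENNReal.ofReal (Real.exp (-m)) ≤ Pr (supNeighborhood PX f₀ v g τ)) (κ : ℝ) {δ : ℝ}
    (hδ : 0 < δ) :
    Measure.pi (fun _ : Fin n => gaussRegLaw d PX f₀ v.toNNReal)
        {D | ENNReal.ofReal δ < postMass Pr (regressionLik g D)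
          {p | ε < l2dist d PX (g p.1) f₀ + |p.2 - v|}} ≤
      ENNReal.ofReal ((2 * S.card + 1) * Real.exp (-(testExponent v F * ε ^ 2 * n))) +
        ENNReal.ofReal (Real.exp (-κ)) +
        ENNReal.ofReal (1 / δ * Real.exp (-(testExponent v F * ε ^ 2 * n) +
          (κ + (1 / 2 + 1 / v) * (n * τ ^ 2) + m))) := by
  set Λ := (1 / 2 + 1 / v) * (n * τ ^ 2)
  set T := testExponent v F * ε ^ 2 * n
  set A : Set (Θ × ℝ) := {p | 0 < p.2 ∧ ε < l2dist d PX (g p.1) f₀ + |p.2 - v|}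
  have hA : ({p | ε < l2dist d PX (g p.1) f₀ + |p.2 - v|} : Set (Θ × ℝ)) =ᵐ[Pr] A :=
    hPr.mono fun p hp => propext ⟨fun h => ⟨hp, h⟩, fun h => h.2⟩
  have hgθ θ : Measurable (g θ) := hg.comp (f := fun x => (θ, x)) (by fun_prop)
  have hB : Pr (supNeighborhood PX f₀ v g τ) ≠ 0 :=
    (lt_of_lt_of_le (ENNReal.ofReal_pos.2 (Real.exp_pos _)) hm).ne'
  set Q := Measure.pi fun _ : Fin n => gaussRegLaw d PX f₀ v.toNNReal
  have halt : ∀ p ∈ A, ∫⁻ D in (testSet n PX f₀ g S v ε)ᶜ,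
      ∏ i, likelihoodRatio f₀ v (g p.1) p.2 (D i) ∂Q ≤ ENNReal.ofReal (Real.exp (-T)) :=
    fun p hp => lintegral_compl_testSet_le hv hf₀ hf₀F hgθ hgF hε hε1 hε' hS hp.1 hp.2
  have hnull : ∀ p ∈ supNeighborhood PX f₀ v g τ,
      ∫⁻ D, (∏ i, likelihoodRatio f₀ v (g p.1) p.2 (D i))⁻¹ ∂Q ≤ ENNReal.ofReal (Real.exp Λ) :=
    fun p hp => lintegral_inv_prod_likelihoodRatio_le hv hf₀ hgθ hp
  have : IsFiniteMeasure Q := inferInstance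
  have hbound := measure_mul_lintegral_le_setLIntegral_le
    (measurable_prod_likelihoodRatio hf₀ hg v) hB halt hnull
    (t := ENNReal.ofReal (Real.exp κ)) (δ := ENNReal.ofReal δ) (by simp [Real.exp_pos])
    ENNReal.ofReal_ne_top (by simp [Real.exp_pos]) ENNReal.ofReal_ne_top (by simpa using hδ)
    ENNReal.ofReal_ne_top
  simp_rw [postMass_congr_ae hA, postMass_regressionLik hv hf₀ hg]
  refine (measure_mono fun D hD => ENNReal.mul_le_of_le_div hD.le).trans (hbound.trans ?_)
  gcongr
  · exact pi_testSet_le hv hf₀ hf₀F hgθ hgF hε hε'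
  · rw [← ENNReal.ofReal_inv_of_pos (Real.exp_pos _), ← Real.exp_neg]
  · exact ofReal_exp_div_mul_div_le hδ hm

end PosteriorConcentration

section Asymptotics

open Asymptotics

lemma ofReal_exp_add_add_le {N T κ Λ m δ : ℝ} (hδ : 0 < δ) (hN : N ≤ Real.exp (T - κ))
    (hκ : κ ≤ T) (hT : 2 * κ + Λ + m ≤ T) :
    ENNReal.ofReal ((2 * N + 1) * Real.exp (-T)) + ENNReal.ofReal (Real.exp (-κ)) +
        ENNReal.ofReal (1 / δ * Real.exp (-T + (κ + Λ + m))) ≤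
      ENNReal.ofReal ((4 + 1 / δ) * Real.exp (-κ)) := by
  have hcard : (2 * N + 1) * Real.exp (-T) ≤ 3 * Real.exp (-κ) :=
    calc (2 * N + 1) * Real.exp (-T) ≤ (2 * Real.exp (T - κ) + 1) * Real.exp (-T) := by gcongr
      _ = 2 * Real.exp (-κ) + Real.exp (-T) := by
          rw [add_mul, mul_assoc, ← Real.exp_add, one_mul]
          ring_nf
      _ ≤ 3 * Real.exp (-κ) := by
          linarith [Real.exp_le_exp.2 (neg_le_neg hκ)]
  have htail : Real.exp (-T + (κ + Λ + m)) ≤ Real.exp (-κ) := Real.exp_le_exp.2 (by linarith)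
  calc _ ≤ ENNReal.ofReal (3 * Real.exp (-κ)) + ENNReal.ofReal (Real.exp (-κ)) +
        ENNReal.ofReal (1 / δ * Real.exp (-κ)) := by gcongr
    _ = ENNReal.ofReal ((4 + 1 / δ) * Real.exp (-κ)) := by
        rw [← ENNReal.ofReal_add (by positivity) (by positivity),
          ← ENNReal.ofReal_add (by positivity) (by positivity)]
        ring_nf

lemma eventually_mul_le_of_isLittleO {α : Type*} {l : Filter α} {f h : α → ℝ} (hfh : f =o[l] h)
    (hh : ∀ᶠ a in l, 0 ≤ h a) {c : ℝ} (hc : 0 < c) (D : ℝ) : ∀ᶠ a in l, D * f a ≤ c * h a := by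
  have := (hfh.const_mul_left D).bound hc
  filter_upwards [this, hh] with a ha hha
  simpa [abs_of_nonneg hha] using (le_abs_self _).trans ha

lemma eventually_mul_le_mul_min_sq {k ρ : ℕ → ℝ}
    (hkρ : k =o[atTop] fun n => n * ρ n ^ 2) (hkn : k =o[atTop] fun n : ℕ => (n : ℝ))
    {c r : ℝ} (hc : 0 < c) (hr : 0 < r) (D : ℝ) :
    ∀ᶠ n in atTop, D * k n ≤ c * min (ρ n) r ^ 2 * n := by
  filter_upwards [eventually_mul_le_of_isLittleO hkρ (.of_forall fun n => by positivity) hc D,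
    eventually_mul_le_of_isLittleO hkn (.of_forall fun n => by positivity)
      (mul_pos hc (pow_pos hr 2)) D] with n hnρ hnr
  rcases min_choice (ρ n) r with h | h <;> rw [h] <;> linarith

variable {d : ℕ} {PX : Measure (Fin d → ℝ)} [IsProbabilityMeasure PX] {f₀ : (Fin d → ℝ) → ℝ}
  {v F : ℝ} [IsProbabilityMeasure (gaussRegLaw d PX f₀ v.toNNReal)]

theorem tendsto_pi_lt_postMass {Θ : ℕ → Type*} [∀ n, MeasurableSpace (Θ n)]
    {g : ∀ n, Θ n → (Fin d → ℝ) → ℝ} {Pr : ∀ n, Measure (Θ n × ℝ)}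
    [∀ n, IsProbabilityMeasure (Pr n)] (hv : 0 < v) (hf₀ : Measurable f₀)
    (hf₀F : ∀ x, |f₀ x| ≤ F) (hg : ∀ n, Measurable (Function.uncurry (g n)))
    (hgF : ∀ n θ x, |g n θ x| ≤ F) (hPr : ∀ n, ∀ᵐ p ∂Pr n, 0 < p.2) {k e ρ : ℕ → ℝ}
    (hk : Tendsto k atTop atTop) (hek : ∀ᶠ n : ℕ in atTop, n * e n ^ 2 ≤ k n)
    (hρ : ∀ᶠ n in atTop, 0 ≤ ρ n) (hkρ : k =o[atTop] fun n => n * ρ n ^ 2)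
    (hkn : k =o[atTop] fun n : ℕ => (n : ℝ))
    (hcover : ∀ c > 0, ∃ C : ℝ, ∀ᶠ n in atTop, ∃ S : Finset (Θ n), S.card ≤ Real.exp (C * k n) ∧
      ∀ θ, ∃ j ∈ S, ∫ x, (g n θ x - g n j x) ^ 2 ∂PX ≤ (c * e n) ^ 2)
    (hmass : ∃ C : ℝ, ∀ᶠ n in atTop,
      ENNReal.ofReal (Real.exp (-(C * k n))) ≤ Pr n (supNeighborhood PX f₀ v (g n) (C * e n)))
    {δ : ℝ} (hδ : 0 < δ) :
    Tendsto (fun n : ℕ => Measure.pi (fun _ : Fin n => gaussRegLaw d PX f₀ v.toNNReal)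
      {D | ENNReal.ofReal δ < postMass (Pr n) (regressionLik (g n) D)
        {p | ρ n < l2dist d PX (g n p.1) f₀ + |p.2 - v|}}) atTop (nhds 0) := by
  obtain ⟨Cs, hS⟩ := hcover (netFraction v F) (netFraction_pos hv)
  obtain ⟨C, hmass⟩ := hmass
  set r := min 1 (2 * v)
  have hc := testExponent_pos (F := F) hv
  have hr : 0 < r := by positivity
  have htest {c : ℝ} (hc : 0 < c) := eventually_mul_le_mul_min_sq hkρ hkn hc hr
  have hlim : Tendsto (fun n => ENNReal.ofReal ((4 + 1 / δ) * Real.exp (-k n))) atTop (nhds 0) := by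
    rw [← ENNReal.ofReal_zero, ← mul_zero (4 + 1 / δ)]
    exact ENNReal.tendsto_ofReal ((Real.tendsto_exp_neg_atTop_nhds_zero.comp hk).const_mul _)
  refine tendsto_of_tendsto_of_tendsto_of_le_of_le' tendsto_const_nhds hlim
    (.of_forall fun n => zero_le) ?_
  filter_upwards [eventually_gt_atTop 0, hS, hmass, hρ, hek, htest one_pos 1, htest hc 1,
    htest hc (Cs + 1), htest hc (2 + (1 / 2 + 1 / v) * C ^ 2 + C)]
    with n hn ⟨S, hcard, hS⟩ hm hρn hekn hkε hκ hTcard hT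
  set ε := min (ρ n) r
  have hε : 0 ≤ ε := by positivity
  have heε : e n ^ 2 ≤ ε ^ 2 := by
    have : (0 : ℝ) < n := by positivity
    nlinarith
  have hsubset : {p : Θ n × ℝ | ρ n < l2dist d PX (g n p.1) f₀ + |p.2 - v|} ⊆
      {p | ε < l2dist d PX (g n p.1) f₀ + |p.2 - v|} := fun p hp =>
    lt_of_le_of_lt (min_le_left _ _) (Set.mem_ofPred.1 hp)
  refine (measure_mono fun D hD => hD.trans_le (postMass_mono hsubset)).trans ?_
  refine (pi_lt_postMass_le (S := S) hv hf₀ hf₀F (hg n) (hgF n) (hPr n) hε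
    ((min_le_right _ _).trans (min_le_left _ _)) ((min_le_right _ _).trans (min_le_right _ _))
    (fun θ => ?_) hm (k n) hδ).trans (ofReal_exp_add_add_le hδ ?_ (by linarith) ?_)
  · obtain ⟨j, hj, hjθ⟩ := hS θ
    refine ⟨j, hj, hjθ.trans ?_⟩
    rw [mul_pow, mul_pow]
    gcongr
  · exact hcard.trans (Real.exp_le_exp.2 (by linarith))
  · have : (1 / 2 + 1 / v) * (n * (C * e n) ^ 2) ≤ (1 / 2 + 1 / v) * C ^ 2 * k n :=
      calc _ = (1 / 2 + 1 / v) * C ^ 2 * (n * e n ^ 2) := by ring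
        _ ≤ _ := by gcongr
    linarith

end Asymptotics

/-! ### Rates and network sizes -/

section Rates

open Asymptotics

variable {β : ℝ} {d n : ℕ}

/-- The number `n^{d/(2β+d)}` of parameters needed to approximate a `β`-Hölder function on `ℝ^d`
up to the error `minimaxRate β d n`. -/
def effDim (β : ℝ) (d n : ℕ) : ℝ := (n : ℝ) ^ ((d : ℝ) / (2 * β + d))

/-- The minimax rate `n^{-β/(2β+d)}` of nonparametric regression, without logarithmic factors. -/
def minimaxRate (β : ℝ) (d n : ℕ) : ℝ := (n : ℝ) ^ (-(β / (2 * β + d)))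

/-- The order `n^{d/(2β+d)} (log n)³` of the log covering number of the model and of the negative
log prior mass near the truth. -/
def entropyRate (β : ℝ) (d n : ℕ) : ℝ := effDim β d n * Real.log n ^ 3

lemma one_le_log_natCast (hn : 3 ≤ n) : 1 ≤ Real.log n := by
  have h3 : (3 : ℝ) ≤ n := by exact_mod_cast hn
  rw [Real.le_log_iff_exp_le (by linarith)]
  linarith [Real.exp_one_lt_d9]

lemma one_le_effDim (hβ : 0 ≤ β) (hn : 1 ≤ n) : 1 ≤ effDim β d n :=
  Real.one_le_rpow (by exact_mod_cast hn) (by positivity)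

lemma effDim_le (hβ : 0 ≤ β) (hn : 1 ≤ n) : effDim β d n ≤ n := by
  conv_rhs => rw [← Real.rpow_one (n : ℝ)]
  exact Real.rpow_le_rpow_of_exponent_le (by exact_mod_cast hn)
    (div_le_one_of_le₀ (by linarith) (by positivity))

lemma minimaxRate_pos (hn : 1 ≤ n) : 0 < minimaxRate β d n :=
  Real.rpow_pos_of_pos (by exact_mod_cast hn) _

lemma inv_le_minimaxRate (hβ : 0 ≤ β) (hn : 1 ≤ n) : (n : ℝ)⁻¹ ≤ minimaxRate β d n := by
  have : (0 : ℝ) ≤ d := d.cast_nonneg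
  rw [← Real.rpow_neg_one]
  exact Real.rpow_le_rpow_of_exponent_le (by exact_mod_cast hn)
    (neg_le_neg (div_le_one_of_le₀ (by linarith) (by positivity)))

lemma tendsto_minimaxRate (hβ : 0 < β) : Tendsto (minimaxRate β d) atTop (nhds 0) :=
  (tendsto_rpow_neg_atTop (by positivity)).comp tendsto_natCast_atTop_atTop

lemma natCast_mul_minimaxRate_sq (hβ : 0 < β) (hn : 1 ≤ n) :
    n * minimaxRate β d n ^ 2 = effDim β d n := by
  have hn0 : (0 : ℝ) < n := by exact_mod_cast hn
  rw [minimaxRate, effDim, ← Real.rpow_natCast, ← Real.rpow_mul hn0.le]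
  nth_rewrite 1 [← Real.rpow_one (n : ℝ)]
  rw [← Real.rpow_add hn0]
  congr 1
  field_simp
  push_cast
  ring

lemma effDim_le_entropyRate (hβ : 0 ≤ β) (hn : 3 ≤ n) : effDim β d n ≤ entropyRate β d n :=
  le_mul_of_one_le_right (zero_le_one.trans (one_le_effDim hβ (by lia)))
    (one_le_pow₀ (one_le_log_natCast hn))

lemma log_le_entropyRate (hβ : 0 ≤ β) (hn : 3 ≤ n) : Real.log n ≤ entropyRate β d n := by
  have hlog := one_le_log_natCast hn
  calc Real.log n ≤ Real.log n ^ 3 := le_self_pow₀ hlog (by simp)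
    _ ≤ entropyRate β d n := le_mul_of_one_le_left (by positivity) (one_le_effDim hβ (by lia))

lemma tendsto_log_natCast : Tendsto (fun n : ℕ => Real.log n) atTop atTop :=
  Real.tendsto_log_atTop.comp tendsto_natCast_atTop_atTop

lemma tendsto_entropyRate (hβ : 0 ≤ β) : Tendsto (entropyRate β d) atTop atTop :=
  tendsto_atTop_mono' _ ((eventually_ge_atTop 3).mono fun _ => log_le_entropyRate hβ)
    tendsto_log_natCast

lemma entropyRate_isLittleO (hβ : 0 < β) :
    entropyRate β d =o[atTop] fun n : ℕ => (n : ℝ) := by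
  have hs : 0 < 2 * β / (2 * β + d) := by positivity
  have hlog := (isLittleO_log_rpow_rpow_atTop 3 hs).comp_tendsto tendsto_natCast_atTop_atTop
  refine ((isBigO_refl (effDim β d) atTop).mul_isLittleO hlog).congr' ?_ ?_
  · exact .of_forall fun n => by simp [entropyRate]
  · filter_upwards [eventually_gt_atTop 0] with n hn
    have : (0 : ℝ) < n := by exact_mod_cast hn
    rw [effDim, Function.comp_apply, ← Real.rpow_add this, ← add_div, add_comm (d : ℝ),
      div_self (by positivity), Real.rpow_one]

lemma entropyRate_isLittleO_mul_sq (hβ : 0 < β) {γ : ℝ} (hγ : 3 / 2 ≤ γ) {M : ℕ → ℝ}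
    (hM : Tendsto M atTop atTop) :
    entropyRate β d =o[atTop] fun n => n * (M n * (minimaxRate β d n * Real.log n ^ γ)) ^ 2 := by
  have hone : (fun _ => 1 : ℕ → ℝ) =o[atTop] fun n => M n ^ 2 :=
    (isLittleO_const_left_of_ne one_ne_zero).2
      (tendsto_norm_atTop_atTop.comp ((tendsto_pow_atTop two_ne_zero).comp hM))
  have hbig : entropyRate β d =O[atTop]
      fun n : ℕ => n * (minimaxRate β d n * Real.log n ^ γ) ^ 2 := by
    refine .of_bound 1 ((eventually_ge_atTop 3).mono fun n hn => ?_)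
    have hlog := one_le_log_natCast hn
    have hdim := one_le_effDim (d := d) hβ.le (by lia : 1 ≤ n)
    rw [mul_pow, ← mul_assoc, natCast_mul_minimaxRate_sq hβ (by lia), entropyRate, one_mul,
      Real.norm_of_nonneg (by positivity), Real.norm_of_nonneg (by positivity),
      ← Real.rpow_natCast (Real.log n ^ γ), ← Real.rpow_natCast (Real.log n),
      ← Real.rpow_mul (by positivity)]
    gcongr
    push_cast
    linarith
  simpa only [mul_one, mul_pow (M _), mul_assoc, mul_left_comm, mul_comm (M _ ^ 2)] using
    hbig.mul_isLittleO hone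

lemma Ldepth_pos {CL : ℝ} (hCL : 0 < CL) (hn : 3 ≤ n) : 0 < Ldepth CL n :=
  Nat.ceil_pos.2 (mul_pos hCL (by linarith [one_le_log_natCast hn]))

lemma rwidth_pos {Cr : ℝ} (hCr : 0 < Cr) (hn : 1 ≤ n) : 0 < rwidth Cr β d n :=
  Nat.ceil_pos.2 (mul_pos hCr (Real.rpow_pos_of_pos (by exact_mod_cast hn) _))

lemma Ldepth_add_one_le {CL : ℝ} (hCL : 0 ≤ CL) (hn : 3 ≤ n) :
    (Ldepth CL n + 1 : ℝ) ≤ (CL + 2) * Real.log n := by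
  have hlog := one_le_log_natCast hn
  have hceil : (Ldepth CL n : ℝ) < CL * Real.log n + 1 := Nat.ceil_lt_add_one (by positivity)
  linarith

lemma rwidth_add_sq_le {Cr : ℝ} (hβ : 0 ≤ β) (hCr : 0 ≤ Cr) (hn : 1 ≤ n) :
    (rwidth Cr β d n + d + 1 : ℝ) ^ 2 ≤ (Cr + d + 2) ^ 2 * effDim β d n := by
  set y : ℝ := (n : ℝ) ^ ((d : ℝ) / (2 * (2 * β + d))) with hy
  have hy1 : 1 ≤ y := Real.one_le_rpow (by exact_mod_cast hn) (by positivity)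
  have hysq : y ^ 2 = effDim β d n := by
    rw [hy, ← Real.rpow_natCast, ← Real.rpow_mul (by positivity), effDim, Nat.cast_ofNat,
      mul_comm 2, div_mul_eq_mul_div, mul_div_mul_right _ _ two_ne_zero]
  have hceil : (rwidth Cr β d n : ℝ) < Cr * y + 1 := Nat.ceil_lt_add_one (by positivity)
  have : (0 : ℝ) ≤ d := d.cast_nonneg
  rw [← hysq, ← mul_pow]
  gcongr
  nlinarith

lemma eventually_Ldepth_add_one_le {CL : ℝ} (hCL : 0 ≤ CL) :
    ∀ᶠ n : ℕ in atTop, (Ldepth CL n + 1 : ℝ) ≤ n := by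
  have hlog := Real.isLittleO_log_id_atTop.comp_tendsto (tendsto_natCast_atTop_atTop (R := ℝ))
  filter_upwards [eventually_mul_le_of_isLittleO hlog (.of_forall fun n => n.cast_nonneg) one_pos
    (CL + 2), eventually_ge_atTop 3] with n hlogn hn
  exact (Ldepth_add_one_le hCL hn).trans (by simpa using hlogn)

lemma eventually_rwidth_add_le {Cr : ℝ} (hβ : 0 ≤ β) (hCr : 0 ≤ Cr) :
    ∀ᶠ n : ℕ in atTop, (rwidth Cr β d n + d + 1 : ℝ) ≤ n := by
  filter_upwards [tendsto_natCast_atTop_atTop.eventually_ge_atTop ((Cr + d + 2) ^ 2),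
    eventually_ge_atTop 1] with n hCn hn
  refine le_of_sq_le_sq ((rwidth_add_sq_le hβ hCr hn).trans ?_) n.cast_nonneg
  rw [sq (n : ℝ)]
  exact mul_le_mul hCn (effDim_le hβ hn) (zero_le_one.trans (one_le_effDim hβ hn)) n.cast_nonneg

lemma card_paramIdx_le (d r L : ℕ) :
    Fintype.card (ParamIdx d r L) ≤ (L + 1) * (r + d + 1) ^ 2 := by
  have hcard : Fintype.card (ParamIdx d r L) =
      r * d + (r + ((L - 1) * (r * r) + ((L - 1) * r + (r + 1)))) := by simp
  have hinner : (L - 1) * (r * r + r) ≤ L * (r + d + 1) ^ 2 :=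
    Nat.mul_le_mul (Nat.sub_le _ _) (by nlinarith)
  nlinarith

lemma card_paramIdx_mul_le {CL Cr : ℝ} (hβ : 0 ≤ β) (hCL : 0 ≤ CL) (hCr : 0 ≤ Cr) (hn : 3 ≤ n) :
    Fintype.card (ParamIdx d (rwidth Cr β d n) (Ldepth CL n)) * (Ldepth CL n + 1) * Real.log n ≤
      ((CL + 2) * (Cr + d + 2)) ^ 2 * entropyRate β d n := by
  have hlog := one_le_log_natCast hn
  have hcard : (Fintype.card (ParamIdx d (rwidth Cr β d n) (Ldepth CL n)) : ℝ) ≤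
      (Ldepth CL n + 1) * (rwidth Cr β d n + d + 1) ^ 2 := by
    exact_mod_cast card_paramIdx_le _ _ _
  calc _ ≤ (Ldepth CL n + 1) * (rwidth Cr β d n + d + 1) ^ 2 * (Ldepth CL n + 1) * Real.log n := by
        gcongr
    _ ≤ ((CL + 2) * Real.log n) * ((Cr + d + 2) ^ 2 * effDim β d n) * ((CL + 2) * Real.log n) *
        Real.log n := by
        have := one_le_effDim (d := d) hβ (by lia : 1 ≤ n)
        have hdepth := Ldepth_add_one_le hCL hn
        have hwidth := rwidth_add_sq_le (d := d) hβ hCr (by lia : 1 ≤ n)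
        gcongr
    _ = _ := by
        rw [entropyRate]
        ring

end Rates

/-! ### Covering numbers of truncated networks -/

section Covering

variable {ν F : ℝ} {d n : ℕ}

lemma abs_trunc_le (hF : 0 ≤ F) (y : ℝ) : |trunc F y| ≤ F :=
  abs_le.2 (trunc_mem_Icc hF y)

lemma abs_trunc_sub_trunc_le (hF : 0 ≤ F) (x y : ℝ) : |trunc F x - trunc F y| ≤ 2 * F :=
  (abs_sub _ _).trans
    ((add_le_add (abs_trunc_le hF x) (abs_trunc_le hF y)).trans_eq (two_mul F).symm)

lemma abs_trunc_sub_le {x y : ℝ} (hy : |y| ≤ F) : |trunc F x - y| ≤ |x - y| := by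
  obtain ⟨hl, hu⟩ := abs_le.1 hy
  have hy' : trunc F y = y := by rw [trunc, max_eq_left hl, min_eq_left hu]
  conv_lhs => rw [← hy']
  exact (abs_min_sub_min_le_max _ _ _ _).trans
    (max_le ((abs_max_sub_max_le_max _ _ _ _).trans (by simp)) (by simp))

lemma measurable_trunc_netOfParams (ν F : ℝ) (d r L : ℕ) :
    Measurable (Function.uncurry fun (θ : ParamIdx d r L → ℝ) x =>
      trunc F (netOfParams ν d r L θ x)) :=
  (((continuous_netOfParams ν d r L).max continuous_const).min continuous_const).measurable

lemma warrenBound_pow_le {T r J L : ℕ} {z : ℝ} (hz : 3 ≤ z) (hn : n = z) (hL : (L + 1 : ℝ) ≤ z)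
    (hr : r ≤ z) (hT : T ≤ z ^ 3) (hJ : J ≤ z ^ 2) :
    ((warrenBound T (n ^ 12 * (r + J)) (L + 1) ^ (L + 1) : ℕ) : ℝ) ≤
      Real.exp (20 * (T * (L + 1) * Real.log z)) := by
  have hbase : (T * ((n ^ 12 * (r + J)) * (L + 1) + 2) + 1 : ℝ) ≤ z ^ 20 :=
    calc (T * ((n ^ 12 * (r + J)) * (L + 1) + 2) + 1 : ℝ)
        ≤ z ^ 3 * ((z ^ 12 * (z ^ 2 + z ^ 2)) * z + 2) + 1 := by
          rw [hn]
          gcongr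
          exact hr.trans (le_self_pow₀ (by linarith) two_ne_zero)
      _ = 2 * z ^ 18 + 2 * z ^ 3 + 1 := by ring
      _ ≤ 9 * z ^ 18 := by
          have : z ^ 3 ≤ z ^ 18 := pow_le_pow_right₀ (by linarith) (by norm_num)
          have : 1 ≤ z ^ 18 := one_le_pow₀ (by linarith)
          linarith
      _ ≤ z ^ 2 * z ^ 18 := by
          gcongr
          nlinarith
      _ = z ^ 20 := by ring
  calc ((warrenBound T (n ^ 12 * (r + J)) (L + 1) ^ (L + 1) : ℕ) : ℝ)
      = (T * ((n ^ 12 * (r + J)) * (L + 1) + 2) + 1 : ℝ) ^ (T * (L + 1)) := by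
        rw [warrenBound, ← pow_mul]
        push_cast
        rfl
    _ ≤ (z ^ 20) ^ (T * (L + 1)) := by gcongr
    _ = Real.exp (20 * (T * (L + 1) * Real.log z)) := by
        rw [← pow_mul, ← Real.exp_log (by linarith : 0 < z), ← Real.exp_nat_mul, Real.exp_log
          (by linarith)]
        push_cast
        ring_nf

lemma card_paramIdx_le_cube {r L : ℕ} (hL : (L + 1 : ℝ) ≤ n) (hr : (r + d + 1 : ℝ) ≤ n) :
    (Fintype.card (ParamIdx d r L) : ℝ) ≤ n ^ 3 :=
  calc (Fintype.card (ParamIdx d r L) : ℝ) ≤ (L + 1) * (r + d + 1) ^ 2 := by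
        exact_mod_cast card_paramIdx_le d r L
    _ ≤ n * n ^ 2 := by gcongr
    _ = n ^ 3 := by ring

lemma log_add_one_le_of_le_exp {x y : ℝ} (hx : 0 ≤ x) (hy : 0 ≤ y) (h : x ≤ Real.exp y) :
    Real.log (x + 1) ≤ y + 1 := by
  rw [Real.log_le_iff_le_exp (by positivity), Real.exp_add]
  nlinarith [Real.add_one_le_exp (1 : ℝ), Real.one_le_exp hy]

lemma two_mul_lt_sq_div_mul_pow {η z : ℝ} (hF : 0 < F) (hz : 3 ≤ z) (hη : 4 * F ≤ η * z ^ 2) :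
    2 * (20 * z ^ 5 + 1) < 3 * η ^ 2 / (4 * (2 * F) ^ 2) * z ^ 12 := by
  have hratio : 1 ≤ η ^ 2 * z ^ 4 / (4 * (2 * F) ^ 2) := by
    rw [one_le_div (by positivity)]
    nlinarith
  calc 2 * (20 * z ^ 5 + 1) < 3 * (z ^ 3 * z ^ 5) := by
        have : (3 : ℝ) ^ 3 ≤ z ^ 3 := by gcongr
        have : 1 ≤ z ^ 5 := one_le_pow₀ (by linarith)
        nlinarith
    _ ≤ 3 * z ^ 8 * (η ^ 2 * z ^ 4 / (4 * (2 * F) ^ 2)) := by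
        rw [← pow_add]
        exact le_mul_of_one_le_right (by positivity) hratio
    _ = _ := by ring

lemma exists_finset_integral_sq_sub_trunc_netOfParams_le {PX : Measure (Fin d → ℝ)}
    [IsProbabilityMeasure PX] (hν : ν ≤ 1) (hF : 0 < F) {η : ℝ} (hη : 0 < η) {r L : ℕ}
    (hn : 3 ≤ n) (hL0 : 1 ≤ L) (hL : (L + 1 : ℝ) ≤ n) (hr : (r + d + 1 : ℝ) ≤ n)
    (hηn : 4 * F / η + 1 ≤ n ^ 2) :
    ∃ S : Finset (ParamIdx d r L → ℝ),
      S.card ≤ Real.exp (20 * (Fintype.card (ParamIdx d r L) * (L + 1) * Real.log n)) ∧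
      ∀ θ, ∃ s ∈ S, ∫ x, (trunc F (netOfParams ν d r L θ x) -
        trunc F (netOfParams ν d r L s x)) ^ 2 ∂PX ≤ η ^ 2 := by
  have hz : (3 : ℝ) ≤ n := by exact_mod_cast hn
  have hT := card_paramIdx_le_cube hL hr
  set T := Fintype.card (ParamIdx d r L)
  set J := ⌈4 * F / η⌉₊
  have hJn : (J : ℝ) ≤ n ^ 2 := (Nat.ceil_lt_add_one (by positivity)).le.trans hηn
  have hJF : 2 * F ≤ J * (η / 2) := by
    linarith [(div_le_iff₀ hη).1 (Nat.le_ceil (4 * F / η))]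
  set N := warrenBound T (n ^ 12 * (r + J)) (L + 1) ^ (L + 1)
  have hNexp : (N : ℝ) ≤ Real.exp (20 * (T * (L + 1) * Real.log n)) :=
    warrenBound_pow_le hz rfl hL (by linarith [(d.cast_nonneg : (0 : ℝ) ≤ d)]) hT hJn
  have hexp : 20 * (T * (L + 1) * Real.log n) ≤ 20 * (n : ℝ) ^ 5 :=
    calc _ ≤ 20 * ((n : ℝ) ^ 3 * n * n) := by
          gcongr
          exact Real.log_le_self (by positivity)
      _ = _ := by ring
  have hηF : 4 * F ≤ η * n ^ 2 := by
    linarith [(div_le_iff₀ hη).1 (by linarith : 4 * F / η ≤ n ^ 2)]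
  have hsamples : 2 * Real.log (N + 1) < 3 * η ^ 2 / (4 * (2 * F) ^ 2) * (n ^ 12 : ℕ) := by
    have hlog := log_add_one_le_of_le_exp N.cast_nonneg (by positivity)
      (hNexp.trans (Real.exp_le_exp.2 hexp))
    push_cast
    linarith [two_mul_lt_sq_div_mul_pow hF hz hηF]
  obtain ⟨S, hcard, hS⟩ := exists_finset_integral_sq_sub_le (P := PX)
    (fun θ => (measurable_trunc_netOfParams ν F d r L).comp (f := fun x => (θ, x)) (by fun_prop))
    (by positivity) (fun _ _ _ => abs_trunc_sub_trunc_le hF.le _ _)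
    (fun x S hS =>
      (card_le_of_trunc_netOfParams_separated hν hF.le (half_pos hη) hJF hL0 x S hS).trans_eq
        (by rw [Fintype.card_fin]))
    hsamples
  exact ⟨S, le_trans (by exact_mod_cast hcard) hNexp, hS⟩

lemma eventually_add_one_le_sq (D : ℝ) : ∀ᶠ n : ℕ in atTop, D * n + 1 ≤ (n : ℝ) ^ 2 := by
  filter_upwards [tendsto_natCast_atTop_atTop.eventually_ge_atTop (D + 1),
    eventually_ge_atTop 1] with n hD hn
  have : (1 : ℝ) ≤ n := by exact_mod_cast hn
  nlinarith

lemma eventually_exists_finset_integral_sq_sub_trunc_le {PX : Measure (Fin d → ℝ)}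
    [IsProbabilityMeasure PX] (hν : ν ≤ 1) (hF : 0 < F) {β CL Cr c : ℝ} (hβ : 0 ≤ β)
    (hCL : 0 < CL) (hCr : 0 ≤ Cr) (hc : 0 < c) :
    ∀ᶠ n : ℕ in atTop,
      ∃ S : Finset (ParamIdx d (rwidth Cr β d n) (Ldepth CL n) → ℝ),
        S.card ≤ Real.exp (20 * ((CL + 2) * (Cr + d + 2)) ^ 2 * entropyRate β d n) ∧
        ∀ θ, ∃ s ∈ S, ∫ x,
          (trunc F (netOfParams ν d (rwidth Cr β d n) (Ldepth CL n) θ x) -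
            trunc F (netOfParams ν d (rwidth Cr β d n) (Ldepth CL n) s x)) ^ 2 ∂PX ≤
          (c * minimaxRate β d n) ^ 2 := by
  filter_upwards [eventually_ge_atTop 3, eventually_Ldepth_add_one_le hCL.le,
    eventually_rwidth_add_le (d := d) hβ hCr, eventually_add_one_le_sq (4 * F / c)]
    with n hn hL hr hnF
  have he := minimaxRate_pos (β := β) (d := d) (by lia : 1 ≤ n)
  have heinv := inv_le_of_inv_le₀ (by positivity) (inv_le_minimaxRate (d := d) hβ (by lia : 1 ≤ n))
  have hη : 4 * F / (c * minimaxRate β d n) + 1 ≤ (n : ℝ) ^ 2 :=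
    calc 4 * F / (c * minimaxRate β d n) + 1 = 4 * F / c * (minimaxRate β d n)⁻¹ + 1 := by
          field_simp
      _ ≤ 4 * F / c * n + 1 := by gcongr
      _ ≤ n ^ 2 := hnF
  obtain ⟨S, hcard, hS⟩ := exists_finset_integral_sq_sub_trunc_netOfParams_le (PX := PX) hν hF
    (by positivity) hn (Ldepth_pos hCL hn) hL hr hη
  refine ⟨S, hcard.trans (Real.exp_le_exp.2 ?_), hS⟩
  linarith [card_paramIdx_mul_le (d := d) hβ hCL.le hCr hn]

end Covering

/-! ### Approximation at the minimax rate -/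

section Approximation

variable {β : ℝ} {d n : ℕ}

/-- The resolution `M_n = ⌊n^{1/(2(2β+d))}⌋` at which the approximation theorem is applied: the
approximating network fits into the architecture of the model, and `M_n^{-2β}` is of the order of
`minimaxRate β d n`. -/
def approxLevel (β : ℝ) (d n : ℕ) : ℕ := ⌊(n : ℝ) ^ (1 / (2 * (2 * β + d)))⌋₊

lemma tendsto_approxLevel (hβ : 0 < β) : Tendsto (approxLevel β d) atTop atTop :=
  tendsto_nat_floor_atTop.comp
    ((tendsto_rpow_atTop (by positivity)).comp tendsto_natCast_atTop_atTop)

lemma one_le_approxLevel (hβ : 0 ≤ β) (hn : 1 ≤ n) : 1 ≤ approxLevel β d n :=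
  (Nat.one_le_floor_iff _).2 (Real.one_le_rpow (by exact_mod_cast hn) (by positivity))

lemma approxLevel_le (β : ℝ) (d n : ℕ) :
    (approxLevel β d n : ℝ) ≤ (n : ℝ) ^ (1 / (2 * (2 * β + d))) :=
  Nat.floor_le (by positivity)

lemma ceil_logb_approxLevel_le_Ldepth {CL : ℝ} (hβ : 0 ≤ β) (hd : 0 < d) (hCL : 0 ≤ CL)
    (hn : 1 ≤ n) : ⌈CL * Real.logb 2 (approxLevel β d n)⌉₊ ≤ Ldepth CL n := by
  refine Nat.ceil_mono (mul_le_mul_of_nonneg_left ?_ hCL)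
  have hd1 : (1 : ℝ) ≤ d := by exact_mod_cast hd
  have hM : (1 : ℝ) ≤ approxLevel β d n := by exact_mod_cast one_le_approxLevel hβ hn
  have hlogn : 0 ≤ Real.log n := Real.log_natCast_nonneg n
  rw [Real.logb, div_le_iff₀ (by positivity)]
  calc Real.log (approxLevel β d n)
      ≤ 1 / (2 * (2 * β + d)) * Real.log n := by
        rw [← Real.log_rpow (by exact_mod_cast hn)]
        exact Real.log_le_log (by linarith) (approxLevel_le β d n)
    _ ≤ 1 / 2 * Real.log n := by
        gcongr
        linarith
    _ ≤ Real.log n * Real.log 2 := by nlinarith [Real.log_two_gt_d9]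

lemma ceil_mul_approxLevel_pow_le_rwidth {Cr : ℝ} (hCr : 0 ≤ Cr) :
    ⌈Cr * (approxLevel β d n : ℝ) ^ d⌉₊ ≤ rwidth Cr β d n := by
  refine Nat.ceil_mono (mul_le_mul_of_nonneg_left ?_ hCr)
  calc (approxLevel β d n : ℝ) ^ d ≤ ((n : ℝ) ^ (1 / (2 * (2 * β + d)))) ^ d := by
        gcongr
        exact approxLevel_le β d n
    _ = (n : ℝ) ^ ((d : ℝ) / (2 * (2 * β + d))) := by
        rw [← Real.rpow_natCast, ← Real.rpow_mul n.cast_nonneg, one_div_mul_eq_div]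

lemma div_approxLevel_rpow_le {c : ℝ} (hc : 0 ≤ c) (hβ : 0 < β) (hn : 1 ≤ n) :
    c / (approxLevel β d n : ℝ) ^ (2 * β) ≤ c * 2 ^ (2 * β) * minimaxRate β d n := by
  set u : ℝ := (n : ℝ) ^ (1 / (2 * (2 * β + d)))
  have hn0 : (0 : ℝ) < n := by exact_mod_cast hn
  have hM : (1 : ℝ) ≤ approxLevel β d n := by exact_mod_cast one_le_approxLevel hβ.le hn
  have hu : u ≤ 2 * approxLevel β d n := by
    have : u < approxLevel β d n + 1 := Nat.lt_floor_add_one u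
    linarith
  have huβ : u ^ (2 * β) * minimaxRate β d n = 1 := by
    have : 1 / (2 * (2 * β + (d : ℝ))) * (2 * β) + -(β / (2 * β + d)) = 0 := by
      field_simp
      ring
    rw [minimaxRate, ← Real.rpow_mul hn0.le, ← Real.rpow_add hn0, this, Real.rpow_zero]
  rw [div_le_iff₀ (by positivity), mul_assoc, mul_assoc]
  refine le_mul_of_one_le_right hc ?_
  have := minimaxRate_pos (β := β) (d := d) hn
  calc 1 = u ^ (2 * β) * minimaxRate β d n := huβ.symm
    _ ≤ (2 * approxLevel β d n) ^ (2 * β) * minimaxRate β d n := by gcongr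
    _ = 2 ^ (2 * β) * (minimaxRate β d n * (approxLevel β d n : ℝ) ^ (2 * β)) := by
        rw [Real.mul_rpow two_pos.le (by positivity)]
        ring

lemma eventually_exists_abs_netOfParams_sub_le {a F ν CL Cr CB c₁ : ℝ}
    {f₀ : (Fin d → ℝ) → ℝ} (hβ : 0 < β) (hd : 0 < d) (hF : 0 ≤ F) (hν : ν ≤ 1)
    (hf₀F : ∀ x, |f₀ x| ≤ F) (hCL : 0 ≤ CL) (hCr : 0 < Cr) (hCB : 0 ≤ CB) (hc₁ : 0 ≤ c₁)
    (happrox : ∃ M₀ : ℕ, ∀ M : ℕ, M₀ ≤ M → ∃ g : (Fin d → ℝ) → ℝ,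
      memDNN ν d ⌈CL * Real.logb 2 M⌉₊ ⌈Cr * (M : ℝ) ^ d⌉₊ CB g ∧
      ∀ x ∈ cube a d, |g x - f₀ x| ≤ c₁ / (M : ℝ) ^ (2 * β)) :
    ∀ᶠ n in atTop, ∃ θ : ParamIdx d (rwidth Cr β d n) (Ldepth CL n) → ℝ,
      (∀ i, |θ i| ≤ CB + (F + c₁) + 1) ∧ ∀ x ∈ cube a d,
        |netOfParams ν d (rwidth Cr β d n) (Ldepth CL n) θ x - f₀ x| ≤
          c₁ * 2 ^ (2 * β) * minimaxRate β d n := by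
  obtain ⟨M₀, hM₀⟩ := happrox
  filter_upwards [eventually_ge_atTop 1, (tendsto_approxLevel hβ).eventually_ge_atTop M₀]
    with n hn hM
  obtain ⟨g, ⟨net, hlen, hnet, heval⟩, hg⟩ := hM₀ _ hM
  obtain ⟨θ, hθ, hθeval⟩ := exists_netOfParams_eq_eval hν
    (ceil_mul_approxLevel_pow_le_rwidth hCr.le) (rwidth_pos hCr hn) hCB
    (add_nonneg hF hc₁) hnet (hlen.le.trans (ceil_logb_approxLevel_le_Ldepth hβ.le hd hCL hn))
  refine ⟨θ, hθ, fun x hx => ?_⟩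
  have hgx := hg x hx
  rw [heval] at hgx
  have hM1 : (1 : ℝ) ≤ (approxLevel β d n : ℝ) ^ (2 * β) :=
    Real.one_le_rpow (by exact_mod_cast one_le_approxLevel hβ.le hn) (by positivity)
  have hlower : -(F + c₁) ≤ net.eval ν x := by
    have := (abs_le.1 (hgx.trans (div_le_self hc₁ hM1))).1
    linarith [(abs_le.1 (hf₀F x)).1]
  rw [hθeval x hlower]
  exact hgx.trans (div_approxLevel_rpow_le hc₁ hβ hn)

end Approximation

/-! ### Prior mass near the truth -/

section PriorMass

lemma ofReal_mul_le_withDensity_ofReal {α : Type*} [MeasurableSpace α] {μ : Measure α}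
    {q : α → ℝ} {s : Set α} {c : ℝ} (hs : MeasurableSet s) (hq : ∀ x ∈ s, c ≤ q x) :
    ENNReal.ofReal c * μ s ≤ μ.withDensity (fun x => ENNReal.ofReal (q x)) s := by
  rw [withDensity_apply _ hs, ← setLIntegral_const]
  exact setLIntegral_mono' hs fun x hx => ENNReal.ofReal_le_ofReal (hq x hx)

lemma ofReal_pow_card_le_withDensity_closedBall {ι : Type*} [Fintype ι] {π : (ι → ℝ) → ℝ}
    {θ₀ : ι → ℝ} {ρ c : ℝ} (hρ : 0 ≤ ρ) (hc : 0 ≤ c)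
    (hπ : ∀ θ ∈ Metric.closedBall θ₀ ρ, c ^ Fintype.card ι ≤ π θ) :
    ENNReal.ofReal ((c * (2 * ρ)) ^ Fintype.card ι) ≤
      volume.withDensity (fun θ => ENNReal.ofReal (π θ)) (Metric.closedBall θ₀ ρ) := by
  rw [mul_pow, ENNReal.ofReal_mul (by positivity), ← Real.volume_pi_closedBall _ hρ]
  exact ofReal_mul_le_withDensity_ofReal Metric.isClosed_closedBall.measurableSet hπ

lemma exists_ofReal_mul_le_withDensity_Icc {q : ℝ → ℝ} {v : ℝ} (hv : 0 < v)
    (hcont : ContinuousOn q (Set.Ioo 0 (2 * v))) (hpos : ∀ s ∈ Set.Ioo 0 (2 * v), 0 < q s) :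
    ∃ c > 0, ∀ e ≤ (1 / 2 : ℝ), ENNReal.ofReal (c * e) ≤
      volume.withDensity (fun s => ENNReal.ofReal (q s)) (Set.Icc v (v * (1 + e))) := by
  have hsub : Set.Icc v (v * (1 + 1 / 2)) ⊆ Set.Ioo 0 (2 * v) := fun s hs =>
    ⟨hv.trans_le hs.1, hs.2.trans_lt (by linarith)⟩
  obtain ⟨s₀, hs₀, hmin⟩ := isCompact_Icc.exists_isMinOn
    (Set.nonempty_Icc.2 (by linarith : v ≤ v * (1 + 1 / 2))) (hcont.mono hsub)
  have hq₀ : 0 < q s₀ := hpos _ (hsub hs₀)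
  refine ⟨q s₀ * v, by positivity, fun e he => ?_⟩
  have hvol : ENNReal.ofReal (q s₀ * v * e) =
      ENNReal.ofReal (q s₀) * volume (Set.Icc v (v * (1 + e))) := by
    rw [Real.volume_Icc, ← ENNReal.ofReal_mul hq₀.le]
    ring_nf
  rw [hvol]
  refine ofReal_mul_le_withDensity_ofReal measurableSet_Icc fun s hs => hmin ⟨hs.1, hs.2.trans ?_⟩
  gcongr

lemma abs_sub_le_of_mem_closedBall {ι : Type*} [Fintype ι] {θ θ₀ : ι → ℝ} {ρ : ℝ}
    (hθ : θ ∈ Metric.closedBall θ₀ ρ) (i : ι) : |θ i - θ₀ i| ≤ ρ :=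
  (Real.dist_eq _ _ ▸ dist_le_pi_dist θ θ₀ i).trans (Metric.mem_closedBall.1 hθ)

lemma abs_le_of_mem_closedBall {ι : Type*} [Fintype ι] {θ θ₀ : ι → ℝ} {ρ B : ℝ}
    (hθ₀ : ∀ i, |θ₀ i| + ρ ≤ B) (hθ : θ ∈ Metric.closedBall θ₀ ρ) (i : ι) : |θ i| ≤ B := by
  linarith [hθ₀ i, abs_sub_le_of_mem_closedBall hθ i, abs_sub_abs_le_abs_sub (θ i) (θ₀ i)]

lemma closedBall_prod_Icc_subset_supNeighborhood {d r L : ℕ} {PX : Measure (Fin d → ℝ)}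
    {f₀ : (Fin d → ℝ) → ℝ} {a B F ν v ρ e τ : ℝ} {θ₀ : ParamIdx d r L → ℝ} (hν0 : 0 ≤ ν)
    (hν : ν ≤ 1) (hL : 1 ≤ L) (ha : 1 ≤ a) (hB : 1 ≤ B) (hρ : 0 ≤ ρ) (hv : 0 ≤ v)
    (hPX : ∀ᵐ x ∂PX, x ∈ cube a d) (hf₀F : ∀ x, |f₀ x| ≤ F) (hθ₀ : ∀ i, |θ₀ i| + ρ ≤ B)
    (happrox : ∀ x ∈ cube a d,
      |netOfParams ν d r L θ₀ x - f₀ x| + ρ * paramLipschitz d r L B a ≤ τ) (he : e ≤ τ) :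
    Metric.closedBall θ₀ ρ ×ˢ Set.Icc v (v * (1 + e)) ⊆
      supNeighborhood PX f₀ v (fun θ x => trunc F (netOfParams ν d r L θ x)) τ := by
  rintro ⟨θ, s⟩ ⟨hθ, hs⟩
  refine ⟨hPX.mono fun x hx => (abs_trunc_sub_le (hf₀F x)).trans ?_, hs.1, hs.2.trans ?_⟩
  · have hlip := abs_netOfParams_sub_le hν0 hν hL ha hB hρ
      (abs_le_of_mem_closedBall hθ₀ hθ) (fun i => by linarith [hθ₀ i])
      (abs_sub_le_of_mem_closedBall hθ) (fun j => abs_le.2 (hx j))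
    linarith [happrox x hx, abs_sub_le (netOfParams ν d r L θ x) (netOfParams ν d r L θ₀ x) (f₀ x)]
  · gcongr

lemma ofReal_pow_mul_le_prod_supNeighborhood {d r L : ℕ} {PX : Measure (Fin d → ℝ)}
    {f₀ : (Fin d → ℝ) → ℝ} {a B F ν v ρ e τ c s : ℝ} {θ₀ : ParamIdx d r L → ℝ} (hν0 : 0 ≤ ν)
    (hν : ν ≤ 1) (hL : 1 ≤ L) (ha : 1 ≤ a) (hB : 1 ≤ B) (hρ : 0 ≤ ρ) (hv : 0 ≤ v)
    (hPX : ∀ᵐ x ∂PX, x ∈ cube a d) (hf₀F : ∀ x, |f₀ x| ≤ F) (hθ₀ : ∀ i, |θ₀ i| + ρ ≤ B)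
    (happrox : ∀ x ∈ cube a d,
      |netOfParams ν d r L θ₀ x - f₀ x| + ρ * paramLipschitz d r L B a ≤ τ) (he : e ≤ τ)
    {π : (ParamIdx d r L → ℝ) → ℝ} (hc : 0 ≤ c)
    (hπ : ∀ θ, (∀ i, |θ i| ≤ B) → c ^ Fintype.card (ParamIdx d r L) ≤ π θ)
    {Prσ : Measure ℝ} [SFinite Prσ] (hσ : ENNReal.ofReal s ≤ Prσ (Set.Icc v (v * (1 + e)))) :
    ENNReal.ofReal ((c * (2 * ρ)) ^ Fintype.card (ParamIdx d r L) * s) ≤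
      ((volume.withDensity fun θ => ENNReal.ofReal (π θ)).prod Prσ)
        (supNeighborhood PX f₀ v (fun θ x => trunc F (netOfParams ν d r L θ x)) τ) := by
  refine le_trans ?_ (measure_mono (closedBall_prod_Icc_subset_supNeighborhood hν0 hν hL ha hB hρ
    hv hPX hf₀F hθ₀ happrox he))
  rw [Measure.prod_prod, ENNReal.ofReal_mul (by positivity)]
  exact mul_le_mul' (ofReal_pow_card_le_withDensity_closedBall hρ hc fun θ hθ =>
    hπ θ (abs_le_of_mem_closedBall hθ₀ hθ)) hσ

lemma one_le_paramLipschitz {d r L : ℕ} {B a : ℝ} (hB : 1 ≤ B) (ha : 1 ≤ a) :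
    1 ≤ paramLipschitz d r L B a :=
  one_le_mul_of_one_le_of_one_le (by simp) (one_le_mul_of_one_le_of_one_le
    (one_le_pow₀ (one_le_mul_of_one_le_of_one_le hB
      (le_add_of_nonneg_left (by positivity)))) ha)

lemma paramLipschitz_le {d r L : ℕ} {B a z : ℝ} (hB : 0 ≤ B) (ha : 0 ≤ a) (hBz : B ≤ z)
    (haz : a ≤ z) (hL : (L + 1 : ℝ) ≤ z) (hr : (r + d + 1 : ℝ) ≤ z) :
    paramLipschitz d r L B a ≤ z ^ (2 * (L + 1) + 2) :=
  have hz : 0 ≤ z := ha.trans haz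
  calc paramLipschitz d r L B a ≤ z * ((z * z) ^ (L + 1) * z) := by
        unfold paramLipschitz
        gcongr
    _ = z ^ (2 * (L + 1) + 2) := by ring

lemma exp_neg_mul_log {z : ℝ} (hz : 0 < z) (m : ℕ) :
    Real.exp (-(m * Real.log z)) = (z ^ m)⁻¹ := by
  rw [Real.exp_neg, Real.exp_nat_mul, Real.exp_log hz]

variable {β : ℝ} {d : ℕ}

lemma eventually_inv_natCast_le {c : ℝ} (hc : 0 < c) : ∀ᶠ n : ℕ in atTop, (n : ℝ)⁻¹ ≤ c :=
  tendsto_inv_atTop_nhds_zero_nat.eventually_le_const hc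

lemma eventually_exp_neg_le_mul_minimaxRate {c : ℝ} (hβ : 0 ≤ β) (hc : 0 < c) :
    ∀ᶠ n : ℕ in atTop, Real.exp (-(2 * Real.log n)) ≤ c * minimaxRate β d n := by
  filter_upwards [eventually_ge_atTop 1, eventually_inv_natCast_le hc] with n hn hnc
  calc Real.exp (-(2 * Real.log n)) = (n : ℝ)⁻¹ * (n : ℝ)⁻¹ := by
        have := exp_neg_mul_log (by exact_mod_cast hn : (0 : ℝ) < n) 2
        push_cast at this
        rw [this, sq, mul_inv]
    _ ≤ c * minimaxRate β d n := by
        gcongr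
        exact inv_le_minimaxRate hβ hn

lemma eventually_exp_neg_le_mul_div_paramLipschitz {CL Cr B a c : ℝ} (hβ : 0 ≤ β) (hCL : 0 ≤ CL)
    (hCr : 0 ≤ Cr) (hB : 1 ≤ B) (ha : 1 ≤ a) (hc : 0 < c) :
    ∀ᶠ n : ℕ in atTop, Real.exp (-(6 * ((Ldepth CL n + 1) * Real.log n))) ≤
      c * (2 * (minimaxRate β d n / paramLipschitz d (rwidth Cr β d n) (Ldepth CL n) B a)) := by
  filter_upwards [eventually_ge_atTop 1, eventually_inv_natCast_le (mul_pos hc two_pos),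
    eventually_Ldepth_add_one_le hCL, eventually_rwidth_add_le (d := d) hβ hCr,
    tendsto_natCast_atTop_atTop.eventually_ge_atTop B,
    tendsto_natCast_atTop_atTop.eventually_ge_atTop a] with n hn hnc hL hr hBn han
  have hn1 : (1 : ℝ) ≤ n := by exact_mod_cast hn
  set L := Ldepth CL n
  have hlip := one_le_paramLipschitz (d := d) (r := rwidth Cr β d n) (L := L) hB ha
  have hlip' := paramLipschitz_le (by linarith) (by linarith) hBn han hL hr
  have hrate := inv_le_minimaxRate (d := d) hβ hn
  calc Real.exp (-(6 * ((L + 1) * Real.log n))) = ((n : ℝ) ^ (6 * (L + 1)))⁻¹ := by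
        rw [← exp_neg_mul_log (by linarith)]
        push_cast
        ring_nf
    _ ≤ ((n : ℝ) ^ (1 + (1 + (2 * (L + 1) + 2))))⁻¹ := by
        gcongr
        lia
    _ = (n : ℝ)⁻¹ * ((n : ℝ)⁻¹ * ((n : ℝ) ^ (2 * (L + 1) + 2))⁻¹) := by
        rw [pow_add, pow_add, mul_inv, mul_inv, pow_one]
    _ ≤ c * 2 * (minimaxRate β d n *
          (paramLipschitz d (rwidth Cr β d n) L B a)⁻¹) := by
        have := minimaxRate_pos (β := β) (d := d) hn
        gcongr
    _ = _ := by ring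

lemma exp_neg_mul_le_pow_mul {T L : ℕ} {A b k l s : ℝ}
    (hb : Real.exp (-(6 * ((L + 1) * l))) ≤ b) (hs : Real.exp (-(2 * l)) ≤ s)
    (hT : T * (L + 1) * l ≤ A * k) (hk : l ≤ k) :
    Real.exp (-((6 * A + 2) * k)) ≤ b ^ T * s :=
  calc Real.exp (-((6 * A + 2) * k))
      ≤ Real.exp (T * -(6 * ((L + 1) * l)) + -(2 * l)) := Real.exp_le_exp.2 (by linarith)
    _ = Real.exp (-(6 * ((L + 1) * l))) ^ T * Real.exp (-(2 * l)) := by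
        rw [Real.exp_add, Real.exp_nat_mul]
    _ ≤ b ^ T * s := by
        have : 0 ≤ b := (Real.exp_nonneg _).trans hb
        gcongr

theorem exists_eventually_le_prod_supNeighborhood {a F ν v CL Cr CB c₁ : ℝ}
    {PX : Measure (Fin d → ℝ)} {f₀ : (Fin d → ℝ) → ℝ} (hβ : 0 < β) (hd : 0 < d) (ha : 1 ≤ a)
    (hF : 0 ≤ F) (hν0 : 0 ≤ ν) (hν : ν ≤ 1) (hv : 0 < v) (hf₀F : ∀ x, |f₀ x| ≤ F)
    (hPX : ∀ᵐ x ∂PX, x ∈ cube a d)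
    (hCL : 0 < CL) (hCr : 0 < Cr) (hCB : 0 ≤ CB) (hc₁ : 0 ≤ c₁)
    (happrox : ∃ M₀ : ℕ, ∀ M : ℕ, M₀ ≤ M → ∃ g : (Fin d → ℝ) → ℝ,
      memDNN ν d ⌈CL * Real.logb 2 M⌉₊ ⌈Cr * (M : ℝ) ^ d⌉₊ CB g ∧
      ∀ x ∈ cube a d, |g x - f₀ x| ≤ c₁ / (M : ℝ) ^ (2 * β))
    {πθ : ∀ n, (ParamIdx d (rwidth Cr β d n) (Ldepth CL n) → ℝ) → ℝ}
    (hπθ : ∀ κ : ℝ, 0 < κ → ∃ c : ℝ, 0 < c ∧ ∀ n θ, (∀ i, |θ i| ≤ κ) →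
      c ^ Fintype.card (ParamIdx d (rwidth Cr β d n) (Ldepth CL n)) ≤ πθ n θ)
    {Prσ : Measure ℝ} [SFinite Prσ] {qσ : ℝ → ℝ}
    (hPrσ : Prσ = volume.withDensity fun s => ENNReal.ofReal (qσ s))
    (hqσ : ContinuousOn qσ (Set.Ioo 0 (2 * v))) (hqσpos : ∀ s ∈ Set.Ioo 0 (2 * v), 0 < qσ s) :
    ∃ C : ℝ, ∀ᶠ n in atTop, ENNReal.ofReal (Real.exp (-(C * entropyRate β d n))) ≤
      ((volume.withDensity fun θ => ENNReal.ofReal (πθ n θ)).prod Prσ)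
        (supNeighborhood PX f₀ v
          (fun θ x => trunc F (netOfParams ν d (rwidth Cr β d n) (Ldepth CL n) θ x))
          (C * minimaxRate β d n)) := by
  set B := CB + (F + c₁) + 2 with hBdef
  have hB : 1 ≤ B := by linarith [hBdef]
  obtain ⟨c, hc, hπ⟩ := hπθ B (by linarith)
  obtain ⟨cσ, hcσ, hσ⟩ := exists_ofReal_mul_le_withDensity_Icc hv hqσ hqσpos
  set A := ((CL + 2) * (Cr + d + 2)) ^ 2
  have hA : 0 ≤ A := sq_nonneg _
  have hτ : 0 ≤ c₁ * 2 ^ (2 * β) := by positivity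
  refine ⟨6 * A + 2 + c₁ * 2 ^ (2 * β), ?_⟩
  filter_upwards [eventually_ge_atTop 3,
    eventually_exists_abs_netOfParams_sub_le hβ hd hF hν hf₀F hCL.le hCr hCB hc₁ happrox,
    (tendsto_minimaxRate (d := d) hβ).eventually_le_const one_half_pos,
    eventually_exp_neg_le_mul_minimaxRate (d := d) hβ.le hcσ,
    eventually_exp_neg_le_mul_div_paramLipschitz (d := d) hβ.le hCL.le hCr.le hB ha hc]
    with n hn ⟨θ₀, hθ₀, hθ₀f⟩ he hσexp hθexp
  have hepos := minimaxRate_pos (β := β) (d := d) (by lia : 1 ≤ n)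
  have hlip := one_le_paramLipschitz (d := d) (r := rwidth Cr β d n) (L := Ldepth CL n) hB ha
  have hk := log_le_entropyRate (d := d) hβ.le hn
  have hexp := exp_neg_mul_le_pow_mul hθexp hσexp
    (card_paramIdx_mul_le (d := d) hβ.le hCL.le hCr.le hn) hk
  have hρ1 := (div_le_self hepos.le hlip).trans he
  refine le_trans (ENNReal.ofReal_le_ofReal (le_trans (Real.exp_le_exp.2 ?_) hexp))
    (ofReal_pow_mul_le_prod_supNeighborhood (θ₀ := θ₀) hν0 hν (Ldepth_pos hCL hn) ha hB
      (by positivity) hv.le hPX hf₀F (fun i => by linarith [hθ₀ i]) (fun x hx => ?_) ?_ hc.le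
      (hπ n) (hPrσ ▸ hσ _ he))
  · have hk0 := (Real.log_natCast_nonneg n).trans hk
    exact neg_le_neg (mul_le_mul_of_nonneg_right (by linarith) hk0)
  · rw [div_mul_cancel₀ _ (by positivity)]
    linarith [hθ₀f x hx, mul_nonneg hA hepos.le]
  · exact le_mul_of_one_le_left hepos.le (by linarith)

end PriorMass

section Main

lemma measurableSet_cube (a : ℝ) (d : ℕ) : MeasurableSet (cube a d) := by
  rw [cube, Set.ofPred_forall]
  exact .iInter fun i => measurable_pi_apply i measurableSet_Icc

theorem posterior_concentration_gaussian_regression_general {a : ℝ} (ha : 1 ≤ a) {d : ℕ}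
    (hd : 0 < d) {β F v ν : ℝ} (hβ : 0 < β) (hF : 0 < F) (hv : 0 < v) (hν0 : 0 ≤ ν) (hν : ν ≤ 1)
    {f₀ : (Fin d → ℝ) → ℝ} (hf₀ : Measurable f₀) (hf₀F : ∀ x, |f₀ x| ≤ F)
    {PX : Measure (Fin d → ℝ)} [IsProbabilityMeasure PX] (hPX : PX (cube a d) = 1)
    [IsProbabilityMeasure (gaussRegLaw d PX f₀ v.toNNReal)] {CL Cr CB c₁ : ℝ} (hCL : 0 < CL)
    (hCr : 0 < Cr) (hCB : 0 ≤ CB) (hc₁ : 0 ≤ c₁)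
    (happrox : ∃ M₀ : ℕ, ∀ M : ℕ, M₀ ≤ M → ∃ g : (Fin d → ℝ) → ℝ,
      memDNN ν d ⌈CL * Real.logb 2 M⌉₊ ⌈Cr * (M : ℝ) ^ d⌉₊ CB g ∧
      ∀ x ∈ cube a d, |g x - f₀ x| ≤ c₁ / (M : ℝ) ^ (2 * β))
    {Prθ : ∀ n, Measure (ParamIdx d (rwidth Cr β d n) (Ldepth CL n) → ℝ)}
    [∀ n, IsProbabilityMeasure (Prθ n)]
    {πθ : ∀ n, (ParamIdx d (rwidth Cr β d n) (Ldepth CL n) → ℝ) → ℝ}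
    (hPrθ : ∀ n, Prθ n = volume.withDensity fun θ => ENNReal.ofReal (πθ n θ))
    (hπθ : ∀ κ : ℝ, 0 < κ → ∃ c : ℝ, 0 < c ∧ ∀ n θ, (∀ i, |θ i| ≤ κ) →
      c ^ Fintype.card (ParamIdx d (rwidth Cr β d n) (Ldepth CL n)) ≤ πθ n θ)
    {Prσ : Measure ℝ} [IsProbabilityMeasure Prσ] {qσ : ℝ → ℝ}
    (hPrσ : Prσ = volume.withDensity fun s => ENNReal.ofReal (qσ s))
    (hPrσpos : Prσ {s | s ≤ 0} = 0) (hqσ : ContinuousOn qσ (Set.Ioo 0 (2 * v)))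
    (hqσpos : ∀ s ∈ Set.Ioo 0 (2 * v), 0 < qσ s) {γ : ℝ} (hγ : 3 / 2 ≤ γ) {M : ℕ → ℝ}
    (hM : Tendsto M atTop atTop) {δ : ℝ} (hδ : 0 < δ) :
    Tendsto (fun n : ℕ => Measure.pi (fun _ : Fin n => gaussRegLaw d PX f₀ v.toNNReal)
      {D | ENNReal.ofReal δ < postMass ((Prθ n).prod Prσ)
        (gaussLik ν F d (rwidth Cr β d n) (Ldepth CL n) D)
        {p | M n * (minimaxRate β d n * Real.log n ^ γ) <
          l2dist d PX (fun x => trunc F (netOfParams ν d (rwidth Cr β d n) (Ldepth CL n) p.1 x)) f₀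
            + |p.2 - v|}}) atTop (nhds 0) := by
  have hcube : ∀ᵐ x ∂PX, x ∈ cube a d :=
    (mem_ae_iff_prob_eq_one (measurableSet_cube a d)).2 hPX
  have hpos : ∀ᵐ s ∂Prσ, 0 < s := by simpa only [ae_iff, not_lt] using hPrσpos
  refine tendsto_pi_lt_postMass
    (g := fun n θ x => trunc F (netOfParams ν d (rwidth Cr β d n) (Ldepth CL n) θ x))
    (Pr := fun n => (Prθ n).prod Prσ) hv hf₀ hf₀F (fun n => measurable_trunc_netOfParams ν F d _ _)
    (fun _ _ _ => abs_trunc_le hF.le _) (fun _ => Measure.quasiMeasurePreserving_snd.ae hpos)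
    (tendsto_entropyRate hβ.le) ?_ ?_ (entropyRate_isLittleO_mul_sq hβ hγ hM)
    (entropyRate_isLittleO hβ)
    (fun c hc => ⟨_, eventually_exists_finset_integral_sq_sub_trunc_le hν hF hβ.le hCL hCr.le hc⟩)
    ?_ hδ
  · filter_upwards [eventually_ge_atTop 3] with n hn
    exact (natCast_mul_minimaxRate_sq hβ (by lia)).trans_le (effDim_le_entropyRate hβ.le hn)
  · filter_upwards [hM.eventually_ge_atTop 0, eventually_ge_atTop 1] with n hMn hn
    have := minimaxRate_pos (β := β) (d := d) hn
    positivity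
  · simpa only [hPrθ] using exists_eventually_le_prod_supNeighborhood hβ hd ha hF.le hν0 hν hv hf₀F
      hcube hCL hCr hCB hc₁ happrox hπθ hPrσ hqσ hqσpos

end Main

/-- posterior concentration for nonparametric Gaussian regression with
fully connected Bayesian neural networks.  Under Assumption 1 on the prior for the
network parameters, Assumption 2 on the prior for the noise variance, and with the
architecture determined by constants `C_L, C_r` satisfying the bounded-parameter
approximation theorem, the posterior mass of
`{(θ, σ²) : ‖T_F ∘ f_{θ,ρν} − f₀‖_{2,P_X} + |σ² − σ₀²| > M_n ε_n}` with
`ε_n = n^{−β/(2β+d)} (log n)^γ`, `γ > 2`, converges to `0` in `P₀ⁿ`-probability. -/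
theorem posterior_concentration_gaussian_regression
    (a : ℝ) (ha : 1 ≤ a) (d : ℕ) (hd : 0 < d)
    (β K F : ℝ) (hβ : 0 < β) (hK : 1 ≤ K) (hF : 1 ≤ F)
    (σ₀ : ℝ) (hσ₀ : 0 < σ₀) (ν : ℝ) (hν0 : 0 ≤ ν) (hν1 : ν < 1)
    -- the true regression function
    (f₀ : (Fin d → ℝ) → ℝ) (hf₀ : memHolder a d β K f₀) (hf₀bd : ∀ x, |f₀ x| ≤ F)
    -- the covariate distribution, supported in the cube `[−a,a]^d`
    (PX : Measure (Fin d → ℝ)) (hPXprob : IsProbabilityMeasure PX)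
    (hPXsupp : PX (cube a d) = 1)
    -- the law of one observation `(X, Y)`:  `X ∼ P_X`, `Y | X ∼ N(f₀(X), σ₀²)`
    (μD : Measure ((Fin d → ℝ) × ℝ)) (hμDprob : IsProbabilityMeasure μD)
    (hμD : μD = gaussRegLaw d PX f₀ (Real.toNNReal (σ₀ ^ 2)))
    -- the constants of the bounded-parameter approximation theorem
    (CL Cr CB c₁ : ℝ) (hCL : 0 < CL) (hCr : 0 < Cr) (hCB : 0 < CB) (hc₁ : 0 < c₁)
    (happrox : ∀ f : (Fin d → ℝ) → ℝ, memHolder a d β K f →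
      ∃ M₀ : ℕ, ∀ M : ℕ, M₀ ≤ M →
        ∃ g : (Fin d → ℝ) → ℝ,
          memDNN ν d ⌈CL * Real.logb 2 M⌉₊ ⌈Cr * (M : ℝ) ^ d⌉₊ CB g ∧
          ∀ x ∈ cube a d, |g x - f x| ≤ c₁ / (M : ℝ) ^ (2 * β))
    -- the prior on the network parameters, with density satisfying Assumption 1
    (Prθ : ∀ n : ℕ, Measure (ParamIdx d (rwidth Cr β d n) (Ldepth CL n) → ℝ))
    (hPrθprob : ∀ n, IsProbabilityMeasure (Prθ n))
    (πθ : ∀ n : ℕ, (ParamIdx d (rwidth Cr β d n) (Ldepth CL n) → ℝ) → ℝ)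
    (hπθmeas : ∀ n, Measurable (πθ n)) (hπθnn : ∀ n θ, 0 ≤ πθ n θ)
    (hπθdens : ∀ n, Prθ n = volume.withDensity fun θ => ENNReal.ofReal (πθ n θ))
    (hπθlow : ∀ κ : ℝ, 0 < κ → ∃ δκ : ℝ, 0 < δκ ∧
      ∀ n : ℕ, ∀ θ : ParamIdx d (rwidth Cr β d n) (Ldepth CL n) → ℝ,
        (∀ i, |θ i| ≤ κ) →
          δκ ^ Fintype.card (ParamIdx d (rwidth Cr β d n) (Ldepth CL n)) ≤ πθ n θ)
    -- the prior on the noise variance, satisfying Assumption 2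
    (Prσ : Measure ℝ) (hPrσprob : IsProbabilityMeasure Prσ)
    (qσ : ℝ → ℝ) (hqσmeas : Measurable qσ) (hqσnn : ∀ s, 0 ≤ qσ s)
    (hqσdens : Prσ = volume.withDensity fun s => ENNReal.ofReal (qσ s))
    (hqσpos : Prσ {s | s ≤ 0} = 0)
    (hqσcont : ContinuousOn qσ (Set.Ioo 0 (2 * σ₀ ^ 2)))
    (hqσposOn : ∀ s ∈ Set.Ioo 0 (2 * σ₀ ^ 2), 0 < qσ s)
    (hqσtail : ∃ C : ℝ, 0 < C ∧ ∃ K₀ : ℝ, ∀ K' : ℝ, K₀ ≤ K' →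
      Prσ {s | K' < s} ≤ ENNReal.ofReal (C / K'))
    -- the rate `ε_n = n^{−β/(2β+d)} (log n)^γ` with `γ > 2`, and any `M_n → ∞`
    (γ : ℝ) (hγ : 2 < γ)
    (ε : ℕ → ℝ)
    (hε : ∀ n : ℕ, ε n = (n : ℝ) ^ (-(β / (2 * β + d))) * Real.log n ^ γ)
    (M : ℕ → ℝ) (hM : Tendsto M atTop atTop) :
    ∀ δ : ℝ, 0 < δ →
      Tendsto
        (fun n : ℕ =>
          Measure.pi (fun _ : Fin n => μD)
            {D | ENNReal.ofReal δ <
              postMass ((Prθ n).prod Prσ)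
                (gaussLik ν F d (rwidth Cr β d n) (Ldepth CL n) D)
                {p | M n * ε n <
                  l2dist d PX
                    (fun x =>
                      trunc F (netOfParams ν d (rwidth Cr β d n) (Ldepth CL n) p.1 x))
                    f₀ + |p.2 - σ₀ ^ 2|}})
        atTop (nhds 0) := by
  subst hμD
  simp only [hε]
  exact fun δ hδ => posterior_concentration_gaussian_regression_general ha hd hβ (by linarith)
    (by positivity) hν0 hν1.le hf₀.1.continuous.measurable hf₀bd hPXsupp hCL hCr hCB.le hc₁.le
    (happrox f₀ hf₀) hπθdens hπθlow hqσdens hqσpos hqσcont hqσposOn (by linarith) hM hδ
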